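/- arXiv:1609.03049 — 2 statements merged into one kernel-verified Lean document; each statement's English description precedes it below -/
import Mathlib

section
/- Let N be a 3-connected matroid having a U_{2,4}-minor and with corank r*(N) \ge 3. Then there exists an element e of N such that co(N\\e) is 3-connected and has a U_{2,4}-minor. -/
/-!
For a finite `N`, pass to the dual `M`: it is 3-connected, has a `U_{2,4}`-minor and rank at
least three, and an element `e` is wanted for which the simplification of `M ／ e` is 3-connected
and has a `U_{2,4}`-minor. All of this is expressed through the rank function of `M`. A
`U_{2,4}`-minor is a set `L` of corank two with four elements, any two of which span together
with `L` (`Quad`); each `e ∈ L` can be contracted keeping it. The simplification of `M ／ e` can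
only fail to be 3-connected because of a vertical 3-separation `(P, Q)` with `e` in both closures
(`Vert`, `Simp.conn`).

Suppose that there is such a separation for some `e ∈ L`. One of its sides, say `P`, has rank at
most one modulo `L` (`Vert.dichotomy`). Any element of `P` outside the closure of `Q` can then be
contracted instead of `e`, with a new `U_{2,4}`-minor for which `P` is still small
(`Fam.transfer`). Choose such a separation with `P` of minimal rank, and minimal under inclusion.
Uncrossing `(P, Q)` with a vertical separation at another element `x` of `P` yields, by
submodularity and minimality, that `P` is the union of two lines through `x` (`MinFam.lines`).
This is impossible for two suitable elements `x` at once, as `P` would be a line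
(`MinFam.exists_good`). So some element of `P` has no vertical separation (`Quad.exists_good`).

An infinite `N` has finite rank, as in infinite rank every partition counts as a separation. Then
some element outside a finite set carrying the `U_{2,4}`-minor has a 3-connected deletion: if all
these deletions had separations, a limit of them along a nonprincipal ultrafilter would be a
2-separation of `N` (`exists_del_threeConnected`). A 3-connected deletion is its own
cosimplification.
-/

open Set Matroid

universe u

namespace BLFormal

/-! ### Matroid preliminaries -/

/-- A circuit of a matroid: a minimal dependent set. -/
def Circuit {α : Type u} (M : Matroid α) (C : Set α) : Prop := Minimal M.Dep C

/-- Deletion of a set of elements from a matroid. -/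
def del {α : Type u} (M : Matroid α) (D : Set α) : Matroid α := M ↾ (M.E \ D)

/-- Contraction of a set of elements of a matroid, defined by duality. -/
def con {α : Type u} (M : Matroid α) (C : Set α) : Matroid α := (del M✶ C)✶

/-- `N` is a minor of `M` if it is obtained by a contraction followed by a deletion. -/
def IsMinor {α : Type u} (N M : Matroid α) : Prop := ∃ C D : Set α, N = del (con M C) D

/-- `N` is a proper (strict) minor of `M`. -/
def IsStrictMinor {α : Type u} (N M : Matroid α) : Prop := IsMinor N M ∧ N ≠ M

/-- The rank of a set `X` in the matroid `M`, as an extended natural number: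
the supremum of the cardinalities of the independent subsets of `X`. -/
noncomputable def eRk {α : Type u} (M : Matroid α) (X : Set α) : ℕ∞ :=
  ⨆ I : {I : Set α // M.Indep I ∧ I ⊆ X}, (I : Set α).encard

/-- The rank `r(M)` of a matroid, as an extended natural number. -/
noncomputable def eRank {α : Type u} (M : Matroid α) : ℕ∞ := eRk M M.E

/-- A loop of a matroid. -/
def MLoop {α : Type u} (M : Matroid α) (e : α) : Prop := M.Dep {e}

/-- A coloop of a matroid: a loop of the dual. -/
def MColoop {α : Type u} (M : Matroid α) (e : α) : Prop := MLoop M✶ e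

/-- A `k`-separation of a matroid: a partition `(X, Y)` of the ground set with
`|X|, |Y| ≥ k` and `r(X) + r(Y) - r(M) ≤ k - 1`. -/
def IsKSep {α : Type u} (M : Matroid α) (k : ℕ) (X Y : Set α) : Prop :=
  X ∪ Y = M.E ∧ Disjoint X Y ∧ (k : ℕ∞) ≤ X.encard ∧ (k : ℕ∞) ≤ Y.encard ∧
    eRk M X + eRk M Y ≤ eRank M + ((k - 1 : ℕ) : ℕ∞)

/-- A matroid is connected if it has no 1-separation. -/
def MConnected {α : Type u} (M : Matroid α) : Prop := ¬ ∃ X Y, IsKSep M 1 X Y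

/-- A matroid is 3-connected if it is connected and has no 2-separation. -/
def ThreeConnected {α : Type u} (M : Matroid α) : Prop :=
  MConnected M ∧ ¬ ∃ X Y, IsKSep M 2 X Y

/-- Two elements of a matroid form a series pair if no circuit contains exactly one
of them, and some circuit contains both. -/
def SeriesPair {α : Type u} (M : Matroid α) (e f : α) : Prop :=
  (∀ C, Circuit M C → (e ∈ C ↔ f ∈ C)) ∧ ∃ C, Circuit M C ∧ e ∈ C ∧ f ∈ C

/-- A series class: a maximal set in which every two elements form a series pair. -/
def IsSeriesClass {α : Type u} (M : Matroid α) (S : Set α) : Prop :=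
  Maximal (fun T => T.Nonempty ∧ ∀ e ∈ T, ∀ f ∈ T, SeriesPair M e f) S

/-- `N` is a cosimplification `co(M)` of `M`: it is obtained from `M` by contracting
all coloops and, in each series class, all but one element. -/
def IsCosimplification {α : Type u} (M N : Matroid α) : Prop :=
  ∃ D ⊆ M.E, N = con M D ∧ (∀ e, MColoop M e → e ∈ D) ∧
    ∀ S, IsSeriesClass M S → ∃ x ∈ S, S \ D = {x}

/-- `M` is isomorphic to the uniform matroid `U_{k, n}`: the ground set has `n` elements
and the circuits are precisely the `(k+1)`-element subsets of the ground set. -/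
def IsUnif {α : Type u} (k n : ℕ) (M : Matroid α) : Prop :=
  M.E.encard = n ∧ ∀ C, Circuit M C ↔ C ⊆ M.E ∧ C.encard = k + 1

/-- `M` has a `U_{2,4}`-minor. -/
def HasU24Minor {α : Type u} (M : Matroid α) : Prop := ∃ N, IsMinor N M ∧ IsUnif 2 4 N

/-- `M` is isomorphic to the direct sum `U_{2,4} ⊕ U_{0,1}` of `U_{2,4}` and a loop:
its ground set consists of a 4-element set `X` together with one further element `l`,
and its circuits are `{l}` and the 3-element subsets of `X`. -/
def IsU24PlusLoop {α : Type u} (M : Matroid α) : Prop :=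
  ∃ (X : Set α) (l : α), l ∉ X ∧ M.E = insert l X ∧ X.encard = 4 ∧
    ∀ C, Circuit M C ↔ (C = {l} ∨ (C ⊆ X ∧ C.encard = 3))

/-- `M` is isomorphic to the Fano matroid `F₇`: the rank-3 matroid represented over
`GF(2)` by the seven nonzero vectors of `GF(2)³`. -/
def IsFano {α : Type u} (M : Matroid α) : Prop :=
  ∃ v : α → (Fin 3 → ZMod 2),
    Set.BijOn v M.E {w | w ≠ 0} ∧
    ∀ I ⊆ M.E, (M.Indep I ↔ LinearIndependent (ZMod 2) (fun x : I => v x))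

/-! ### Graphs (with loops and parallel edges allowed) -/

/-- A graph on vertex type `V`, with edge set `E` living in the ambient edge type `α`;
each edge is sent to the unordered pair of its end-vertices. -/
structure Graph (V : Type u) (α : Type u) where
  E : Set α
  inc : α → Sym2 V

namespace Graph

variable {V : Type u} {α : Type u}

/-- The vertices incident with an edge set `C`. -/
def vertsOf (G : Graph V α) (C : Set α) : Set V := {v | ∃ e ∈ C, v ∈ G.inc e}

/-- The vertex set of a graph (we consider graphs without isolated vertices). -/
def verts (G : Graph V α) : Set V := G.vertsOf G.E

/-- Deletion of a set of edges from a graph. -/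
def delete (G : Graph V α) (D : Set α) : Graph V α := ⟨G.E \ D, G.inc⟩

/-- The degree of a vertex `v` in the edge set `C`, with loops counting twice. -/
noncomputable def deg (G : Graph V α) (C : Set α) (v : V) : ℕ :=
  {e ∈ C | v ∈ G.inc e}.ncard + {e ∈ C | G.inc e = Sym2.diag v}.ncard

/-- Two vertices are adjacent via an edge of `C`. -/
def AdjOn (G : Graph V α) (C : Set α) (u v : V) : Prop := ∃ e ∈ C, G.inc e = s(u, v)

/-- The subgraph with edge set `C` is connected. -/
def ConnectedOn (G : Graph V α) (C : Set α) : Prop :=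
  ∀ u ∈ G.vertsOf C, ∀ v ∈ G.vertsOf C, Relation.ReflTransGen (G.AdjOn C) u v

/-- `C` is a cycle of `G` : the edge set of a connected 2-regular subgraph. -/
def IsCycle (G : Graph V α) (C : Set α) : Prop :=
  C ⊆ G.E ∧ C.Finite ∧ C.Nonempty ∧ (∀ v ∈ G.vertsOf C, G.deg C v = 2) ∧ G.ConnectedOn C

/-- A graph is 2-edge-connected if each of its edges lies in a cycle. -/
def TwoEdgeConnected (G : Graph V α) : Prop := ∀ e ∈ G.E, ∃ C, G.IsCycle C ∧ e ∈ C

/-- A graph is connected if it has at least one vertex and any two of its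
vertices are joined by a path. -/
def Connected (G : Graph V α) : Prop := G.verts.Nonempty ∧ G.ConnectedOn G.E

/-- Delete a vertex from a graph (removing all edges incident with it). -/
def delVert (G : Graph V α) (v : V) : Graph V α := ⟨{e ∈ G.E | v ∉ G.inc e}, G.inc⟩

/-- A graph is 2-connected if it is connected and stays connected after the
deletion of any vertex. -/
def TwoConnected (G : Graph V α) : Prop :=
  G.Connected ∧ ∀ v ∈ G.verts, (G.delVert v).Connected

/-- `X` contains at least two (distinct) cycles of `G`. -/
def HasTwoCycles (G : Graph V α) (X : Set α) : Prop :=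
  ∃ C₁ C₂, G.IsCycle C₁ ∧ G.IsCycle C₂ ∧ C₁ ≠ C₂ ∧ C₁ ⊆ X ∧ C₂ ⊆ X

/-- The circuits of the bicircular lift matroid of `G`: edge sets containing at
least two cycles and minimal with this property. -/
def LiftCircuit (G : Graph V α) (X : Set α) : Prop :=
  Minimal (fun Y => Y ⊆ G.E ∧ G.HasTwoCycles Y) X

/-- Two edges of a graph form a series pair if no cycle contains exactly one of
them, and some cycle contains both. -/
def SeriesPair (G : Graph V α) (e f : α) : Prop :=
  (∀ C, G.IsCycle C → (e ∈ C ↔ f ∈ C)) ∧ ∃ C, G.IsCycle C ∧ e ∈ C ∧ f ∈ C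

end Graph

/-- `N` is the bicircular lift matroid `L(G)` of `G` : its ground set is `E(G)`
and its circuits are the lift circuits of `G`. -/
def IsLiftRep {V α : Type u} (G : Graph V α) (N : Matroid α) : Prop :=
  N.E = G.E ∧ ∀ C, Circuit N C ↔ G.LiftCircuit C

/-- `N` is the cycle matroid `M(G)` of `G` : its ground set is `E(G)` and its
circuits are the cycles of `G`. -/
def IsGraphicRep {V α : Type u} (G : Graph V α) (N : Matroid α) : Prop :=
  N.E = G.E ∧ ∀ C, Circuit N C ↔ G.IsCycle C

/-- A matroid is bicircular lift if it is (isomorphic to) `L(G)` for some graph `G`. -/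
def IsBicircularLift {α : Type u} (N : Matroid α) : Prop :=
  ∃ (V : Type u) (G : Graph V α), IsLiftRep G N

/-- A matroid is graphic if it is (isomorphic to) the cycle matroid of some graph. -/
def IsGraphic {α : Type u} (N : Matroid α) : Prop :=
  ∃ (V : Type u) (G : Graph V α), IsGraphicRep G N

/-- The class `BL-bar` of matroids that are graphic or bicircular lift. -/
def InBL {α : Type u} (N : Matroid α) : Prop := IsGraphic N ∨ IsBicircularLift N

/-- `M` is an excluded minor for the class `BL-bar`. -/
def ExcludedMinorBL {α : Type u} (M : Matroid α) : Prop :=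
  ¬ InBL M ∧ ∀ N, IsStrictMinor N M → InBL N

/-! ### Special graphs and subdivisions -/

/-- `G` is (a copy of) the complete graph `K₄`. -/
def IsK4 {V α : Type u} (G : Graph V α) : Prop :=
  ∃ v : Fin 4 → V, Function.Injective v ∧
    ∃ ed : {p : Sym2 (Fin 4) // ¬ p.IsDiag} → α, Function.Injective ed ∧
      G.E = Set.range ed ∧ ∀ p, G.inc (ed p) = Sym2.map v p.1

/-- `G` is (a copy of) the complete graph `K₅`. -/
def IsK5 {V α : Type u} (G : Graph V α) : Prop :=
  ∃ v : Fin 5 → V, Function.Injective v ∧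
    ∃ ed : {p : Sym2 (Fin 5) // ¬ p.IsDiag} → α, Function.Injective ed ∧
      G.E = Set.range ed ∧ ∀ p, G.inc (ed p) = Sym2.map v p.1

/-- `G` is (a copy of) the complete bipartite graph `K₃,₃`. -/
def IsK33 {V α : Type u} (G : Graph V α) : Prop :=
  ∃ a b : Fin 3 → V, Function.Injective a ∧ Function.Injective b ∧
    Set.range a ∩ Set.range b = ∅ ∧
    ∃ ed : Fin 3 × Fin 3 → α, Function.Injective ed ∧
      G.E = Set.range ed ∧ ∀ p, G.inc (ed p) = s(a p.1, b p.2)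

/-- `G` is (a copy of) the graph `K₂ⁿ` with two vertices joined by `n` parallel edges. -/
def IsK2n {V α : Type u} (n : ℕ) (G : Graph V α) : Prop :=
  ∃ u v : V, u ≠ v ∧ ∃ ed : Fin n → α, Function.Injective ed ∧
    G.E = Set.range ed ∧ ∀ i, G.inc (ed i) = s(u, v)

/-- `H` is obtained from `G` by subdividing a single edge. -/
def ElemSub {V α : Type u} (G H : Graph V α) : Prop :=
  ∃ e ∈ G.E, ∃ (f g : α) (u v w : V),
    G.inc e = s(u, v) ∧ w ∉ G.verts ∧ f ≠ g ∧
    f ∉ G.E \ {e} ∧ g ∉ G.E \ {e} ∧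
    H.E = (G.E \ {e}) ∪ {f, g} ∧
    H.inc f = s(u, w) ∧ H.inc g = s(w, v) ∧
    ∀ x ∈ G.E \ {e}, H.inc x = G.inc x

/-- `H` is a subdivision of `G` : it is obtained from `G` by repeatedly
subdividing edges. -/
def IsSubdivision {V α : Type u} (G H : Graph V α) : Prop :=
  Relation.ReflTransGen ElemSub G H

/-! ### 2-sums and simplification -/

/-- `N` is the 2-sum `N₁ ⊕₂ᵉ N₂` of `N₁` and `N₂` along `e`. -/
def Is2Sum {α : Type u} (N N₁ N₂ : Matroid α) (e : α) : Prop :=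
  N₁.E ∩ N₂.E = {e} ∧
  ¬ MLoop N₁ e ∧ ¬ MColoop N₁ e ∧ ¬ MLoop N₂ e ∧ ¬ MColoop N₂ e ∧
  N.E = (N₁.E ∪ N₂.E) \ {e} ∧
  ∀ C, Circuit N C ↔
    ((Circuit N₁ C ∧ e ∉ C) ∨ (Circuit N₂ C ∧ e ∉ C) ∨
      ∃ C₁ C₂, Circuit N₁ C₁ ∧ Circuit N₂ C₂ ∧ e ∈ C₁ ∧ e ∈ C₂ ∧
        C = (C₁ \ {e}) ∪ (C₂ \ {e}))

/-- `H` is a simplification `si(G)` of `G` : it is obtained from `G` by deleting all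
loops and all but one edge of each parallel class. -/
def IsSimplification {V α : Type u} (G H : Graph V α) : Prop :=
  H.inc = G.inc ∧ H.E ⊆ G.E ∧ (∀ e ∈ H.E, ¬ (G.inc e).IsDiag) ∧
    ∀ e ∈ G.E, ¬ (G.inc e).IsDiag → ∃! f, f ∈ H.E ∧ G.inc f = G.inc e

/-- `H` is 2-connected, or is obtained from a 2-connected graph and a single edge `K₂`
by identifying one end-vertex of the edge with a vertex of the 2-connected graph. -/
def TwoConnOrPendant {V α : Type u} (H : Graph V α) : Prop :=
  H.TwoConnected ∨
    ∃ (e : α) (u w : V), e ∈ H.E ∧ H.inc e = s(u, w) ∧ u ≠ w ∧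
      (H.delete {e}).TwoConnected ∧ u ∈ (H.delete {e}).verts ∧ w ∉ (H.delete {e}).verts

/-! ### Rank functions and vertical separations -/

section Core
variable {α : Type u} {E : Set α} {r : Set α → ℤ}

/-- The properties of the rank function of a matroid of finite rank used below. The values are
integers, so that linear arithmetic involves no truncated subtraction. -/
structure RankFn (r : Set α → ℤ) : Prop where
  mono : ∀ {A B : Set α}, A ⊆ B → r A ≤ r B
  submod : ∀ A B : Set α, r (A ∩ B) + r (A ∪ B) ≤ r A + r B
  empty : r ∅ = 0
  single : ∀ x, r {x} ≤ 1
  ext : ∀ {A B : Set α}, r A < r B → ∃ p ∈ B, r (insert p A) = r A + 1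

/-- Submodularity with a set below the intersection and a set below the union. -/
theorem RankFn.sub (h : RankFn r) {A B C D : Set α} (hCA : C ⊆ A) (hCB : C ⊆ B)
    (hD : D ⊆ A ∪ B) : r C + r D ≤ r A + r B := by
  have h1 := h.submod A B
  have h2 := h.mono (subset_inter hCA hCB)
  have h3 := h.mono hD
  linarith

theorem RankFn.insert_le (h : RankFn r) (x : α) (A : Set α) : r (insert x A) ≤ r A + 1 := by
  have h1 := h.sub (A := A) (B := {x}) (C := ∅) (D := insert x A) (by simp) (by simp)
    (by intro z; simp)
  have := h.single x
  have := h.empty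
  linarith

/-- If `S` adds nothing to the rank of `A`, it adds nothing to the rank of a superset of `A`. -/
theorem RankFn.absorb (h : RankFn r) {A B S : Set α} (hAB : A ⊆ B) (hS : r (A ∪ S) ≤ r A) :
    r (B ∪ S) ≤ r B := by
  have := h.sub (A := B) (B := A ∪ S) (C := A) (D := B ∪ S) hAB (by simp) (by grind)
  linarith

/-- Elements that individually add nothing to the rank of `A` jointly add nothing either. -/
theorem RankFn.span (h : RankFn r) {A S : Set α} (hS : ∀ p ∈ S, r (insert p A) ≤ r A) :
    r (A ∪ S) ≤ r A := by
  by_contra! hlt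
  obtain ⟨p, hp, hpr⟩ := h.ext hlt
  rcases hp with hp | hp
  · rw [insert_eq_of_mem hp] at hpr; linarith
  · have := hS p hp; linarith

theorem RankFn.le_one (h : RankFn r) {S : Set α} (hS : ¬ S.Nontrivial) : r S ≤ 1 := by
  rw [Set.not_nontrivial_iff] at hS
  rcases hS.eq_empty_or_singleton with rfl | ⟨x, rfl⟩
  · simp [h.empty]
  · exact h.single x

theorem RankFn.nontrivial (h : RankFn r) {S : Set α} (hS : 2 ≤ r S) : S.Nontrivial := by
  by_contra hn
  have := h.le_one hn
  linarith

/-- The consequences of 3-connectivity (with at least four elements) for the rank function `r` on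
the ground set `E`: no loops, no coloops, no parallel pairs, and no 2-separation. In `sep`, the set
`S` is allowed to overlap `T`, and to stick out of `E`. -/
structure Conn (E : Set α) (r : Set α → ℤ) : Prop where
  one : ∀ x ∈ E, r {x} = 1
  del1 : ∀ x ∈ E, r E ≤ r (E \ {x})
  pair : ∀ x ∈ E, ∀ y ∈ E, x ≠ y → 2 ≤ r {x, y}
  sep : ∀ S T : Set α, E ⊆ S ∪ T → T ⊆ E → T.Nontrivial → (E \ T).Nontrivial →
    r E + 2 ≤ r S + r T

/-- The rank function of a finite 3-connected matroid. -/
structure Conn3 (E : Set α) (r : Set α → ℤ) : Prop extends Conn E r where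
  fin : E.Finite

/-- A vertical 3-separation of `E` with guts element `e`, presented by two sides `P` and `Q` that
both contain `e`. If there is none, then the simplification of the contraction of `e` is
3-connected; see `Simp.conn`. -/
structure Vert (E : Set α) (r : Set α → ℤ) (e : α) (P Q : Set α) : Prop where
  union : P ∪ Q = E
  inter : P ∩ Q = {e}
  left : 3 ≤ r P
  right : 3 ≤ r Q
  le : r P + r Q ≤ r E + 2

/-- A `U_{2,4}`-minor in rank form: `L` has corank two, and any two of the four elements `v i`
span together with `L`. Contracting `L` thus turns the four elements into a `U_{2,4}`. -/
structure Quad (E : Set α) (r : Set α → ℤ) (L : Set α) (v : Fin 4 → α) : Prop where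
  sub : L ⊆ E
  mem : ∀ i, v i ∈ E
  le : r L ≤ r E - 2
  pair : ∀ i j, i ≠ j → r E ≤ r (L ∪ {v i, v j})

/-- A vertical separation at an element `e` whose contraction keeps the `U_{2,4}`-minor given by
`L` and `v`, where `P` is a small side: it has rank at most one after the contraction of `L`. -/
structure Fam (E : Set α) (r : Set α → ℤ) (e : α) (P Q L : Set α) (v : Fin 4 → α) : Prop where
  vert : Vert E r e P Q
  quad : Quad E r L v
  mem : e ∈ L
  small : r (L ∪ P) ≤ r E - 1

theorem Vert.symm {e : α} {P Q : Set α} (h : Vert E r e P Q) : Vert E r e Q P :=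
  ⟨by rw [union_comm, h.union], by rw [inter_comm, h.inter], h.right, h.left, by linarith [h.le]⟩

theorem Vert.mem {e : α} {P Q : Set α} (h : Vert E r e P Q) : e ∈ P ∧ e ∈ Q := by
  have : e ∈ P ∩ Q := by rw [h.inter]; rfl
  exact this

theorem Vert.eq_of_mem {e z : α} {P Q : Set α} (h : Vert E r e P Q) (hP : z ∈ P) (hQ : z ∈ Q) :
    z = e := by
  have : z ∈ P ∩ Q := ⟨hP, hQ⟩
  rwa [h.inter] at this

theorem Vert.mem_or {e z : α} {P Q : Set α} (h : Vert E r e P Q) (hz : z ∈ E) : z ∈ P ∨ z ∈ Q := by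
  rw [← h.union] at hz; exact hz

theorem Vert.subl {e : α} {P Q : Set α} (h : Vert E r e P Q) : P ⊆ E := by
  rw [← h.union]; exact subset_union_left

theorem Vert.subr {e : α} {P Q : Set α} (h : Vert E r e P Q) : Q ⊆ E := h.symm.subl

theorem Vert.diff_nontrivial (hr : RankFn r) {e : α} {P Q : Set α} (h : Vert E r e P Q) :
    (P \ {e}).Nontrivial := by
  apply hr.nontrivial
  have := hr.insert_le e (P \ {e})
  have h2 : P ⊆ insert e (P \ {e}) := by intro z hz; by_cases z = e <;> simp_all
  have := hr.mono h2
  have := h.left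
  linarith

/-- `e` lies in the closure of `P \ {e}`, and the separation has order exactly two. -/
theorem Vert.exact (hr : RankFn r) (hc : Conn3 E r) {e : α} {P Q : Set α} (h : Vert E r e P Q) :
    r P + r Q = r E + 2 ∧ r (P \ {e}) = r P ∧ r (Q \ {e}) = r Q := by
  have key : ∀ {P Q : Set α}, Vert E r e P Q → r E + 2 ≤ r (P \ {e}) + r Q := by
    intro P Q h
    apply hc.sep _ _ _ h.subr (hr.nontrivial (by linarith [h.right]))
    · apply (h.diff_nontrivial hr).mono
      intro z hz
      exact ⟨h.subl hz.1, fun hzQ => hz.2 (h.eq_of_mem hz.1 hzQ)⟩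
    · intro z hz
      rcases h.mem_or hz with hz | hz
      · by_cases hze : z = e
        · right; rw [hze]; exact h.mem.2
        · left; exact ⟨hz, hze⟩
      · right; exact hz
  have h1 := key h
  have h2 := key h.symm
  have h3 := hr.mono (sdiff_subset (s := P) (t := {e}))
  have h4 := hr.mono (sdiff_subset (s := Q) (t := {e}))
  have := h.le
  refine ⟨by linarith, by linarith, by linarith⟩

/-- A line of four points modulo `L` cannot have rank two on both sides of the separation. -/
theorem Vert.dichotomy (hr : RankFn r) (hc : Conn3 E r) {e : α} {P Q L : Set α} {v : Fin 4 → α}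
    (h : Vert E r e P Q) (hq : Quad E r L v) (he : e ∈ L) :
    r (L ∪ P) ≤ r E - 1 ∨ r (L ∪ Q) ≤ r E - 1 := by
  have h1 := hr.sub (A := L) (B := P) (C := L ∩ P) (D := L ∪ P) (by grind) (by grind) (by grind)
  have h2 := hr.sub (A := L) (B := Q) (C := L ∩ Q) (D := L ∪ Q) (by grind) (by grind) (by grind)
  have h3 := hr.sub (A := L ∩ P) (B := L ∩ Q) (C := {e}) (D := L)
    (by simpa using ⟨he, h.mem.1⟩) (by simpa using ⟨he, h.mem.2⟩) (by
      intro z hz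
      rcases h.mem_or (hq.sub hz) with hz' | hz'
      · left; exact ⟨hz, hz'⟩
      · right; exact ⟨hz, hz'⟩)
  have h4 := hc.one e (hq.sub he)
  have h5 := h.le
  have h6 := hq.le
  by_contra! hcon
  linarith [hcon.1, hcon.2]

/-- A small side contains at most one of the four elements of the `U_{2,4}`. -/
theorem Quad.small_unique (hr : RankFn r) {P L : Set α} {v : Fin 4 → α}
    (hq : Quad E r L v) (hP : r (L ∪ P) ≤ r E - 1) {i j : Fin 4} (hi : v i ∈ P) (hj : v j ∈ P) :
    i = j := by
  by_contra hij
  have h1 := hq.pair i j hij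
  have h2 := hr.mono (A := L ∪ {v i, v j}) (B := L ∪ P) (by
    apply union_subset_union_right
    intro z hz
    rcases hz with rfl | rfl <;> assumption)
  linarith

/-- Contracting an element `x` of the small side, outside the closure of the large one, keeps a
`U_{2,4}`-minor, and keeps the side small. -/
theorem Fam.transfer (hr : RankFn r) (hc : Conn3 E r) {e x : α} {P Q L : Set α} {v : Fin 4 → α}
    (h : Fam E r e P Q L v) (hx : x ∈ P) (hxQ : r Q < r (insert x Q)) :
    ∃ L' v', Quad E r L' v' ∧ x ∈ L' ∧ r (L' ∪ P) ≤ r E - 1 := by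
  obtain ⟨hv, hq, he, hs⟩ := h
  have hxE : x ∈ E := hv.subl hx
  obtain ⟨heP, heQ⟩ := hv.mem
  obtain ⟨hsum, -, -⟩ := hv.exact hr hc
  by_cases hxL : r (insert x L) ≤ r L
  · refine ⟨insert x L, v, ⟨insert_subset hxE hq.sub, hq.mem, hxL.trans hq.le, ?_⟩, by simp, ?_⟩
    · intro i j hij
      refine (hq.pair i j hij).trans (hr.mono ?_)
      grind
    · refine le_trans (hr.mono ?_) hs
      grind
  · push Not at hxL
    -- any `W` as below is a complement of `Q` in `P`, modulo `e`
    have key : ∀ W Z : Set α, e ∈ W → r E ≤ r (W ∪ Q) → r W ≤ r P - 1 → e ∈ Z → Z ⊆ Q →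
        r (Z ∪ W) = r Z + r P - 2 := by
      intro W Z heW hW hW' heZ hZ
      have h1 := hr.sub (A := Z) (B := W) (C := {e}) (D := Z ∪ W) (by simpa) (by simpa) le_rfl
      have h2 := hr.sub (A := Z ∪ W) (B := Q) (C := Z) (D := W ∪ Q) (by simp) hZ (by grind)
      have h3 := hc.one e (hv.subl heP)
      linarith
    -- two of the four points lie in `Q`, so `L` and `Q` together span
    have hLQ : r E ≤ r (L ∪ Q) := by
      have h2 : ∃ i j, i ≠ j ∧ v i ∈ Q ∧ v j ∈ Q := by
        have hu := fun i j => hq.small_unique hr hs (i := i) (j := j)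
        have hm := fun i => hv.mem_or (hq.mem i)
        by_contra! hcon
        have c01 := hcon 0 1 (by decide)
        have c02 := hcon 0 2 (by decide)
        have c12 := hcon 1 2 (by decide)
        have u01 := hu 0 1
        have u02 := hu 0 2
        have u12 := hu 1 2
        have m0 := hm 0
        have m1 := hm 1
        have m2 := hm 2
        simp only [Fin.reduceEq] at u01 u02 u12
        tauto
      obtain ⟨i, j, hij, hi, hj⟩ := h2
      refine (hq.pair i j hij).trans (hr.mono (union_subset_union_right _ ?_))
      intro z hz
      rcases hz with rfl | rfl <;> assumption
    have hLP : r (L ∩ P) ≤ r P - 1 := by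
      by_contra! hcon
      have h1 := hr.absorb (A := L ∩ P) (B := L) (S := P) (by simp) (by
        have : r ((L ∩ P) ∪ P) ≤ r P := hr.mono (by grind)
        linarith)
      have h2 := hr.mono (A := insert x L) (B := L ∪ P) (by grind)
      linarith
    have hLPQ : r E ≤ r ((L ∩ P) ∪ Q) := hLQ.trans (hr.mono (by
      intro z hz
      rcases hz with hz | hz
      · rcases hv.mem_or (hq.sub hz) with h | h
        · left; exact ⟨hz, h⟩
        · right; exact h
      · right; exact hz))
    have keyL := fun Z => key (L ∩ P) Z ⟨he, heP⟩ hLPQ hLP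
    -- extend `{e, x}` to a maximal subset of `P` that is skew to `Q` modulo `e`
    obtain ⟨W, hW⟩ : ∃ W, Maximal (fun W : Set α => {e, x} ⊆ W ∧ W ⊆ P ∧
        r W + r Q ≤ r (W ∪ Q) + 1) W := by
      have hfin : {W : Set α | {e, x} ⊆ W ∧ W ⊆ P ∧ r W + r Q ≤ r (W ∪ Q) + 1}.Finite :=
        (hc.fin.finite_subsets).subset (fun W hW => hW.2.1.trans hv.subl)
      refine hfin.exists_maximal ⟨{e, x}, le_rfl, ?_, ?_⟩
      · intro z hz
        rcases hz with rfl | rfl <;> assumption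
      · have h1 := hr.insert_le e {x}
        have h2 := hr.single x
        have h3 := hr.mono (A := insert x Q) (B := {e, x} ∪ Q) (by grind)
        linarith
    obtain ⟨⟨hexW, hWP, hWr⟩, hmax⟩ := hW
    have heW : e ∈ W := hexW (by simp)
    have hxW : x ∈ W := hexW (by simp)
    have hWQ : r E ≤ r (W ∪ Q) := by
      by_contra! hlt
      obtain ⟨p, hp, hpr⟩ := hr.ext hlt
      have hpP : p ∈ P := by
        rcases hv.mem_or hp with h | h
        · exact h
        · rw [insert_eq_of_mem (mem_union_right _ h)] at hpr; linarith
      have h1 := hr.insert_le p W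
      have h2 := hmax (y := insert p W) ⟨hexW.trans (subset_insert _ _), insert_subset hpP hWP, by
        rw [insert_union]; linarith⟩ (subset_insert _ _)
      have h3 : p ∈ W := h2 (mem_insert _ _)
      rw [insert_eq_of_mem (mem_union_left _ h3)] at hpr
      linarith
    have hWr' : r W ≤ r P - 1 := by
      have := hr.mono (A := W ∪ Q) (B := E) (union_subset (hWP.trans hv.subl) hv.subr)
      linarith
    have keyW := fun Z => key W Z heW hWQ hWr'
    obtain ⟨q, hqP, hqr⟩ := hr.ext (A := W) (B := P) (by linarith)
    have hWP1 : r P ≤ r (insert q W) := by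
      have h1 := keyW Q heQ le_rfl
      have h2 := hr.sub (A := W) (B := Q) (C := {e}) (D := Q ∪ W) (by simpa) (by simpa) (by grind)
      have h3 := hc.one e (hv.subl heP)
      rw [union_comm] at hWQ
      linarith
    have hspan : r (insert q W ∪ P) ≤ r (insert q W) := by
      refine le_trans (hr.mono ?_) hWP1
      exact union_subset (insert_subset hqP hWP) le_rfl
    have hLeq : L = (L ∩ Q) ∪ (L ∩ P) := by
      ext z
      constructor
      · intro hz
        rcases hv.mem_or (hq.sub hz) with h | h
        · right; exact ⟨hz, h⟩
        · left; exact ⟨hz, h⟩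
      · rintro (h | h) <;> exact h.1
    have hsame : ∀ S ⊆ Q, r ((L ∩ Q) ∪ W ∪ S) = r (L ∪ S) := by
      intro S hS
      have h1 := keyW ((L ∩ Q) ∪ S) (Or.inl ⟨he, heQ⟩) (union_subset inter_subset_right hS)
      have h2 := keyL ((L ∩ Q) ∪ S) (Or.inl ⟨he, heQ⟩) (union_subset inter_subset_right hS)
      rw [show (L ∩ Q) ∪ W ∪ S = (L ∩ Q) ∪ S ∪ W by grind, h1, ← h2]
      congr 1
      conv_rhs => rw [hLeq]
      grind
    classical
    refine ⟨(L ∩ Q) ∪ W, fun i => if v i ∈ Q then v i else q, ⟨?_, ?_, ?_, ?_⟩, Or.inr hxW, ?_⟩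
    · exact union_subset (inter_subset_left.trans hq.sub) (hWP.trans hv.subl)
    · intro i
      split_ifs
      · exact hq.mem i
      · exact hv.subl hqP
    · have := hsame ∅ (by simp)
      simp only [union_empty] at this
      rw [this]
      exact hq.le
    · have hmix : ∀ i j, i ≠ j → v i ∉ Q → v j ∈ Q → r E ≤ r ((L ∩ Q) ∪ W ∪ {q, v j}) := by
        intro i j hij hi hj
        have hiP : v i ∈ P := (hv.mem_or (hq.mem i)).resolve_right hi
        have h1 := hr.absorb (A := insert q W) (B := (L ∩ Q) ∪ W ∪ {q, v j}) (S := P) (by grind) hspan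
        refine (hq.pair i j hij).trans (le_trans (hr.mono ?_) h1)
        intro z hz
        rcases hz with hz | hz | hz
        · rcases hv.mem_or (hq.sub hz) with h | h
          · exact Or.inr h
          · exact Or.inl (Or.inl (Or.inl ⟨hz, h⟩))
        · rw [hz]; exact Or.inr hiP
        · exact Or.inl (Or.inr (Or.inr hz))
      intro i j hij
      by_cases hi : v i ∈ Q <;> by_cases hj : v j ∈ Q
      · simp only [hi, hj, if_true]
        rw [hsame]
        · exact hq.pair i j hij
        · intro z hz
          rcases hz with rfl | rfl <;> assumption
      · simp only [hi, hj, if_true, if_false]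
        rw [pair_comm]
        exact hmix j i hij.symm hj hi
      · simp only [hi, hj, if_true, if_false]
        exact hmix i j hij hi hj
      · exact absurd (hq.small_unique hr hs ((hv.mem_or (hq.mem i)).resolve_right hi)
          ((hv.mem_or (hq.mem j)).resolve_right hj)) hij
    · exact le_trans (hr.mono (union_subset (union_subset (inter_subset_left.trans
        subset_union_left) (hWP.trans subset_union_right)) subset_union_right)) hs

end Core

/-! ### A minimal small side -/

section Core
variable {α : Type u} {E : Set α} {r : Set α → ℤ}

/-- A member of the family whose small side has minimal rank, and is minimal under inclusion. -/
structure MinFam (E : Set α) (r : Set α → ℤ) (e : α) (P Q : Set α) : Prop where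
  fam : ∃ L v, Fam E r e P Q L v
  rk : ∀ {e' P' Q' L' v'}, Fam E r e' P' Q' L' v' → r P ≤ r P'
  noSub : ∀ {e' P' Q' L' v'}, Fam E r e' P' Q' L' v' → ¬ P' ⊂ P

theorem Fam.exists_minFam (hr : RankFn r) (hc : Conn3 E r) {e : α} {P Q L : Set α}
    {v : Fin 4 → α} (h : Fam E r e P Q L v) : ∃ e P Q, MinFam E r e P Q := by
  have key : ∀ n : ℕ, ∀ {e : α} {P Q L : Set α} {v : Fin 4 → α}, Fam E r e P Q L v →
      (r P).toNat * (E.ncard + 1) + P.ncard ≤ n → ∃ e P Q, MinFam E r e P Q := by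
    intro n
    induction n with
    | zero =>
      intro e P Q L v h hn
      have h1 := h.vert.left
      have h2 : 1 ≤ (r P).toNat := by omega
      have h3 : 1 * (E.ncard + 1) ≤ (r P).toNat * (E.ncard + 1) := Nat.mul_le_mul_right _ h2
      omega
    | succ n ih =>
      intro e P Q L v h hn
      by_cases hmin : MinFam E r e P Q
      · exact ⟨e, P, Q, hmin⟩
      have hex : ∃ e' P' Q' L' v', Fam E r e' P' Q' L' v' ∧ (r P' < r P ∨ P' ⊂ P) := by
        by_contra! hcon
        refine hmin ⟨⟨L, v, h⟩, ?_, ?_⟩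
        · intro e' P' Q' L' v' h'
          exact (hcon _ _ _ _ _ h').1
        · intro e' P' Q' L' v' h'
          exact (hcon _ _ _ _ _ h').2
      obtain ⟨e', P', Q', L', v', h', hlt⟩ := hex
      refine ih h' ?_
      have hP := hc.fin.subset h.vert.subl
      have hP' := hc.fin.subset h'.vert.subl
      have hle : P'.ncard ≤ E.ncard := ncard_le_ncard h'.vert.subl hc.fin
      have h3 := h'.vert.left
      rcases hlt with hlt | hlt
      · have h2 : (r P').toNat + 1 ≤ (r P).toNat := by omega
        have h4 := Nat.mul_le_mul_right (E.ncard + 1) h2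
        rw [add_mul] at h4
        omega
      · have h2 : (r P').toNat ≤ (r P).toNat := by
          have := hr.mono hlt.subset
          omega
        have h4 := Nat.mul_le_mul_right (E.ncard + 1) h2
        have h5 := ncard_lt_ncard hlt hP
        omega
  exact key _ h le_rfl

/-- No element of the small side but `e` is in the closure of the large side. -/
theorem MinFam.closed (hr : RankFn r) (hc : Conn3 E r) {e x : α} {P Q : Set α}
    (h : MinFam E r e P Q) (hx : x ∈ P) (hxe : x ≠ e) : r Q < r (insert x Q) := by
  by_contra! hcon
  obtain ⟨L, v, hf⟩ := h.fam
  have hv := hf.vert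
  obtain ⟨hsum, hPe, hQe⟩ := hv.exact hr hc
  have hmem := hv.mem
  have hQle : r Q ≤ r E - 1 := by
    have := hv.left
    linarith
  have h1 : (P \ {x}).Nontrivial := by
    apply hr.nontrivial
    have h2 := hr.insert_le x (P \ {x})
    have h3 := hr.mono (A := P) (B := insert x (P \ {x})) (by
      intro z hz; by_cases z = x <;> simp_all)
    linarith [hv.left]
  have hsep : r E + 2 ≤ r (insert x Q) + r (P \ {x}) := by
    refine hc.sep _ _ ?_ (sdiff_subset.trans hv.subl) h1 ?_
    · intro z hz
      rcases hv.mem_or hz with hz | hz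
      · by_cases hzx : z = x
        · left; left; exact hzx
        · right; exact ⟨hz, hzx⟩
      · left; right; exact hz
    · apply (hv.symm.diff_nontrivial hr).mono
      intro z hz
      exact ⟨hv.subr hz.1, fun hzP => hz.2 (hv.eq_of_mem hzP.1 hz.1)⟩
  have hle := hr.mono (A := P \ {x}) (B := P) sdiff_subset
  refine h.noSub (e' := e) (P' := P \ {x}) (Q' := insert x Q) (L' := L) (v' := v)
    ⟨⟨?_, ?_, by linarith, ?_, by linarith⟩, hf.quad, hf.mem, ?_⟩ ?_
  · rw [← hv.union]
    ext z
    simp only [mem_union, mem_sdiff, mem_singleton_iff, mem_insert_iff]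
    by_cases hzx : z = x
    · simp [hzx, hx]
    · simp [hzx]
  · ext z
    constructor
    · rintro ⟨⟨hz, hzx⟩, rfl | hzQ⟩
      · exact absurd rfl hzx
      · exact hv.eq_of_mem hz hzQ
    · rintro rfl
      exact ⟨⟨hmem.1, fun h => hxe h.symm⟩, Or.inr hmem.2⟩
  · exact hv.right.trans (hr.mono (subset_insert _ _))
  · exact le_trans (hr.mono (union_subset_union_right _ sdiff_subset)) hf.small
  · exact ⟨sdiff_subset, fun hsub => (hsub hx).2 rfl⟩

/-- Every element `x ≠ e` of the minimal side can be contracted keeping a `U_{2,4}`-minor for which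
that side is still small. -/
theorem MinFam.quad (hr : RankFn r) (hc : Conn3 E r) {e x : α} {P Q : Set α}
    (h : MinFam E r e P Q) (hx : x ∈ P) (hxe : x ≠ e) :
    ∃ L v, Quad E r L v ∧ x ∈ L ∧ r (L ∪ P) ≤ r E - 1 := by
  obtain ⟨L, v, hf⟩ := h.fam
  exact hf.transfer hr hc hx (h.closed hr hc hx hxe)

/-- By minimality, there is no vertical separation at `x` with a side properly inside `P`. -/
theorem MinFam.not_vert (hr : RankFn r) (hc : Conn3 E r) {e x : α} {P Q A B : Set α}
    (h : MinFam E r e P Q) (hx : x ∈ P) (hxe : x ≠ e) (hA : A ⊂ P) : ¬ Vert E r x A B := by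
  intro hv
  obtain ⟨L, v, hq, hxL, hs⟩ := h.quad hr hc hx hxe
  exact h.noSub ⟨hv, hq, hxL,
    le_trans (hr.mono (union_subset_union_right _ hA.subset)) hs⟩ hA

theorem four_pigeonhole {p q s : Fin 4 → Prop} (h : ∀ i, p i ∨ q i ∨ s i)
    (hp : ∀ i j, i ≠ j → p i → p j → False) (hq : ∀ i j, i ≠ j → q i → q j → False)
    (hs : ∀ i j, i ≠ j → s i → s j → False) : False := by
  have hc : ∀ i, ∃ c : Fin 3, (c = 0 → p i) ∧ (c = 1 → q i) ∧ (c = 2 → s i) := by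
    intro i
    rcases h i with h | h | h
    · exact ⟨0, by simp [h]⟩
    · exact ⟨1, by simp [h]⟩
    · exact ⟨2, by simp [h]⟩
  choose c hc using hc
  obtain ⟨i, j, hij, heq⟩ := Fintype.exists_ne_map_eq_of_card_lt c (by simp)
  obtain ⟨a1, a2, a3⟩ := hc i
  obtain ⟨b1, b2, b3⟩ := hc j
  rw [← heq] at b1 b2 b3
  generalize c i = k at *
  fin_cases k
  · exact hp i j hij (a1 rfl) (b1 rfl)
  · exact hq i j hij (a2 rfl) (b2 rfl)
  · exact hs i j hij (a3 rfl) (b3 rfl)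

/-- A separation at an element `x ≠ e` of the minimal side cuts that side into two lines. -/
theorem MinFam.lines (hr : RankFn r) (hc : Conn3 E r) {e x : α} {P Q A B : Set α}
    (h : MinFam E r e P Q) (hx : x ∈ P) (hxe : x ≠ e) (hAB : Vert E r x A B) (heA : e ∉ A) :
    r (P ∩ A) ≤ 2 ∧ r (P ∩ B) ≤ 2 ∧ ∃ a ∈ P ∩ A, a ≠ x := by
  obtain ⟨L₀, v₀, hf⟩ := h.fam
  have hv := hf.vert
  obtain ⟨heP, heQ⟩ := hv.mem
  obtain ⟨hxA, hxB⟩ := hAB.mem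
  obtain ⟨hsum, -, -⟩ := hv.exact hr hc
  obtain ⟨hsum', hAx, -⟩ := hAB.exact hr hc
  have heB : e ∈ B := (hAB.mem_or (hv.subl heP)).resolve_left heA
  have hPE : (P \ {e}).Nontrivial := hv.diff_nontrivial hr
  have hPQ : ∀ T ⊆ Q, (E \ T).Nontrivial := fun T hT => hPE.mono (by
    intro z hz
    exact ⟨hv.subl hz.1, fun hzT => hz.2 (hv.eq_of_mem hz.1 (hT hzT))⟩)
  have ha : ∃ a ∈ P ∩ A, a ≠ x := by
    by_contra! hcon
    have hclosed := h.closed hr hc hx hxe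
    have hsub : A \ {x} ⊆ Q := by
      intro z hz
      rcases hv.mem_or (hAB.subl hz.1) with hzP | hzQ
      · exact absurd (hcon z ⟨hzP, hz.1⟩) hz.2
      · exact hzQ
    have h1 := hr.absorb (A := A \ {x}) (B := Q) (S := {x}) hsub (by
      rw [hAx]
      exact hr.mono (union_subset sdiff_subset (by simpa using hxA)))
    rw [union_singleton] at h1
    linarith
  obtain ⟨a, ⟨haP, haA⟩, hax⟩ := ha
  have haB : a ∉ B := fun hB => hax (hAB.eq_of_mem haA hB)
  have hQA : ∃ y ∈ Q, y ∈ A := by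
    by_contra! hcon
    refine h.not_vert hr hc hx hxe (A := A) ⟨?_, fun hPA => heA (hPA heP)⟩ hAB
    intro z hz
    exact (hv.mem_or (hAB.subl hz)).resolve_right (fun hzQ => hcon z hzQ hz)
  have hQB : (Q ∩ B).Nontrivial := by
    by_contra hcon
    rw [not_nontrivial_iff] at hcon
    refine h.not_vert hr hc hx hxe (A := B) ⟨?_, fun hPB => haB (hPB haP)⟩ hAB.symm
    intro z hz
    rcases hv.mem_or (hAB.subr hz) with hzP | hzQ
    · exact hzP
    · rw [hcon ⟨hzQ, hz⟩ ⟨heQ, heB⟩]; exact heP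
  have hPA2 : r (P ∩ A) ≤ 2 := by
    by_contra! hcon
    have h1 := hr.submod P A
    have h2 := hr.submod Q B
    have h3 := hc.sep (P ∪ A) (Q ∩ B) (by
      intro z hz
      by_cases hzP : z ∈ P
      · exact Or.inl (Or.inl hzP)
      by_cases hzA : z ∈ A
      · exact Or.inl (Or.inr hzA)
      exact Or.inr ⟨(hv.mem_or hz).resolve_left hzP, (hAB.mem_or hz).resolve_left hzA⟩)
      (inter_subset_left.trans hv.subr) hQB (hPQ _ inter_subset_left)
    refine h.not_vert hr hc hx hxe (A := P ∩ A) (B := Q ∪ B)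
      ⟨inter_subset_left, fun hPA => heA (hPA heP).2⟩ ⟨?_, ?_, by linarith, ?_, by linarith⟩
    · apply Subset.antisymm
      · exact union_subset (inter_subset_left.trans hv.subl) (union_subset hv.subr hAB.subr)
      · intro z hz
        by_cases hzQ : z ∈ Q
        · exact Or.inr (Or.inl hzQ)
        by_cases hzB : z ∈ B
        · exact Or.inr (Or.inr hzB)
        exact Or.inl ⟨(hv.mem_or hz).resolve_right hzQ, (hAB.mem_or hz).resolve_right hzB⟩
    · ext z
      constructor
      · rintro ⟨⟨hzP, hzA⟩, hzQ | hzB⟩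
        · rw [hv.eq_of_mem hzP hzQ] at hzA
          exact absurd hzA heA
        · exact hAB.eq_of_mem hzA hzB
      · rintro rfl
        exact ⟨⟨hx, hxA⟩, Or.inr hxB⟩
    · exact hAB.right.trans (hr.mono subset_union_right)
  refine ⟨hPA2, ?_, a, ⟨haP, haA⟩, hax⟩
  by_contra! hcon
  by_cases hnt : (Q ∩ A).Nontrivial
  · have h1 := hr.submod P B
    have h2 := hr.submod Q A
    have h3 := hc.sep (P ∪ B) (Q ∩ A) (by
      intro z hz
      by_cases hzP : z ∈ P
      · exact Or.inl (Or.inl hzP)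
      by_cases hzB : z ∈ B
      · exact Or.inl (Or.inr hzB)
      exact Or.inr ⟨(hv.mem_or hz).resolve_left hzP, (hAB.mem_or hz).resolve_right hzB⟩)
      (inter_subset_left.trans hv.subr) hnt (hPQ _ inter_subset_left)
    have h4 := hr.mono (A := (Q \ {e}) ∪ A) (B := Q ∪ A)
      (union_subset_union_left _ sdiff_subset)
    refine h.not_vert hr hc hx hxe (A := P ∩ B) (B := (Q \ {e}) ∪ A)
      ⟨inter_subset_left, fun hPB => haB (hPB haP).2⟩ ⟨?_, ?_, by linarith, ?_, by linarith⟩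
    · apply Subset.antisymm
      · exact union_subset (inter_subset_left.trans hv.subl)
          (union_subset (sdiff_subset.trans hv.subr) hAB.subl)
      · intro z hz
        by_cases hzA : z ∈ A
        · exact Or.inr (Or.inr hzA)
        have hzB := (hAB.mem_or hz).resolve_left hzA
        by_cases hzP : z ∈ P
        · exact Or.inl ⟨hzP, hzB⟩
        refine Or.inr (Or.inl ⟨(hv.mem_or hz).resolve_left hzP, ?_⟩)
        rintro rfl
        exact hzP heP
    · ext z
      constructor
      · rintro ⟨⟨hzP, hzB⟩, ⟨hzQ, hze⟩ | hzA⟩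
        · exact absurd (hv.eq_of_mem hzP hzQ) hze
        · exact hAB.eq_of_mem hzA hzB
      · rintro rfl
        exact ⟨⟨hx, hxB⟩, Or.inr hxA⟩
    · exact hAB.left.trans (hr.mono subset_union_right)
  · obtain ⟨y, hyQ, hyA⟩ := hQA
    rw [not_nontrivial_iff] at hnt
    have hAP : ∀ z ∈ A, z ∈ P ∨ z = y := by
      intro z hz
      rcases hv.mem_or (hAB.subl hz) with hzP | hzQ
      · exact Or.inl hzP
      · exact Or.inr (hnt ⟨hzQ, hz⟩ ⟨hyQ, hyA⟩)
    obtain ⟨L, v, hq, hxL, hs⟩ := h.quad hr hc hx hxe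
    have hsA : r (L ∪ A) ≤ r E - 1 := by
      by_contra hsA
      have hsB := (hAB.dichotomy hr hc hq hxL).resolve_left hsA
      -- at most one of the four points is in `P`, one in `B`, and one equals `y`
      have hm : ∀ i, v i ∈ P ∨ v i ∈ B ∨ v i = y := by
        intro i
        rcases hAB.mem_or (hq.mem i) with hA | hB
        · rcases hAP _ hA with hP | hy
          · exact Or.inl hP
          · exact Or.inr (Or.inr hy)
        · exact Or.inr (Or.inl hB)
      have hy : ∀ i j, i ≠ j → v i = y → v j = y → False := by
        intro i j hij hi hj
        have h1 := hq.pair i j hij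
        rw [hi, hj, pair_eq_singleton, union_singleton] at h1
        have h2 := hr.insert_le y L
        linarith [hq.le]
      have hP : ∀ i j, i ≠ j → v i ∈ P → v j ∈ P → False :=
        fun i j hij hi hj => hij (hq.small_unique hr hs hi hj)
      have hB : ∀ i j, i ≠ j → v i ∈ B → v j ∈ B → False :=
        fun i j hij hi hj => hij (hq.small_unique hr hsB hi hj)
      exact four_pigeonhole hm hP hB hy
    have h1 := h.rk (e' := x) (Q' := B) ⟨hAB, hq, hxL, hsA⟩
    have h2 : r A ≤ r (P ∩ A) + 1 := by
      refine le_trans (hr.mono ?_) (hr.insert_le y _)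
      intro z hz
      rcases hAP z hz with hzP | hzy
      · exact Or.inr ⟨hzP, hz⟩
      · exact Or.inl hzy
    have h3 := hAB.left
    have h4 := hr.absorb (A := P ∩ B) (B := B) (S := P) inter_subset_right (by
      have := hr.mono (A := (P ∩ B) ∪ P) (B := P) (union_subset inter_subset_left le_rfl)
      linarith)
    have h5 := hc.del1 y (hv.subr hyQ)
    have h6 := hr.mono (A := E \ {y}) (B := B ∪ P) (by
      intro z hz
      rcases hAB.mem_or hz.1 with hzA | hzB
      · exact Or.inr ((hAP z hzA).resolve_right hz.2)
      · exact Or.inl hzB)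
    linarith

/-- Two lines with two points in common are equal. -/
theorem RankFn.line_union (hr : RankFn r) (hc : Conn3 E r) {U V W : Set α} {p q : α} (hU : r U ≤ 2)
    (hV : r V ≤ 2) (hpq : p ≠ q) (hpE : p ∈ E) (hqE : q ∈ E)
    (hpU : p ∈ U) (hqU : q ∈ U) (hpV : p ∈ V) (hqV : q ∈ V) (hW : W ⊆ U ∪ V) : r W ≤ 2 := by
  have h1 := hr.sub (A := U) (B := V) (C := {p, q}) (D := W)
    (pair_subset hpU hqU) (pair_subset hpV hqV) hW
  have h2 := hc.pair p hpE q hqE hpq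
  linarith

/-- Otherwise the separations at two elements `x` and `a` both cut `P` into two lines, by
`MinFam.lines`; these lines have so many points in common that `P` itself is a line. -/
theorem MinFam.exists_good (hr : RankFn r) (hc : Conn3 E r) {e : α} {P Q : Set α}
    (h : MinFam E r e P Q) : ∃ x ∈ P, x ≠ e ∧ ∀ A B, ¬ Vert E r x A B := by
  by_contra! hcon
  obtain ⟨L₀, v₀, hf⟩ := h.fam
  have hv := hf.vert
  obtain ⟨heP, -⟩ := hv.mem
  obtain ⟨-, hPe, -⟩ := hv.exact hr hc
  have hP3 := hv.left
  have hbad : ∀ x ∈ P, x ≠ e → ∃ A B, Vert E r x A B ∧ e ∉ A := by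
    intro x hx hxe
    obtain ⟨A, B, hAB⟩ := hcon x hx hxe
    by_cases heA : e ∈ A
    · exact ⟨B, A, hAB.symm, fun heB => hxe (hAB.eq_of_mem heA heB).symm⟩
    · exact ⟨A, B, hAB, heA⟩
  obtain ⟨x, ⟨hx, hxe⟩⟩ := (hv.diff_nontrivial hr).nonempty
  obtain ⟨A, B, hAB, heA⟩ := hbad x hx hxe
  obtain ⟨hPA, hPB, a, ⟨haP, haA⟩, hax⟩ := h.lines hr hc hx hxe hAB heA
  have hae : a ≠ e := by rintro rfl; exact heA haA
  obtain ⟨A', B', hAB', heA'⟩ := hbad a haP hae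
  obtain ⟨hPA', hPB', -⟩ := h.lines hr hc haP hae hAB' heA'
  have hPE : ∀ z ∈ P, z ∈ E := fun z hz => hv.subl hz
  have heB : e ∈ B := (hAB.mem_or (hPE e heP)).resolve_left heA
  have heB' : e ∈ B' := (hAB'.mem_or (hPE e heP)).resolve_left heA'
  have hPcov : ∀ z ∈ P, z ∈ P ∩ A ∨ z ∈ P ∩ B := by
    intro z hz
    rcases hAB.mem_or (hPE z hz) with h | h
    · exact Or.inl ⟨hz, h⟩
    · exact Or.inr ⟨hz, h⟩
  obtain ⟨b, hbP, hbB', hba, hbe⟩ : ∃ b ∈ P, b ∈ B' ∧ b ≠ a ∧ b ≠ e := by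
    by_contra! hno
    have h1 := hr.mono (A := P \ {e}) (B := P ∩ A') (by
      intro z hz
      refine ⟨hz.1, ?_⟩
      rcases hAB'.mem_or (hPE z hz.1) with hzA | hzB
      · exact hzA
      · by_cases hza : z = a
        · rw [hza]; exact hAB'.mem.1
        · exact absurd (hno z hz.1 hzB hza) hz.2)
    linarith
  have haB' : a ∈ B' := hAB'.mem.2
  have hxAB := hAB.mem
  rcases hPcov b hbP with hbA | hbB
  · -- the lines `P ∩ A` and `P ∩ B'` share `a` and `b`
    have h1 := hr.line_union hc (W := insert e (P ∩ A)) hPA hPB' hba (hPE b hbP) (hPE a haP) hbA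
      ⟨haP, haA⟩ ⟨hbP, hbB'⟩ ⟨haP, haB'⟩ (insert_subset (Or.inr ⟨heP, heB'⟩) subset_union_left)
    have h2 := hr.line_union hc (W := P) h1 hPB hxe (hPE x hx) (hPE e heP)
      (Or.inr ⟨hx, hxAB.1⟩) (Or.inl rfl) ⟨hx, hxAB.2⟩ ⟨heP, heB⟩ (fun z hz => by
        rcases hPcov z hz with h | h
        · exact Or.inl (Or.inr h)
        · exact Or.inr h)
    linarith
  · have h1 := hr.line_union hc (W := insert a (P ∩ B)) hPB hPB' hbe (hPE b hbP) (hPE e heP) hbB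
      ⟨heP, heB⟩ ⟨hbP, hbB'⟩ ⟨heP, heB'⟩ (insert_subset (Or.inr ⟨haP, haB'⟩) subset_union_left)
    have h2 := hr.line_union hc (W := P) h1 hPA hax (hPE a haP) (hPE x hx)
      (Or.inl rfl) (Or.inr ⟨hx, hxAB.2⟩) ⟨haP, haA⟩ ⟨hx, hxAB.1⟩ (fun z hz => by
        rcases hPcov z hz with h | h
        · exact Or.inr h
        · exact Or.inl (Or.inr h))
    linarith

/-- In rank at least three, some element `e` can be contracted keeping a `U_{2,4}`-minor, with no
separation that would make the simplification of the contraction fail to be 3-connected. -/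
theorem Quad.exists_good (hr : RankFn r) (hc : Conn3 E r) (hE : 3 ≤ r E) {L : Set α}
    {v : Fin 4 → α} (hq : Quad E r L v) :
    ∃ e L v, Quad E r L v ∧ e ∈ L ∧ ∀ P Q, ¬ Vert E r e P Q := by
  have hL : L.Nonempty := by
    rw [nonempty_iff_ne_empty]
    rintro rfl
    have h1 := hq.pair 0 1 (by decide)
    have h2 := hr.insert_le (v 0) {v 1}
    have h3 := hr.single (v 1)
    rw [empty_union] at h1
    linarith
  obtain ⟨e, he⟩ := hL
  by_cases hgood : ∀ P Q, ¬ Vert E r e P Q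
  · exact ⟨e, L, v, hq, he, hgood⟩
  push Not at hgood
  obtain ⟨P, Q, hv⟩ := hgood
  have hfam : ∃ P Q, Fam E r e P Q L v := by
    rcases hv.dichotomy hr hc hq he with h | h
    · exact ⟨P, Q, hv, hq, he, h⟩
    · exact ⟨Q, P, hv.symm, hq, he, h⟩
  obtain ⟨P, Q, hf⟩ := hfam
  obtain ⟨e, P, Q, hm⟩ := hf.exists_minFam hr hc
  obtain ⟨x, hx, hxe, hxg⟩ := hm.exists_good hr hc
  obtain ⟨L, v, hq, hxL, -⟩ := hm.quad hr hc hx hxe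
  exact ⟨x, L, v, hq, hxL, hxg⟩

end Core

/-! ### The rank function of a matroid -/

section Bridge
variable {α : Type u} {M N K : Matroid α}

theorem eRk_eq (M : Matroid α) (X : Set α) : eRk M X = M.eRk X := by
  apply le_antisymm
  · exact iSup_le fun I => I.2.1.encard_le_eRk_of_subset I.2.2
  · obtain ⟨I, hI⟩ := M.exists_isBasis' X
    rw [hI.eRk_eq_encard]
    exact le_iSup (fun I : {I : Set α // M.Indep I ∧ I ⊆ X} => (I : Set α).encard)
      ⟨I, hI.indep, hI.subset⟩

theorem eRank_eq (M : Matroid α) : eRank M = M.eRank := by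
  rw [eRank, eRk_eq, eRk_ground]

/-- The rank function of a matroid, with integer values. It is meaningful in finite rank only. -/
noncomputable def zr (M : Matroid α) (X : Set α) : ℤ := ((M.eRk X).toNat : ℤ)

theorem coe_zr [M.RankFinite] (X : Set α) : ∃ n : ℕ, M.eRk X = n ∧ zr M X = n := by
  have h : M.eRk X ≠ ⊤ := by
    rw [eRk_ne_top_iff]
    exact M.isRkFinite_set X
  exact ⟨(M.eRk X).toNat, (ENat.natCast_toNat h).symm, rfl⟩

theorem zr_rankFn (M : Matroid α) [M.RankFinite] : RankFn (zr M) where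
  mono {A B} h := by
    obtain ⟨a, ha, ha'⟩ := coe_zr (M := M) A
    obtain ⟨b, hb, hb'⟩ := coe_zr (M := M) B
    have := M.eRk_mono h
    rw [ha, hb] at this
    rw [ha', hb']
    exact_mod_cast this
  submod A B := by
    obtain ⟨a, ha, ha'⟩ := coe_zr (M := M) A
    obtain ⟨b, hb, hb'⟩ := coe_zr (M := M) B
    obtain ⟨c, hc, hc'⟩ := coe_zr (M := M) (A ∩ B)
    obtain ⟨d, hd, hd'⟩ := coe_zr (M := M) (A ∪ B)
    have := M.eRk_inter_add_eRk_union_le A B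
    rw [ha, hb, hc, hd] at this
    rw [ha', hb', hc', hd']
    exact_mod_cast this
  empty := by simp [zr]
  single x := by
    obtain ⟨a, ha, ha'⟩ := coe_zr (M := M) {x}
    have := M.eRk_singleton_le x
    rw [ha] at this
    rw [ha']
    exact_mod_cast this
  ext {A B} h := by
    obtain ⟨a, ha, ha'⟩ := coe_zr (M := M) A
    obtain ⟨b, hb, hb'⟩ := coe_zr (M := M) B
    rw [ha', hb'] at h
    obtain ⟨y, hy, hyr⟩ := M.exists_eRk_insert_eq_add_one_of_lt (X := A) (Y := B) (by
      rw [ha, hb]; exact_mod_cast h)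
    obtain ⟨c, hc, hc'⟩ := coe_zr (M := M) (insert y A)
    refine ⟨y, hy.1, ?_⟩
    rw [hc', ha']
    rw [hc, ha] at hyr
    exact_mod_cast hyr

theorem zr_le_ground (M : Matroid α) [M.RankFinite] (X : Set α) : zr M X ≤ zr M M.E := by
  obtain ⟨a, ha, ha'⟩ := coe_zr (M := M) X
  obtain ⟨b, hb, hb'⟩ := coe_zr (M := M) M.E
  have := M.eRk_le_eRank X
  rw [← eRk_ground, ha, hb] at this
  rw [ha', hb']
  exact_mod_cast this

theorem zr_exists_finite (M : Matroid α) [M.RankFinite] (X : Set α) :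
    ∃ I ⊆ X, I.Finite ∧ zr M X ≤ zr M I := by
  obtain ⟨I, hI⟩ := M.exists_isBasis' X
  exact ⟨I, hI.subset, hI.indep.finite, by rw [zr, zr, hI.eRk_eq_eRk]⟩

theorem zr_del (M : Matroid α) {D X : Set α} (h : X ⊆ M.E \ D) : zr (del M D) X = zr M X := by
  rw [zr, zr, del, restrict_eRk_eq _ h]

theorem del_ground (M : Matroid α) (D : Set α) : (del M D).E = M.E \ D := rfl

theorem con_ground (M : Matroid α) (D : Set α) : (con M D).E = M.E \ D := rfl

instance del_rankFinite [M.RankFinite] (D : Set α) : (del M D).RankFinite :=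
  inferInstanceAs (M ＼ D).RankFinite

instance con_rankFinite [M.RankFinite] (D : Set α) : (con M D).RankFinite :=
  inferInstanceAs (M ／ D).RankFinite

theorem zr_con (M : Matroid α) [M.RankFinite] (C X : Set α) :
    zr (con M C) X = zr M (X ∪ C) - zr M C := by
  obtain ⟨I, hI⟩ := M.exists_isBasis' C
  obtain ⟨J, hJ⟩ := (M ／ C).exists_isBasis' X
  have hJi := (hI.contract_indep_iff).1 hJ.indep
  have hJI : M.IsBasis' (J ∪ I) (X ∪ C) := by
    refine ⟨⟨hJi.1, union_subset_union hJ.subset hI.subset⟩, ?_⟩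
    rintro T ⟨hT, hTX⟩ hsub z hz
    by_cases hzC : z ∈ C
    · right
      have h1 := hI.2 (y := insert z I) ⟨hT.subset (insert_subset hz
        (subset_union_right.trans hsub)), insert_subset hzC hI.subset⟩ (subset_insert _ _)
      exact h1 (mem_insert _ _)
    · left
      have hzX : z ∈ X := (hTX hz).resolve_right hzC
      have h1 := hJ.2 (y := insert z J) ⟨(hI.contract_indep_iff).2 ⟨hT.subset (by
        rw [insert_union]; exact insert_subset hz hsub), by
          rw [← union_singleton, disjoint_union_right, disjoint_singleton_right]
          exact ⟨hJi.2, hzC⟩⟩, insert_subset hzX hJ.subset⟩ (subset_insert _ _)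
      exact h1 (mem_insert _ _)
  have hdisj : Disjoint J I := (hJi.2.mono_left hI.subset).symm
  have h1 : (M ／ C).eRk X + M.eRk C = M.eRk (X ∪ C) := by
    rw [hJ.eRk_eq_encard, hI.eRk_eq_encard, hJI.eRk_eq_encard, encard_union_eq hdisj]
  obtain ⟨a, ha, ha'⟩ := coe_zr (M := con M C) X
  obtain ⟨b, hb, hb'⟩ := coe_zr (M := M) (X ∪ C)
  obtain ⟨c, hc, hc'⟩ := coe_zr (M := M) C
  rw [show (M ／ C).eRk X = a from ha, hb, hc] at h1
  rw [ha', hb', hc']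
  have : a + c = b := by exact_mod_cast h1
  omega

theorem zr_dual (M : Matroid α) [M.Finite] {X : Set α} (hX : X ⊆ M.E) :
    zr M✶ X + zr M M.E = zr M (M.E \ X) + X.ncard := by
  have h1 := M.eRk_dual_add_eRank X hX
  have hfin : X.Finite := M.ground_finite.subset hX
  obtain ⟨a, ha, ha'⟩ := coe_zr (M := M✶) X
  obtain ⟨b, hb, hb'⟩ := coe_zr (M := M) M.E
  obtain ⟨c, hc, hc'⟩ := coe_zr (M := M) (M.E \ X)
  rw [← eRk_ground, ha, hb, hc, ← hfin.cast_ncard_eq] at h1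
  rw [ha', hb', hc']
  exact_mod_cast h1

theorem threeConnected_iff [M.RankFinite] : ThreeConnected M ↔
    ∀ X Y, X ∪ Y = M.E → Disjoint X Y →
      (X.Nonempty → Y.Nonempty → zr M M.E + 1 ≤ zr M X + zr M Y) ∧
      (X.Nontrivial → Y.Nontrivial → zr M M.E + 2 ≤ zr M X + zr M Y) := by
  have key : ∀ (k : ℕ) X Y, (eRk M X + eRk M Y ≤ eRank M + (k : ℕ∞)) ↔
      zr M X + zr M Y ≤ zr M M.E + k := by
    intro k X Y
    rw [eRank, eRk_eq, eRk_eq, eRk_eq]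
    obtain ⟨a, ha, ha'⟩ := coe_zr (M := M) X
    obtain ⟨b, hb, hb'⟩ := coe_zr (M := M) Y
    obtain ⟨c, hc, hc'⟩ := coe_zr (M := M) M.E
    rw [ha, hb, hc, ha', hb', hc']
    norm_cast
  simp only [ThreeConnected, MConnected, IsKSep, key]
  have h1 : ∀ X : Set α, ((1 : ℕ) : ℕ∞) ≤ X.encard ↔ X.Nonempty := by
    intro X; rw [Nat.cast_one, one_le_encard_iff_nonempty]
  have h2 : ∀ X : Set α, ((2 : ℕ) : ℕ∞) ≤ X.encard ↔ X.Nontrivial := by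
    intro X
    rw [← one_lt_encard_iff_nontrivial, ← ENat.add_one_le_iff (by simp)]
    norm_num
  simp only [h1, h2]
  push Not
  constructor
  · rintro ⟨ha, hb⟩ X Y hu hd
    exact ⟨fun hx hy => by have := ha X Y hu hd hx hy; push_cast at this; omega,
      fun hx hy => by have := hb X Y hu hd hx hy; push_cast at this; omega⟩
  · intro h
    exact ⟨fun X Y hu hd hx hy => by have := (h X Y hu hd).1 hx hy; push_cast; omega,
      fun X Y hu hd hx hy => by have := (h X Y hu hd).2 hx hy; push_cast; omega⟩

theorem ThreeConnected.dual [M.Finite] (h : ThreeConnected M) : ThreeConnected M✶ := by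
  rw [threeConnected_iff] at h ⊢
  intro X Y hu hd
  rw [dual_ground] at hu ⊢
  have hX : X ⊆ M.E := hu ▸ subset_union_left
  have hY : Y ⊆ M.E := hu ▸ subset_union_right
  have h1 := zr_dual M hX
  have h2 := zr_dual M hY
  have h3 := zr_dual M (Subset.refl M.E)
  have h4 : M.E \ X = Y := by
    rw [← hu, union_sdiff_left, hd.symm.sdiff_eq_left]
  have h5 : M.E \ Y = X := by
    rw [← hu, union_sdiff_right, hd.sdiff_eq_left]
  have h6 : M.E.ncard = X.ncard + Y.ncard := by
    rw [← hu, ncard_union_eq hd (M.ground_finite.subset hX) (M.ground_finite.subset hY)]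
  have h7 := (zr_rankFn M).empty
  rw [sdiff_self, h7] at h3
  rw [h4] at h1
  rw [h5] at h2
  obtain ⟨ha, hb⟩ := h X Y hu hd
  exact ⟨fun hx hy => by have := ha hx hy; omega, fun hx hy => by have := hb hx hy; omega⟩

end Bridge

/-! ### Minors isomorphic to `U_{2,4}` -/

section Minors
variable {α : Type u} {M N K : Matroid α}

theorem encard_pair_le (x y : α) : ({x, y} : Set α).encard ≤ 2 := by
  by_cases h : x = y
  · rw [h, pair_eq_singleton, encard_singleton]; decide
  · rw [encard_pair h]

theorem sdiff_pair_nontrivial {E : Set α} (h4 : 4 ≤ E.encard) (x y : α) :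
    (E \ {x, y}).Nontrivial := by
  by_contra hcon
  rw [not_nontrivial_iff, ← encard_le_one_iff_subsingleton] at hcon
  have h1 : E.encard ≤ (E \ {x, y}).encard + ({x, y} : Set α).encard :=
    (encard_le_encard (by intro z hz; by_cases z ∈ ({x, y} : Set α) <;> simp_all)).trans
      (encard_union_le _ _)
  have h2 : ({x, y} : Set α).encard ≤ 2 := encard_pair_le x y
  have h3 : (4 : ℕ∞) ≤ 1 + 2 := h4.trans (h1.trans (add_le_add hcon h2))
  norm_num at h3

theorem ThreeConnected.conn [M.RankFinite] (h : ThreeConnected M) (h4 : 4 ≤ M.E.encard) :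
    Conn M.E (zr M) := by
  rw [threeConnected_iff] at h
  have hr := zr_rankFn M
  have hne : ∀ x, (M.E \ {x}).Nonempty := fun x =>
    (sdiff_pair_nontrivial h4 x x).nonempty.mono (by simp)
  have hpart : ∀ T ⊆ M.E, T ∪ (M.E \ T) = M.E := fun T hT => union_sdiff_cancel hT
  refine ⟨?_, ?_, ?_, ?_⟩
  · intro x hx
    have h1 := (h {x} (M.E \ {x}) (hpart _ (by simpa)) disjoint_sdiff_right).1 (by simp) (hne x)
    have h2 := hr.single x
    have h3 := hr.mono (A := M.E \ {x}) (B := M.E) sdiff_subset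
    omega
  · intro x hx
    have h1 := (h {x} (M.E \ {x}) (hpart _ (by simpa)) disjoint_sdiff_right).1 (by simp) (hne x)
    have h2 := hr.single x
    omega
  · intro x hx y hy hxy
    have h1 := (h {x, y} (M.E \ {x, y}) (hpart _ (pair_subset hx hy)) disjoint_sdiff_right).2
      (nontrivial_pair hxy) (sdiff_pair_nontrivial h4 x y)
    have h3 := hr.mono (A := M.E \ {x, y}) (B := M.E) sdiff_subset
    omega
  · intro S T hST hT hnt hnt'
    have h1 := (h T (M.E \ T) (hpart _ hT) disjoint_sdiff_right).2 hnt hnt'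
    have h3 := hr.mono (A := M.E \ T) (B := S) (by
      intro z hz; exact (hST hz.1).resolve_right hz.2)
    omega

theorem isUnif_iff : IsUnif 2 4 K ↔
    K.E.encard = 4 ∧ ∀ I, K.Indep I ↔ I ⊆ K.E ∧ I.encard ≤ 2 := by
  have h3 : ∀ I : Set α, ¬ I.encard ≤ 2 ↔ (2 : ℕ∞) + 1 ≤ I.encard := by
    intro I
    rw [not_le, ENat.add_one_le_iff (by simp)]
  constructor
  · rintro ⟨h4, hC⟩
    refine ⟨by simpa using h4, fun I => ⟨fun hI => ⟨hI.subset_ground, ?_⟩, ?_⟩⟩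
    · by_contra hcon
      rw [h3] at hcon
      obtain ⟨C, hCI, hC3⟩ := exists_subset_encard_eq hcon
      have hcirc := (hC C).2 ⟨hCI.trans hI.subset_ground, by simpa using hC3⟩
      exact hcirc.1.not_indep (hI.subset hCI)
    · rintro ⟨hIE, hI2⟩
      by_contra hcon
      obtain ⟨C, hCI, hcirc⟩ := ((not_indep_iff hIE).1 hcon).exists_isCircuit_subset
      have h5 := ((hC C).1 hcirc).2
      have h6 := (encard_le_encard hCI).trans hI2
      rw [h5] at h6
      revert h6
      decide
  · rintro ⟨h4, hI⟩
    refine ⟨by simpa using h4, fun C => ⟨fun hC => ⟨hC.1.subset_ground, ?_⟩, ?_⟩⟩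
    · have h5 : ¬ C.encard ≤ 2 := fun h => hC.1.not_indep ((hI C).2 ⟨hC.1.subset_ground, h⟩)
      rw [h3] at h5
      obtain ⟨C', hC'C, hC'3⟩ := exists_subset_encard_eq h5
      have hdep : K.Dep C' := by
        refine ⟨fun h => ?_, hC'C.trans hC.1.subset_ground⟩
        have := ((hI C').1 h).2
        rw [hC'3] at this
        revert this
        decide
      rw [hC'C.antisymm (hC.2 hdep hC'C)] at hC'3
      simpa using hC'3
    · rintro ⟨hCE, hC3⟩
      have hC3' : C.encard = 2 + 1 := by simpa using hC3
      refine ⟨⟨fun h => ?_, hCE⟩, fun D hD hDC => ?_⟩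
      · have := ((hI C).1 h).2
        rw [hC3'] at this
        revert this
        decide
      · have h5 : ¬ D.encard ≤ 2 := fun h => hD.not_indep ((hI D).2 ⟨hD.subset_ground, h⟩)
        rw [h3, ← hC3'] at h5
        have hfin : C.Finite := by
          rw [← encard_lt_top_iff, hC3']
          decide
        exact ((hfin.subset hDC).eq_of_subset_of_encard_le hDC h5).symm.subset

theorem IsUnif.dual (h : IsUnif 2 4 K) : IsUnif 2 4 K✶ := by
  rw [isUnif_iff] at h ⊢
  obtain ⟨h4, hI⟩ := h
  have hbase : ∀ B ⊆ K.E, B.encard = 2 → K.IsBase B := by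
    intro B hBE hB
    refine isBase_iff_maximal_indep.2 ⟨(hI B).2 ⟨hBE, hB.le⟩, fun J hJ hBJ => ?_⟩
    have h5 := ((hI J).1 hJ).2
    have hfin : J.Finite := by
      rw [← encard_lt_top_iff]
      exact h5.trans_lt (by decide)
    exact ((hfin.subset hBJ).eq_of_subset_of_encard_le hBJ (by rw [hB]; exact h5)).symm.subset
  have hcompl : ∀ I ⊆ K.E, (K.E \ I).encard + I.encard = 4 := by
    intro I hI
    rw [← h4, encard_sdiff_add_encard_of_subset hI]
  refine ⟨h4, fun I => ?_⟩
  rw [dual_indep_iff_exists', dual_ground]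
  refine and_congr_right fun hIE => ⟨?_, fun hI2 => ?_⟩
  · rintro ⟨B, hB, hd⟩
    have hB2 : B.encard = 2 := by
      obtain ⟨B', hB'E, hB'⟩ := exists_subset_encard_eq (s := K.E) (k := 2)
        (by rw [h4]; decide)
      rw [hB.encard_eq_encard_of_isBase (hbase B' hB'E hB'), hB']
    have h5 := hcompl B hB.subset_ground
    rw [hB2] at h5
    have h6 : I ⊆ K.E \ B := subset_sdiff.2 ⟨hIE, hd⟩
    refine (encard_le_encard h6).trans ?_
    generalize (K.E \ B).encard = n at h5
    induction n using ENat.recTopCoe with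
    | top => exact absurd h5 (by simp)
    | coe n =>
      have h7 : n + 2 = 4 := by exact_mod_cast h5
      have h8 : n ≤ 2 := by omega
      exact_mod_cast h8
  · have h5 := hcompl I hIE
    have h6 : 2 ≤ (K.E \ I).encard := by
      by_contra hcon
      push Not at hcon
      have h7 : (K.E \ I).encard ≤ 1 := by
        rwa [← ENat.lt_add_one_iff (by simp), one_add_one_eq_two]
      have h8 := add_le_add h7 hI2
      rw [h5] at h8
      revert h8
      decide
    obtain ⟨B, hBE, hB2⟩ := exists_subset_encard_eq h6
    exact ⟨B, hbase B (hBE.trans sdiff_subset) hB2, (subset_sdiff.1 hBE).2.symm⟩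

theorem HasU24Minor.dual (h : HasU24Minor M) : HasU24Minor M✶ := by
  obtain ⟨K, ⟨C, D, rfl⟩, hK⟩ := h
  refine ⟨_, ⟨D \ C, C, ?_⟩, hK.dual⟩
  change (M ／ C ＼ D)✶ = (M✶ ／ (D \ C)) ＼ C
  rw [dual_contract_delete, delete_contract_comm']

/-- Four elements which form a `U_{2,4}` after the contraction of `C`. -/
structure WQuad (M : Matroid α) (C : Set α) (v : Fin 4 → α) : Prop where
  mem : ∀ i, v i ∈ M.E
  le : zr M (C ∪ range v) ≤ zr M C + 2
  pair : ∀ i j, i ≠ j → zr M C + 2 ≤ zr M (C ∪ {v i, v j})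

/-- The four elements of a `U_{2,4}`-minor, with the set contracted to obtain it. -/
theorem HasU24Minor.exists_wQuad [M.RankFinite] (h : HasU24Minor M) : ∃ C v, WQuad M C v := by
  obtain ⟨K, ⟨C, D, rfl⟩, hK⟩ := h
  rw [isUnif_iff] at hK
  obtain ⟨h4, hI⟩ := hK
  set K := del (con M C) D with hKdef
  have hfin : K.E.Finite := by
    rw [← encard_lt_top_iff, h4]; decide
  have hcard : Nat.card K.E = 4 := by
    have : K.E.ncard = 4 := by rw [ncard, h4]; rfl
    exact this
  have := hfin.to_subtype
  let f := Finite.equivFinOfCardEq hcard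
  have hrange : range (fun i => (f.symm i : α)) = K.E := by
    ext z
    constructor
    · rintro ⟨i, rfl⟩
      exact (f.symm i).2
    · intro hz
      exact ⟨f ⟨z, hz⟩, by simp⟩
  have hz : ∀ X ⊆ K.E, zr K X = zr M (X ∪ C) - zr M C := by
    intro X hX
    rw [hKdef, zr_del _ hX, zr_con]
  refine ⟨C, fun i => (f.symm i : α), fun i => (f.symm i).2.1.1, ?_, ?_⟩
  · have h1 := hz K.E le_rfl
    rw [hrange, union_comm]
    have h2 : zr K K.E ≤ 2 := by
      obtain ⟨I, hIb⟩ := K.exists_isBasis' K.E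
      have h3 := ((hI I).1 hIb.indep).2
      obtain ⟨n, hn, hn'⟩ := coe_zr (M := K) K.E
      rw [← hIb.eRk_eq_encard, hn] at h3
      rw [hn']
      exact_mod_cast h3
    linarith
  · intro i j hij
    have hsub : {(f.symm i : α), (f.symm j : α)} ⊆ K.E :=
      pair_subset (f.symm i).2 (f.symm j).2
    have h1 := hz _ hsub
    have hne : (f.symm i : α) ≠ f.symm j := by
      intro h
      exact hij (f.symm.injective (Subtype.ext h))
    have h2 := ((hI _).2 ⟨hsub, encard_pair_le _ _⟩).eRk_eq_encard
    rw [encard_pair hne] at h2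
    obtain ⟨n, hn, hn'⟩ := coe_zr (M := K) {(f.symm i : α), (f.symm j : α)}
    rw [hn] at h2
    have h3 : n = 2 := by exact_mod_cast h2
    rw [union_comm]
    rw [hn', h3] at h1
    push_cast at h1
    linarith

theorem WQuad.hasU24Minor [M.RankFinite] {C : Set α} {v : Fin 4 → α} (h : WQuad M C v) :
    HasU24Minor M := by
  have hr := zr_rankFn M
  have hinj : Function.Injective v := by
    intro i j hij
    by_contra hne
    have h1 := h.pair i j hne
    rw [hij, pair_eq_singleton, union_singleton] at h1
    linarith [hr.insert_le (v j) C]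
  have hC : ∀ i, v i ∉ C := by
    intro i hi
    obtain ⟨j, hj⟩ : ∃ j, i ≠ j := (exists_ne i).imp fun _ h => h.symm
    have h1 := h.pair i j hj
    have h2 := hr.mono (A := C ∪ {v i, v j}) (B := insert (v j) C) (by
      rintro z (hz | hz | hz)
      · exact Or.inr hz
      · rw [hz]; exact Or.inr hi
      · exact Or.inl hz)
    linarith [hr.insert_le (v j) C]
  set K := del (con M C) (M.E \ range v) with hKdef
  have hKE : K.E = range v := by
    rw [hKdef, del_ground, con_ground]
    ext z
    constructor
    · rintro ⟨hz, hz'⟩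
      by_contra hcon
      exact hz' ⟨hz.1, hcon⟩
    · rintro ⟨i, rfl⟩
      exact ⟨⟨h.mem i, hC i⟩, fun hz => hz.2 (mem_range_self i)⟩
  have hz : ∀ X ⊆ K.E, zr K X = zr M (X ∪ C) - zr M C := by
    intro X hX
    rw [hKdef, zr_del _ hX, zr_con]
  have hpair : ∀ i j, i ≠ j → K.Indep {v i, v j} := by
    intro i j hij
    have hne : v i ≠ v j := fun h => hij (hinj h)
    rw [indep_iff_eRk_eq_encard, encard_pair hne]
    have hsub : {v i, v j} ⊆ K.E := by
      rw [hKE]; exact pair_subset (mem_range_self i) (mem_range_self j)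
    have h1 := hz _ hsub
    have h2 := h.pair i j hij
    rw [union_comm] at h1
    obtain ⟨n, hn, hn'⟩ := coe_zr (M := K) {v i, v j}
    have h3 := K.eRk_le_encard {v i, v j}
    rw [encard_pair hne, hn] at h3
    have h4 : n ≤ 2 := by exact_mod_cast h3
    have h5 : n = 2 := by omega
    rw [hn, h5]
    rfl
  refine ⟨K, ⟨C, _, hKdef⟩, isUnif_iff.2 ⟨?_, fun I => ⟨fun hI => ⟨hI.subset_ground, ?_⟩, ?_⟩⟩⟩
  · rw [hKE, ← image_univ, hinj.encard_image, encard_univ]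
    simp
  · obtain ⟨n, hn, hn'⟩ := coe_zr (M := K) I
    rw [← hI.eRk_eq_encard, hn]
    have h1 := hz I hI.subset_ground
    have h2 := hr.mono (A := I ∪ C) (B := C ∪ range v) (by
      rw [union_comm]
      exact union_subset_union_right _ (hKE ▸ hI.subset_ground))
    have h3 := h.le
    have h4 : n ≤ 2 := by omega
    exact_mod_cast h4
  · rintro ⟨hIE, hI2⟩
    rw [hKE] at hIE
    by_cases hnt : I.Nontrivial
    · obtain ⟨x, hx, y, hy, hxy⟩ := hnt
      obtain ⟨i, rfl⟩ := hIE hx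
      obtain ⟨j, rfl⟩ := hIE hy
      have hfin : I.Finite := by
        rw [← encard_lt_top_iff]
        exact hI2.trans_lt (by decide)
      rw [← (toFinite {v i, v j}).eq_of_subset_of_encard_le (pair_subset hx hy) (by rwa [encard_pair hxy])]
      exact hpair i j (fun h => hxy (congrArg v h))
    · rw [not_nontrivial_iff] at hnt
      rcases hnt.eq_empty_or_singleton with rfl | ⟨x, rfl⟩
      · exact K.empty_indep
      · obtain ⟨i, rfl⟩ := hIE rfl
        obtain ⟨j, hj⟩ : ∃ j, i ≠ j := (exists_ne i).imp fun _ h => h.symm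
        exact (hpair i j hj).subset (by simp)

theorem HasU24Minor.four_le (h : HasU24Minor M) : 4 ≤ M.E.encard := by
  obtain ⟨K, ⟨C, D, rfl⟩, hK⟩ := h
  rw [isUnif_iff] at hK
  rw [← hK.1]
  exact encard_le_encard (sdiff_subset.trans sdiff_subset)

/-- A maximal extension of the contracted set makes the four elements together with it spanning. -/
theorem WQuad.exists_quad [M.Finite] {C : Set α} {v : Fin 4 → α} (h : WQuad M C v) :
    ∃ L, Quad M.E (zr M) L v := by
  have hr := zr_rankFn M
  obtain ⟨L, hL⟩ : ∃ L, Maximal (fun L : Set α => L ⊆ M.E ∧ WQuad M L v) L := by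
    have hfin : {L : Set α | L ⊆ M.E ∧ WQuad M L v}.Finite :=
      M.ground_finite.finite_subsets.subset (fun L hL => hL.1)
    refine hfin.exists_maximal ⟨C ∩ M.E, inter_subset_right, h.mem, ?_, ?_⟩
    · have h1 := h.le
      have h2 : zr M (C ∩ M.E) = zr M C := by rw [zr, zr, eRk_inter_ground]
      have h3 := hr.mono (A := C ∩ M.E ∪ range v) (B := C ∪ range v)
        (union_subset_union_left _ inter_subset_left)
      linarith
    · intro i j hij
      have h2 : zr M (C ∩ M.E) = zr M C := by rw [zr, zr, eRk_inter_ground]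
      have h4 := h.pair i j hij
      have h3 := hr.absorb (A := C ∩ M.E) (B := C ∩ M.E ∪ {v i, v j}) (S := C) subset_union_left
        (by rw [h2]; exact hr.mono (union_subset inter_subset_left le_rfl))
      have h5 := hr.mono (A := C ∪ {v i, v j}) (B := C ∩ M.E ∪ {v i, v j} ∪ C)
        (union_subset subset_union_right (subset_union_right.trans subset_union_left))
      linarith
  obtain ⟨⟨hLE, hq⟩, hmax⟩ := hL
  have hspan : ∀ i j, i ≠ j → zr M (L ∪ range v) ≤ zr M (L ∪ {v i, v j}) :=
    fun i j hij => hq.le.trans (hq.pair i j hij)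
  -- an element skew to `L` and the four points could be added to `L`
  have hfull : zr M M.E ≤ zr M (L ∪ range v) := by
    by_contra! hlt
    obtain ⟨p, hp, hpr⟩ := hr.ext hlt
    have h1 := hr.insert_le p L
    have hw : WQuad M (insert p L) v := by
      refine ⟨hq.mem, ?_, ?_⟩
      · have h2 := hr.sub (A := L ∪ range v) (B := insert p L) (C := L)
          (D := insert p (L ∪ range v)) subset_union_left (subset_insert _ _)
          (insert_subset (Or.inr (Or.inl rfl)) subset_union_left)
        rw [insert_union]
        linarith [hq.le]
      · intro i j hij
        have h2 := hr.absorb (A := L ∪ {v i, v j}) (B := insert p L ∪ {v i, v j})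
          (S := L ∪ range v) (union_subset_union_left _ (subset_insert _ _)) (by
            refine le_trans (hr.mono (union_subset (union_subset_union_right _ ?_) le_rfl))
              (hspan i j hij)
            exact pair_subset (mem_range_self i) (mem_range_self j))
        have h3 := hr.mono (A := insert p (L ∪ range v))
          (B := insert p L ∪ {v i, v j} ∪ (L ∪ range v))
          (insert_subset (Or.inl (Or.inl (Or.inl rfl))) subset_union_right)
        linarith [hq.pair i j hij, hspan i j hij, hr.mono (A := L ∪ {v i, v j})
          (B := L ∪ range v) (union_subset_union_right _
            (pair_subset (mem_range_self i) (mem_range_self j)))]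
    have h2 := hmax ⟨insert_subset hp hLE, hw⟩ (subset_insert p L)
    rw [insert_eq_of_mem (mem_union_left _ (h2 (mem_insert _ _)))] at hpr
    linarith
  refine ⟨L, hLE, hq.mem, ?_, fun i j hij => hfull.trans (hspan i j hij)⟩
  have h1 := hq.pair 0 1 (by decide)
  have h2 := zr_le_ground M (L ∪ {v 0, v 1})
  linarith

end Minors

/-! ### Series pairs -/

section Series
variable {α : Type u} {M N : Matroid α}

/-- If `S` spans, then `f` completes a circuit with elements of `S`. -/
theorem exists_circuit [M.RankFinite] {S : Set α} {f : α} (hf : f ∈ M.E) (hfS : f ∉ S)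
    (hS : S ⊆ M.E) (hr : zr M M.E ≤ zr M S) : ∃ C, Circuit M C ∧ f ∈ C ∧ C ⊆ insert f S := by
  have hsp : M.Spanning S := by
    rw [spanning_iff_eRk_le, ← eRk_ground]
    obtain ⟨a, ha, ha'⟩ := coe_zr (M := M) M.E
    obtain ⟨b, hb, hb'⟩ := coe_zr (M := M) S
    rw [ha', hb'] at hr
    rw [ha, hb]
    exact_mod_cast hr
  obtain ⟨B, hB, hBS⟩ := hsp.exists_isBase_subset
  exact ⟨M.fundCircuit f B, hB.fundCircuit_isCircuit hf (fun h => hfS (hBS h)),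
    M.mem_fundCircuit f B, (M.fundCircuit_subset_insert f B).trans (insert_subset_insert hBS)⟩

theorem Circuit.zr_insert_le [M.RankFinite] {C S : Set α} {f : α} (hC : Circuit M C) (hf : f ∈ C)
    (hS : C \ {f} ⊆ S) : zr M (insert f S) ≤ zr M S := by
  have h1 : zr M ((C \ {f}) ∪ {f}) ≤ zr M (C \ {f}) := by
    have h2 : f ∈ M.closure (C \ {f}) := IsCircuit.mem_closure_sdiff_singleton_of_mem hC hf
    rw [zr, zr, union_singleton, ← eRk_closure_eq, closure_insert_eq_of_mem_closure h2,
      eRk_closure_eq]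
  have h3 := (zr_rankFn M).absorb hS h1
  rwa [union_singleton] at h3

theorem not_seriesPair [M.RankFinite] {f g : α} (hfg : f ≠ g) (hf : f ∈ M.E)
    (h : zr M M.E ≤ zr M (M.E \ {f, g})) : ¬ SeriesPair M f g := by
  intro hs
  obtain ⟨C, hC, hfC, hCs⟩ := exists_circuit hf (by simp) sdiff_subset h
  have hg : g ∈ C := (hs.1 C hC).1 hfC
  rcases hCs hg with h | h
  · exact hfg h.symm
  · exact h.2 (Or.inr rfl)

theorem seriesPair_of_lt [M.RankFinite] {f g : α} (hf : f ∈ M.E)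
    (h : zr M (M.E \ {f, g}) < zr M M.E)
    (h1 : zr M M.E ≤ zr M (M.E \ {f})) (h2 : zr M M.E ≤ zr M (M.E \ {g})) :
    SeriesPair M f g := by
  have key : ∀ f g, zr M (M.E \ {f, g}) < zr M M.E → zr M M.E ≤ zr M (M.E \ {g}) →
      ∀ C, Circuit M C → f ∈ C → g ∈ C := by
    intro f g h h2 C hC hfC
    by_contra hgC
    have h3 := hC.zr_insert_le hfC (S := M.E \ {f, g}) (by
      intro z hz
      refine ⟨hC.1.subset_ground hz.1, ?_⟩
      rintro (rfl | rfl)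
      · exact hz.2 rfl
      · exact hgC hz.1)
    have h4 := (zr_rankFn M).mono (A := M.E \ {g}) (B := insert f (M.E \ {f, g})) (by
      intro z hz
      by_cases hzf : z = f
      · exact Or.inl hzf
      · exact Or.inr ⟨hz.1, fun h => h.elim hzf hz.2⟩)
    linarith
  have hfg := key f g h h2
  have hgf := key g f (by rwa [pair_comm]) h1
  obtain ⟨C, hC, hfC, -⟩ := exists_circuit hf (by simp) sdiff_subset h1
  exact ⟨fun C hC => ⟨hfg C hC, hgf C hC⟩, C, hC, hfC, hfg C hC hfC⟩

/-- The elements in series with `f` form a series class; the hypothesis says that `f` is in a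
circuit. -/
theorem isSeriesClass_setOf {f : α} (hf : SeriesPair M f f) :
    IsSeriesClass M {g | SeriesPair M f g} := by
  refine ⟨⟨⟨f, hf⟩, fun g hg h hh => ?_⟩, fun T hT hsub g hg => ?_⟩
  · refine ⟨fun C hC => (hg.1 C hC).symm.trans (hh.1 C hC), ?_⟩
    obtain ⟨C, hC, hfC, hgC⟩ := hg.2
    exact ⟨C, hC, hgC, (hh.1 C hC).1 hfC⟩
  · exact hT.2 f (hsub hf) g hg

theorem seriesPair_self [M.RankFinite] {f : α} (hf : f ∈ M.E)
    (h1 : zr M M.E ≤ zr M (M.E \ {f})) : SeriesPair M f f := by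
  obtain ⟨C, hC, hfC, -⟩ := exists_circuit hf (by simp) sdiff_subset h1
  exact ⟨fun _ _ => Iff.rfl, C, hC, hfC, hfC⟩

theorem SeriesPair.mem_ground {f g : α} (h : SeriesPair M f g) : g ∈ M.E := by
  obtain ⟨C, hC, -, hg⟩ := h.2
  exact hC.1.subset_ground hg

end Series

/-! ### Simplification after the contraction of an element -/

section Contract
variable {α : Type u} {E E' : Set α} {r : Set α → ℤ} {e : α}

/-- `E'` is the ground set of a simplification of the contraction of `e`, in terms of the rank
function before the contraction. -/
structure Simp (E : Set α) (r : Set α → ℤ) (e : α) (E' : Set α) : Prop where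
  mem : e ∈ E
  sub : E' ⊆ E \ {e}
  indep : ∀ f ∈ E', ∀ g ∈ E', f ≠ g → 3 ≤ r {f, g, e}
  par : ∀ f ∈ E, f ≠ e → ∃ f' ∈ E', r {f, f', e} ≤ 2

/-- In the contraction of `e`, an element `g` parallel to an element `f` of `A` adds nothing to `A`. -/
theorem Simp.absorb (hr : RankFn r) (hc : Conn3 E r) (hs : Simp E r e E') {f g : α} {A : Set α}
    (hf : f ∈ E) (hfe : f ≠ e) (hfg : r {g, f, e} ≤ 2) (hfA : f ∈ A)
    (heA : e ∈ A) : r (insert g A) ≤ r A := by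
  have h1 := hr.absorb (A := {f, e}) (B := A) (S := {g}) (pair_subset hfA heA) (by
    refine le_trans ?_ (hc.pair f hf e hs.mem hfe)
    rw [union_singleton]
    exact hfg)
  rwa [union_singleton] at h1

theorem Simp.ground (hr : RankFn r) (hc : Conn3 E r) (hs : Simp E r e E') :
    r (insert e E') = r E := by
  apply le_antisymm
  · exact hr.mono (insert_subset hs.mem (hs.sub.trans sdiff_subset))
  · refine le_trans (hr.mono subset_union_right) (hr.span (A := insert e E') (S := E) ?_)
    intro p hp
    by_cases hpe : p = e
    · rw [hpe, insert_eq_of_mem (mem_insert _ _)]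
    obtain ⟨p', hp', h⟩ := hs.par p hp hpe
    exact hs.absorb hr hc (hs.sub hp').1 (hs.sub hp').2 h (Or.inr hp') (Or.inl rfl)

/-- If there is no vertical separation at `e`, then the simplification of the contraction of `e` is
3-connected. A low-order separation `(X, Y)` of the simplification would extend to a vertical
separation `(P, Q)`, with `P` the closure of `X` and `e`. -/
theorem Simp.conn (hr : RankFn r) (hc : Conn3 E r) (hs : Simp E r e E')
    (hno : ∀ P Q, ¬ Vert E r e P Q) {X Y : Set α} (hXY : X ∪ Y = E') :
    (X.Nonempty → Y.Nonempty → r E + 2 ≤ r (insert e X) + r (insert e Y)) ∧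
    (X.Nontrivial → Y.Nontrivial → r E + 3 ≤ r (insert e X) + r (insert e Y)) := by
  have hXE : ∀ x ∈ X, x ∈ E ∧ x ≠ e := fun x hx => hs.sub (hXY ▸ Or.inl hx)
  have hYE : ∀ x ∈ Y, x ∈ E ∧ x ≠ e := fun x hx => hs.sub (hXY ▸ Or.inr hx)
  have hX' : X ⊆ E' := hXY ▸ subset_union_left
  have hY' : Y ⊆ E' := hXY ▸ subset_union_right
  set P : Set α := {z ∈ E | r (insert z (insert e X)) ≤ r (insert e X)} with hP
  set Q : Set α := insert e (E \ P) with hQ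
  have hXP : insert e X ⊆ P := by
    intro z hz
    refine ⟨?_, by rw [insert_eq_of_mem hz]⟩
    rcases hz with rfl | hz
    · exact hs.mem
    · exact (hXE z hz).1
  have heP : e ∈ P := hXP (Or.inl rfl)
  have hrP : r P ≤ r (insert e X) :=
    le_trans (hr.mono subset_union_right) (hr.span (A := insert e X) (S := P) (fun p hp => hp.2))
  have hrQ : r Q ≤ r (insert e Y) := by
    refine le_trans (hr.mono subset_union_right) (hr.span (A := insert e Y) (S := Q) ?_)
    rintro p (rfl | ⟨hpE, hpP⟩)
    · rw [insert_eq_of_mem (mem_insert _ _)]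
    have hpe : p ≠ e := by rintro rfl; exact hpP heP
    obtain ⟨p', hp', h⟩ := hs.par p hpE hpe
    have hp'E := hs.sub hp'
    rw [← hXY] at hp'
    rcases hp' with hp' | hp'
    · exact absurd ⟨hpE, hs.absorb hr hc hp'E.1 hp'E.2 h (Or.inr hp') (Or.inl rfl)⟩ hpP
    · exact hs.absorb hr hc hp'E.1 hp'E.2 h (Or.inr hp') (Or.inl rfl)
  have hPE : P ⊆ E := fun z hz => hz.1
  have hQE : Q ⊆ E := insert_subset hs.mem sdiff_subset
  have hPQ : P ∪ Q = E := by
    apply Subset.antisymm (union_subset hPE hQE)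
    intro z hz
    by_cases hzP : z ∈ P
    · exact Or.inl hzP
    · exact Or.inr (Or.inr ⟨hz, hzP⟩)
  have hPQ' : P ∩ Q = {e} := by
    ext z
    constructor
    · rintro ⟨hz, rfl | hz'⟩
      · rfl
      · exact absurd hz hz'.2
    · rintro rfl
      exact ⟨heP, Or.inl rfl⟩
  have h2 : ∀ Z : Set α, Z.Nonempty → (∀ z ∈ Z, z ∈ E ∧ z ≠ e) → 2 ≤ r (insert e Z) := by
    rintro Z ⟨z, hz⟩ hZ
    refine (hc.pair z (hZ z hz).1 e hs.mem (hZ z hz).2).trans (hr.mono ?_)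
    exact pair_subset (Or.inr hz) (Or.inl rfl)
  have h3 : ∀ Z : Set α, Z.Nontrivial → Z ⊆ E' → 3 ≤ r (insert e Z) := by
    rintro Z ⟨z, hz, w, hw, hzw⟩ hZ
    refine (hs.indep z (hZ hz) w (hZ hw) hzw).trans (hr.mono ?_)
    exact insert_subset (Or.inr hz) (pair_subset (Or.inr hw) (Or.inl rfl))
  -- either the first side spans, or the second side has a further element
  have hQnt : r E ≤ r (insert e X) ∨ Q.Nontrivial := by
    by_cases h : ∃ z ∈ E, z ∉ P
    · right
      obtain ⟨z, hz, hzP⟩ := h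
      exact ⟨e, Or.inl rfl, z, Or.inr ⟨hz, hzP⟩, by rintro rfl; exact hzP heP⟩
    · left
      push Not at h
      exact (hr.mono (fun z hz => h z hz)).trans hrP
  have hsub : P \ {e} ⊆ E \ Q := by
    intro z hz
    refine ⟨hPE hz.1, ?_⟩
    rintro (h | h)
    · exact hz.2 h
    · exact h.2 hz.1
  have hXPe : X ⊆ P \ {e} := fun z hz => ⟨hXP (Or.inr hz), (hXE z hz).2⟩
  constructor
  · intro hX hY
    have hx2 := h2 X hX hXE
    have hy2 := h2 Y hY hYE
    rcases hQnt with h | hQnt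
    · linarith
    by_cases hnt : (E \ Q).Nontrivial
    · have := hc.sep P Q hPQ.symm.subset hQE hQnt hnt
      linarith
    · obtain ⟨x, hx⟩ := hX
      rw [not_nontrivial_iff] at hnt
      have h4 := hc.del1 x (hXE x hx).1
      have h5 := hr.mono (A := E \ {x}) (B := Q) (by
        intro z hz
        by_contra hzQ
        exact hz.2 (hnt ⟨hz.1, hzQ⟩ (hsub (hXPe hx))))
      linarith
  · intro hX hY
    have hx3 := h3 X hX hX'
    have hy3 := h3 Y hY hY'
    rcases hQnt with h | hQnt
    · linarith
    have h4 := hc.sep P Q hPQ.symm.subset hQE hQnt (hX.mono (hXPe.trans hsub))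
    by_contra! hlt
    by_cases hq3 : 3 ≤ r Q
    · refine hno P Q ⟨hPQ, hPQ', ?_, hq3, by linarith⟩
      exact hx3.trans (hr.mono hXP)
    · linarith

/-- A `U_{2,4}` that survives the contraction of `e` survives the simplification. -/
theorem Simp.quad (hr : RankFn r) (hc : Conn3 E r) (hs : Simp E r e E') {L : Set α}
    {v : Fin 4 → α} (hq : Quad E r L v) (he : e ∈ L) :
    ∃ L' ⊆ E', ∃ v' : Fin 4 → α, (∀ i, v' i ∈ E') ∧ r E - 2 = r (insert e L') ∧
      ∀ i j, i ≠ j → r E ≤ r (insert e (L' ∪ {v' i, v' j})) := by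
  have hve : ∀ i, v i ≠ e := by
    intro i hi
    obtain ⟨j, hj⟩ : ∃ j, i ≠ j := (exists_ne i).imp fun _ h => h.symm
    have h1 := hq.pair i j hj
    have h2 := hr.mono (A := L ∪ {v i, v j}) (B := insert (v j) L) (by
      rintro z (hz | hz | hz)
      · exact Or.inr hz
      · rw [hz, hi]; exact Or.inr he
      · exact Or.inl hz)
    linarith [hr.insert_le (v j) L, hq.le]
  choose v' hv' hvv using fun i => hs.par (v i) (hq.mem i) (hve i)
  set L' : Set α := {f ∈ E' | r (insert f L) ≤ r L} with hL'
  have hL'le : r (insert e L') ≤ r L := by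
    have h1 := hr.span (A := L) (S := L') (fun p hp => hp.2)
    refine le_trans (hr.mono ?_) h1
    exact insert_subset (Or.inl he) subset_union_right
  have hLle : ∀ p ∈ L, ∀ A, insert e L' ⊆ A → r (insert p A) ≤ r A := by
    intro p hp A hA
    by_cases hpe : p = e
    · rw [hpe, insert_eq_of_mem (hA (mem_insert _ _))]
    obtain ⟨p', hp', h⟩ := hs.par p (hq.sub hp) hpe
    have hp'E := hs.sub hp'
    refine hs.absorb hr hc hp'E.1 hp'E.2 h (hA (Or.inr ⟨hp', ?_⟩)) (hA (mem_insert _ _))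
    refine hs.absorb hr hc (hq.sub hp) hpe ?_ hp he
    rwa [insert_comm]
  refine ⟨L', fun z hz => hz.1, v', hv', ?_, ?_⟩
  · have h1 := hr.span (A := insert e L') (S := L) (fun p hp => hLle p hp _ le_rfl)
    have h2 := hr.mono (A := L) (B := insert e L' ∪ L) subset_union_right
    have h3 := hq.pair 0 1 (by decide)
    have h4 := hr.insert_le (v 1) L
    have h5 := hr.insert_le (v 0) (insert (v 1) L)
    have h6 := hr.mono (A := L ∪ {v 0, v 1}) (B := insert (v 0) (insert (v 1) L)) (by
      rintro z (hz | hz | hz)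
      · exact Or.inr (Or.inr hz)
      · exact Or.inl hz
      · exact Or.inr (Or.inl hz))
    linarith [hq.le]
  · intro i j hij
    have h1 := hr.span (A := insert e (L' ∪ {v' i, v' j})) (S := L ∪ {v i, v j}) (by
      have hv : ∀ k, v' k ∈ insert e (L' ∪ {v' i, v' j}) →
          r (insert (v k) (insert e (L' ∪ {v' i, v' j}))) ≤ r (insert e (L' ∪ {v' i, v' j})) :=
        fun k hk => hs.absorb hr hc (hs.sub (hv' k)).1 (hs.sub (hv' k)).2 (hvv k) hk
          (mem_insert _ _)
      rintro p (hp | rfl | rfl)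
      · exact hLle p hp _ (insert_subset_insert subset_union_left)
      · exact hv i (Or.inr (Or.inr (Or.inl rfl)))
      · exact hv j (Or.inr (Or.inr (Or.inr rfl))))
    exact (hq.pair i j hij).trans ((hr.mono subset_union_right).trans h1)

end Contract

/-! ### Finite matroids -/

section Finite
variable {α : Type u} {M N N' : Matroid α}

/-- In infinite rank, the inequality defining a 2-separation holds trivially, since its right-hand
side is infinite. -/
theorem ThreeConnected.rankFinite (h : ThreeConnected N) (h4 : 4 ≤ N.E.encard) :
    N.RankFinite := by
  by_contra hcon
  have htop : N.eRank = ⊤ := by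
    by_contra h
    exact hcon ((eRank_ne_top_iff N).1 h)
  obtain ⟨T, hT, hT2⟩ := exists_subset_encard_eq (s := N.E) (k := 2)
    (le_trans (by decide) h4)
  obtain ⟨x, y, hxy, rfl⟩ := encard_eq_two.1 hT2
  refine h.2 ⟨{x, y}, N.E \ {x, y}, union_sdiff_cancel hT, disjoint_sdiff_right, hT2.ge, ?_, ?_⟩
  · have h1 := sdiff_pair_nontrivial h4 x y
    rw [← one_lt_encard_iff_nontrivial, ← ENat.add_one_le_iff (by simp)] at h1
    exact le_trans (by decide) h1
  · rw [eRank_eq, htop, top_add]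
    exact le_top

/-- In terms of the dual matroid `M = N✶`, the elements of a cosimplification of `N ＼ e` are the
elements of a simplification of `M ／ e`. -/
theorem simp_of_cosimplification [N.Finite] {e : α} {D : Set α} (hc : Conn N.E (zr N✶))
    (he : e ∈ N.E) (hS : ∀ S, IsSeriesClass (del N {e}) S → ∃ x ∈ S, S \ D = {x}) :
    Simp N.E (zr N✶) e ((N.E \ {e}) \ D) := by
  have hr := zr_rankFn N✶
  have hg : (del N {e}).E = N.E \ {e} := rfl
  have hsub : ∀ T : Set α, zr (del N {e}) ((N.E \ {e}) \ T) = zr N (N.E \ (insert e T)) := by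
    intro T
    rw [zr_del _ sdiff_subset, sdiff_sdiff, singleton_union]
  have h0 : zr (del N {e}) (del N {e}).E = zr N N.E := by
    have h1 := zr_dual N (X := {e}) (by simpa)
    rw [hc.one e he, ncard_singleton] at h1
    rw [hg, zr_del _ le_rfl]
    push_cast at h1
    linarith
  have h1 : ∀ f ∈ N.E, f ≠ e →
      zr (del N {e}) (del N {e}).E ≤ zr (del N {e}) ((del N {e}).E \ {f}) := by
    intro f hf hfe
    have h2 := zr_dual N (X := {e, f}) (pair_subset he hf)
    rw [ncard_pair hfe.symm] at h2
    have h3 := hc.pair e he f hf hfe.symm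
    rw [h0, hg, hsub]
    push_cast at h2
    linarith
  have h2 : ∀ f ∈ N.E, ∀ g ∈ N.E, f ≠ e → g ≠ e → f ≠ g →
      zr N✶ {f, g, e} + zr N N.E = zr (del N {e}) ((del N {e}).E \ {f, g}) + 3 := by
    intro f hf g hg' hfe hge hfg
    have h3 := zr_dual N (X := {e, f, g}) (insert_subset he (pair_subset hf hg'))
    have h4 : ({e, f, g} : Set α).ncard = 3 := by
      rw [ncard_insert_of_notMem (by simp [hfe.symm, hge.symm]), ncard_pair hfg]
    rw [h4] at h3
    have h5 : ({f, g, e} : Set α) = {e, f, g} := by grind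
    rw [hg, hsub, h5]
    exact_mod_cast h3
  refine ⟨he, sdiff_subset, ?_, ?_⟩
  · intro f hf g hg' hfg
    by_contra! hlt
    have h3 := h2 f hf.1.1 g hg'.1.1 hf.1.2 hg'.1.2 hfg
    have hs : SeriesPair (del N {e}) f g := seriesPair_of_lt hf.1 (by rw [h0]; linarith)
      (h1 f hf.1.1 hf.1.2) (h1 g hg'.1.1 hg'.1.2)
    have hsf := seriesPair_self (M := del N {e}) hf.1 (h1 f hf.1.1 hf.1.2)
    obtain ⟨x, -, hx⟩ := hS _ (isSeriesClass_setOf hsf)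
    have hfx : f ∈ ({x} : Set α) := hx ▸ ⟨hsf, hf.2⟩
    have hgx : g ∈ ({x} : Set α) := hx ▸ ⟨hs, hg'.2⟩
    exact hfg (hfx.trans hgx.symm)
  · intro f hf hfe
    have hsf := seriesPair_self (M := del N {e}) ⟨hf, hfe⟩ (h1 f hf hfe)
    obtain ⟨x, hxS, hx⟩ := hS _ (isSeriesClass_setOf hsf)
    have hxD : x ∉ D := by
      have : x ∈ ({x} : Set α) := rfl
      rw [← hx] at this
      exact this.2
    have hxE : x ∈ N.E \ {e} := SeriesPair.mem_ground hxS
    refine ⟨x, ⟨hxE, hxD⟩, ?_⟩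
    by_cases hfx : f = x
    · rw [hfx, insert_eq_of_mem (mem_insert _ _)]
      linarith [hr.insert_le x {e}, hr.single e]
    · by_contra! hlt
      have h3 := h2 f hf x hxE.1 hfe hxE.2 hfx
      exact not_seriesPair hfx (M := del N {e}) ⟨hf, hfe⟩ (by rw [h0]; linarith) hxS

/-- The case of a finite ground set: dually, contract the element given by `Quad.exists_good` and
simplify. -/
theorem exists_of_finite (hfin : N.E.Finite) (h3 : ThreeConnected N)
    (hU : HasU24Minor N) (hcr : 3 ≤ eRank N✶) :
    ∃ e ∈ N.E, ∀ N', IsCosimplification (del N {e}) N' →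
      ThreeConnected N' ∧ HasU24Minor N' := by
  have : N.Finite := ⟨hfin⟩
  have hr := zr_rankFn N✶
  have hc : Conn3 N.E (zr N✶) := { h3.dual.conn hU.dual.four_le with fin := hfin }
  obtain ⟨C, w, hw⟩ := hU.dual.exists_wQuad
  obtain ⟨L, hL⟩ := hw.exists_quad
  have hE : 3 ≤ zr N✶ N.E := by
    obtain ⟨n, hn, hn'⟩ := coe_zr (M := N✶) N.E
    rw [eRank, eRk_eq, dual_ground, hn] at hcr
    rw [hn']
    exact_mod_cast hcr
  obtain ⟨e, L, v, hq, heL, hno⟩ := Quad.exists_good hr hc hE hL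
  have he : e ∈ N.E := hq.sub heL
  refine ⟨e, he, ?_⟩
  rintro _ ⟨D, -, rfl, -, hS⟩
  have hs := simp_of_cosimplification hc.toConn he hS
  set E' := (N.E \ {e}) \ D
  -- the dual of the cosimplification is the simplification of the contraction
  set K := del (con N✶ {e}) D with hK
  have hdual : con (del N {e}) D = K✶ := by
    rw [hK, con, con, dual_dual]
  have hKE : K.E = E' := rfl
  have : K.Finite := ⟨hKE ▸ hfin.subset (sdiff_subset.trans sdiff_subset)⟩
  have hz : ∀ Z ⊆ E', zr K Z = zr N✶ (insert e Z) - 1 := by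
    intro Z hZ
    rw [hK, zr_del _ hZ, zr_con, union_singleton, hc.one e he]
  have hK3 : ThreeConnected K := by
    rw [threeConnected_iff]
    intro X Y hXY hd
    have h1 := hs.conn hr hc hno hXY
    have h2 := hs.ground hr hc
    have h3 := hz X (hXY.subset.trans' subset_union_left)
    have h4 := hz Y (hXY.subset.trans' subset_union_right)
    have h5 := hz E' le_rfl
    rw [hKE, h3, h4, h5, h2]
    exact ⟨fun hX hY => by linarith [h1.1 hX hY], fun hX hY => by linarith [h1.2 hX hY]⟩
  have hKU : HasU24Minor K := by
    obtain ⟨L', hL', v', hv', h1, h2⟩ := hs.quad hr hc hq heL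
    refine WQuad.hasU24Minor (C := L') (v := v') ⟨hv', ?_, ?_⟩
    · rw [hz _ hL', hz _ (union_subset hL' (range_subset_iff.2 hv')), ← h1]
      have := hr.mono (A := insert e (L' ∪ range v')) (B := N.E) (insert_subset he
        ((union_subset hL' (range_subset_iff.2 hv')).trans (sdiff_subset.trans sdiff_subset)))
      linarith
    · intro i j hij
      rw [hz _ hL', hz _ (union_subset hL' (pair_subset (hv' i) (hv' j))), ← h1]
      linarith [h2 i j hij]
  rw [hdual]
  exact ⟨hK3.dual, hKU.dual⟩

end Finite

/-! ### Infinite matroids of finite rank -/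

section Infinite
variable {α : Type u} {N : Matroid α}

/-- A finite set can be enlarged to a finite set that still spans after the removal of any single
element. -/
theorem exists_robust [N.RankFinite] (hc : Conn N.E (zr N)) {F₀ : Set α} (hF₀ : F₀.Finite)
    (hF₀E : F₀ ⊆ N.E) :
    ∃ F, F₀ ⊆ F ∧ F.Finite ∧ F ⊆ N.E ∧ ∀ z, zr N N.E ≤ zr N (F \ {z}) := by
  have hr := zr_rankFn N
  obtain ⟨B, hBE, hB, hBr⟩ := zr_exists_finite N N.E
  choose b hbE hb hbr using fun x => zr_exists_finite N (N.E \ {x})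
  refine ⟨F₀ ∪ (B ∪ ⋃ x ∈ B, b x), subset_union_left, ?_, ?_, ?_⟩
  · exact hF₀.union (hB.union (hB.biUnion fun x _ => hb x))
  · refine union_subset hF₀E (union_subset hBE (iUnion₂_subset fun x _ => ?_))
    exact (hbE x).trans sdiff_subset
  · intro z
    by_cases hz : z ∈ B
    · refine (hc.del1 z (hBE hz)).trans ((hbr z).trans (hr.mono fun w hw => ⟨?_, (hbE z hw).2⟩))
      exact Or.inr (Or.inr (mem_iUnion₂.2 ⟨z, hz, hw⟩))
    · refine hBr.trans (hr.mono fun w hw => ⟨Or.inr (Or.inl hw), ?_⟩)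
      rintro rfl
      exact hz hw

/-- If the deletion of an element outside a robust set `F` is not 3-connected, then this is
witnessed by a separation both of whose sides have at least two elements in `F`. -/
theorem exists_sep_of_not_threeConnected [N.RankFinite] (hc : Conn N.E (zr N)) {F : Set α}
    (hFE : F ⊆ N.E) (hF : ∀ z, zr N N.E ≤ zr N (F \ {z})) {e : α} (heF : e ∉ F)
    (h : ¬ ThreeConnected (del N {e})) :
    ∃ X Y, X ∪ Y = N.E \ {e} ∧ Disjoint X Y ∧ (X ∩ F).Nontrivial ∧ (Y ∩ F).Nontrivial ∧
      zr N X + zr N Y ≤ zr N N.E + 1 := by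
  have hr := zr_rankFn N
  rw [threeConnected_iff] at h
  push Not at h
  obtain ⟨X, Y, hXY, hd, h⟩ := h
  rw [del_ground] at hXY h
  have hX : X ⊆ N.E \ {e} := hXY.subset.trans' subset_union_left
  have hY : Y ⊆ N.E \ {e} := hXY.subset.trans' subset_union_right
  rw [zr_del _ hX, zr_del _ hY, zr_del _ le_rfl] at h
  have hE := hr.mono (A := N.E \ {e}) (B := N.E) sdiff_subset
  have hlow : (X.Nonempty ∧ Y.Nonempty ∧ zr N X + zr N Y ≤ zr N N.E) ∨
      (X.Nontrivial ∧ Y.Nontrivial ∧ zr N X + zr N Y ≤ zr N N.E + 1) := by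
    by_cases h1 : X.Nonempty ∧ Y.Nonempty ∧ zr N X + zr N Y ≤ zr N N.E
    · exact Or.inl h1
    · right
      obtain ⟨hx, hy, hlt⟩ := h (fun hx hy => by
        by_contra! hlt
        exact h1 ⟨hx, hy, by linarith⟩)
      exact ⟨hx, hy, by linarith⟩
  have hone : ∀ Z ⊆ N.E \ {e}, Z.Nonempty → 1 ≤ zr N Z := by
    rintro Z hZ ⟨z, hz⟩
    exact (hc.one z (hZ hz).1).ge.trans (hr.mono (singleton_subset_iff.2 hz))
  have htwo : ∀ Z ⊆ N.E \ {e}, Z.Nontrivial → 2 ≤ zr N Z := by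
    rintro Z hZ ⟨z, hz, w, hw, hzw⟩
    exact (hc.pair z (hZ hz).1 w (hZ hw).1 hzw).trans (hr.mono (pair_subset hz hw))
  -- a side that almost contains the robust set is spanning
  have hspan : ∀ Z W : Set α, N.E \ {e} ⊆ Z ∪ W → ¬ (Z ∩ F).Nontrivial → zr N N.E ≤ zr N W := by
    intro Z W hZW hnt
    rw [not_nontrivial_iff] at hnt
    obtain ⟨z, hz⟩ : ∃ z, Z ∩ F ⊆ {z} := by
      rcases hnt.eq_empty_or_singleton with h | ⟨z, h⟩
      · exact ⟨e, by simp [h]⟩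
      · exact ⟨z, h.subset⟩
    refine (hF z).trans (hr.mono fun w hw => ?_)
    refine (hZW ⟨hFE hw.1, ?_⟩).resolve_left fun h => hw.2 (hz ⟨h, hw.1⟩)
    rintro rfl
    exact heF hw.1
  refine ⟨X, Y, hXY, hd, ?_, ?_, ?_⟩
  · by_contra hnt
    have h1 := hspan X Y hXY.symm.subset hnt
    rcases hlow with ⟨hx, -, hle⟩ | ⟨hx, -, hle⟩
    · linarith [hone X hX hx]
    · linarith [htwo X hX hx]
  · by_contra hnt
    have h1 := hspan Y X (by rw [union_comm]; exact hXY.symm.subset) hnt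
    rcases hlow with ⟨-, hx, hle⟩ | ⟨-, hx, hle⟩
    · linarith [hone Y hY hx]
    · linarith [htwo Y hY hx]
  · rcases hlow with ⟨-, -, hle⟩ | ⟨-, -, hle⟩ <;> linarith

/-- In an infinite 3-connected matroid of finite rank, all finite sets can be avoided by an
element whose deletion is 3-connected. Otherwise an ultrafilter limit of the separations of the
single-element deletions would be a separation of the matroid itself. -/
theorem exists_del_threeConnected [N.RankFinite] (hc : Conn N.E (zr N)) (hinf : N.E.Infinite)
    {F₀ : Set α} (hF₀ : F₀.Finite) (hF₀E : F₀ ⊆ N.E) :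
    ∃ e ∈ N.E, e ∉ F₀ ∧ ThreeConnected (del N {e}) := by
  have hr := zr_rankFn N
  obtain ⟨F, hF₀F, hFfin, hFE, hF⟩ := exists_robust hc hF₀ hF₀E
  by_contra! hcon
  have hex : ∀ e : ↥(N.E \ F), ∃ X Y, X ∪ Y = N.E \ {(e : α)} ∧ Disjoint X Y ∧
      (X ∩ F).Nontrivial ∧ (Y ∩ F).Nontrivial ∧ zr N X + zr N Y ≤ zr N N.E + 1 := fun e =>
    exists_sep_of_not_threeConnected hc hFE hF e.2.2
      (hcon e e.2.1 (fun h => e.2.2 (hF₀F h)))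
  choose X Y hXY hd hXF hYF hle using hex
  have : Infinite ↥(N.E \ F) := (hinf.sdiff hFfin).to_subtype
  let U : Ultrafilter ↥(N.E \ F) := Filter.hyperfilter _
  set X' : Set α := {z ∈ N.E | ∀ᶠ e in (U : Filter _), z ∈ X e} with hX'
  set Y' : Set α := {z ∈ N.E | ∀ᶠ e in (U : Filter _), z ∈ Y e} with hY'
  have hcover : ∀ z ∈ N.E, z ∈ X' ∨ z ∈ Y' := by
    intro z hz
    have h1 : ∀ᶠ e in (U : Filter _), z ∈ X e ∨ z ∈ Y e := by
      have h2 : ({e : ↥(N.E \ F) | (e : α) = z}).Finite :=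
        Set.Subsingleton.finite fun a ha b hb => Subtype.ext (ha.trans hb.symm)
      filter_upwards [Filter.compl_mem_hyperfilter_of_finite h2] with e he
      have : z ∈ X e ∪ Y e := by
        rw [hXY]
        exact ⟨hz, fun h => he h.symm⟩
      exact this
    rcases Ultrafilter.eventually_or.1 h1 with h | h
    · exact Or.inl ⟨hz, h⟩
    · exact Or.inr ⟨hz, h⟩
  have hdisj : ∀ z, z ∈ X' → z ∉ Y' := by
    intro z hzX hzY
    obtain ⟨e, h1, h2⟩ := (hzX.2.and hzY.2).exists
    exact disjoint_left.1 (hd e) h1 h2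
  obtain ⟨I, hIX, hI, hIr⟩ := zr_exists_finite N X'
  obtain ⟨J, hJY, hJ, hJr⟩ := zr_exists_finite N Y'
  have hevX : ∀ᶠ e in (U : Filter _), ∀ z ∈ I ∪ F ∩ X', z ∈ X e :=
    (Filter.eventually_all_finite (hI.union (hFfin.inter_of_left _))).2 fun z hz =>
      (hz.elim (fun h => hIX h) fun h => h.2).2
  have hevY : ∀ᶠ e in (U : Filter _), ∀ z ∈ J ∪ F ∩ Y', z ∈ Y e :=
    (Filter.eventually_all_finite (hJ.union (hFfin.inter_of_left _))).2 fun z hz =>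
      (hz.elim (fun h => hJY h) fun h => h.2).2
  obtain ⟨e, heX, heY⟩ := (hevX.and hevY).exists
  have h1 := hr.mono (A := I) (B := X e) fun z hz => heX z (Or.inl hz)
  have h2 := hr.mono (A := J) (B := Y e) fun z hz => heY z (Or.inl hz)
  have hXnt : (N.E \ Y').Nontrivial := (hXF e).mono fun z hz =>
    ⟨hFE hz.2, fun h => disjoint_left.1 (hd e) hz.1 (heY z (Or.inr ⟨hz.2, h⟩))⟩
  have hYnt : Y'.Nontrivial := (hYF e).mono fun z hz =>
    (hcover z (hFE hz.2)).resolve_left fun h =>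
      disjoint_left.1 (hd e) (heX z (Or.inr ⟨hz.2, h⟩)) hz.1
  have h3 := hc.sep X' Y' hcover (fun z hz => hz.1) hYnt hXnt
  linarith [hle e]

/-- A 3-connected matroid with at least four elements has no series pairs, so it is its own
cosimplification. -/
theorem IsCosimplification.eq_of_threeConnected {M K : Matroid α} [M.RankFinite]
    (h : IsCosimplification M K) (h3 : ThreeConnected M) (h4 : 4 ≤ M.E.encard) : K = M := by
  have hr := zr_rankFn M
  have hc := h3.conn h4
  obtain ⟨D, hD, rfl, -, hS⟩ := h
  have hD0 : D = ∅ := by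
    by_contra hne
    obtain ⟨d, hd⟩ := nonempty_iff_ne_empty.2 hne
    have hself := seriesPair_self (hD hd) (hc.del1 d (hD hd))
    obtain ⟨x, hx, hxD⟩ := hS _ (isSeriesClass_setOf hself)
    have hxd : d ≠ x := by
      rintro rfl
      have h5 : d ∈ ({d} : Set α) := rfl
      rw [← hxD] at h5
      exact h5.2 hd
    have hxE : x ∈ M.E := SeriesPair.mem_ground hx
    refine not_seriesPair hxd (hD hd) ?_ hx
    have h5 := hc.sep (M.E \ {d, x}) {d, x} (by intro z hz; by_cases z ∈ ({d, x} : Set α) <;> simp_all)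
      (pair_subset (hD hd) hxE) (nontrivial_pair hxd) (sdiff_pair_nontrivial h4 d x)
    have h6 := hr.insert_le d {x}
    linarith [hr.single x]
  rw [hD0]
  exact M.contract_empty

/-- The case of an infinite ground set: delete an element outside a finite set that carries the
`U_{2,4}`-minor, as given by `exists_del_threeConnected`. -/
theorem exists_of_infinite [N.RankFinite] (hinf : N.E.Infinite) (h3 : ThreeConnected N)
    (hU : HasU24Minor N) :
    ∃ e ∈ N.E, ∀ N', IsCosimplification (del N {e}) N' →
      ThreeConnected N' ∧ HasU24Minor N' := by
  have hr := zr_rankFn N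
  obtain ⟨C, v, hw⟩ := hU.exists_wQuad
  obtain ⟨I, hIC, hI, hIr⟩ := zr_exists_finite N (C ∩ N.E)
  have hCE : ∀ S : Set α, zr N (C ∪ S) = zr N (C ∩ N.E ∪ S ∩ N.E) := by
    intro S
    rw [zr, zr, ← union_inter_distrib_right, eRk_inter_ground]
  have hC : zr N C = zr N (C ∩ N.E) := by
    rw [zr, zr, eRk_inter_ground]
  have hIeq : ∀ S ⊆ N.E, zr N (I ∪ S) = zr N (C ∪ S) := by
    intro S hS
    rw [hCE, inter_eq_left.2 hS]
    apply le_antisymm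
    · exact hr.mono (union_subset_union_left _ hIC)
    · have h1 := hr.absorb (A := I) (B := I ∪ S) (S := C ∩ N.E) subset_union_left
        (by rwa [union_eq_right.2 hIC])
      refine (hr.mono ?_).trans h1
      exact union_subset subset_union_right (subset_union_right.trans subset_union_left)
  have hI0 : zr N I = zr N C := by
    have := hIeq ∅ (empty_subset _)
    simpa using this
  have hIE : I ⊆ N.E := hIC.trans inter_subset_right
  have hvE : range v ⊆ N.E := range_subset_iff.2 hw.mem
  obtain ⟨e, he, heF, hdel⟩ := exists_del_threeConnected (h3.conn hU.four_le) hinf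
    (hI.union (finite_range v)) (union_subset hIE hvE)
  have hsub : I ∪ range v ⊆ N.E \ {e} := fun z hz =>
    ⟨union_subset hIE hvE hz, by rintro rfl; exact heF hz⟩
  have hUe : HasU24Minor (del N {e}) := by
    refine WQuad.hasU24Minor (C := I) (v := v) ⟨fun i => hsub (Or.inr ⟨i, rfl⟩), ?_, ?_⟩
    · rw [zr_del _ hsub, zr_del _ (subset_union_left.trans hsub), hIeq _ hvE, hI0]
      exact hw.le
    · intro i j hij
      have hp : ({v i, v j} : Set α) ⊆ range v := pair_subset ⟨i, rfl⟩ ⟨j, rfl⟩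
      rw [zr_del _ ((union_subset_union_right _ hp).trans hsub),
        zr_del _ (subset_union_left.trans hsub), hIeq _ (hp.trans hvE), hI0]
      exact hw.pair i j hij
  refine ⟨e, he, fun N' hN' => ?_⟩
  rw [hN'.eq_of_threeConnected hdel hUe.four_le]
  exact ⟨hdel, hUe⟩

end Infinite

theorem statement_12 {α : Type u} (N : Matroid α) (h3 : ThreeConnected N)
    (hU : HasU24Minor N) (hcr : 3 ≤ eRank N✶) :
    ∃ e ∈ N.E, ∀ N', IsCosimplification (del N {e}) N' →
      ThreeConnected N' ∧ HasU24Minor N' := by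
  by_cases hfin : N.E.Finite
  · exact exists_of_finite hfin h3 hU hcr
  · have := h3.rankFinite hU.four_le
    exact exists_of_infinite hfin h3 hU

end BLFormal
end

section
/- Let N be a matroid and G a graph with N = L(G). Assume N is not graphic and that r(co(N)) \ge 4 and r*(N) \ge 4. Then for every edge e of G: if e is a link of G (its end-vertices are distinct), the contraction N/e is not graphic; and if e is a loop of G or is contained in a parallel class of G of size at least two, the deletion N\\e is not graphic. -/
/-!
The argument works with the even edge sets of `G`: the finite edge sets in which all degrees are
even. They are closed under symmetric difference, and the minimal nonempty ones are the cycles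
(`Graph.isCycle_of_minimal`). Hence a graphic matroid has as independent sets those containing no
nonempty even set (`IsBinaryOf`), while `L(G)` has those containing at most one (`IsLiftOf`). Both
notions make sense for any family `P` of finite sets closed under symmetric difference, and
deleting an element, or contracting a link, turns the lift matroid of `P` into the lift matroid of
the correspondingly deleted or contracted family.

A lift matroid of corank at least two that is also binary comes from a *cactus* family, one whose
minimal nonempty members are pairwise disjoint (`IsLiftOf.isCactus`). Indeed, two minimal members
that meet give a theta `T`, which is a circuit. If `D` is a member outside `T` adding as little as
possible to it, the restriction to `T ∪ D` has corank two and, besides `T`, a circuit avoiding each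
of the three paths of `T`. Four circuits are too many for a binary matroid of corank two.

The corank hypothesis on `N` thus reduces the theorem to showing that the family of `G / e`, for a
link `e`, and that of `G \ e`, for `e` a loop or parallel to another edge, is not a cactus
(`IsLiftOf.not_isCactus_con`, `IsLiftOf.not_isCactus_del`). In a cactus all edges of a cycle are in
series, and passing back to `G` only affects `e` and, in the second case, the edge parallel to it.
A cosimplification of rank at least four yields an independent set of `N` containing at least four
whole series classes (`exists_indep_of_cosimplification`). It therefore contains, for a link `e`,
three disjoint cycles of `G / e`, and otherwise two disjoint cycles of `G \ e`. Either way it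
contains two nonempty even sets of `G` and is dependent, a contradiction.
-/

open Set Matroid

universe u

namespace BLFormal

/-! ### Even edge sets of a graph -/

section EvenSets

open scoped symmDiff
open Classical in
/-- The number of times the vertex `v` is an end of the edge `e`, a loop counting twice. -/
noncomputable def Graph.endCount {V α : Type u} (G : Graph V α) (e : α) (v : V) : ℕ :=
  (if v ∈ G.inc e then 1 else 0) + (if G.inc e = Sym2.diag v then 1 else 0)

/-- The finite edge sets of `G` in which every vertex has even degree, that is, the members of
the binary cycle space of `G`. -/
def Graph.EvenSet {V α : Type u} (G : Graph V α) (Z : Set α) : Prop :=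
  Z ⊆ G.E ∧ Z.Finite ∧ ∀ v, Even (G.deg Z v)

variable {V α : Type u} (G : Graph V α)

open Classical in
lemma Graph.endCount_eq {e : α} {a b : V} (h : G.inc e = s(a, b)) (v : V) :
    G.endCount e v = (if v = a then 1 else 0) + (if v = b then 1 else 0) := by
  unfold Graph.endCount
  rw [h]
  simp only [Sym2.mem_iff, Sym2.diag, Sym2.eq_iff]
  grind

open Classical in
lemma Graph.sum_endCount {e : α} {W : Finset V} (h : ∀ v ∈ G.inc e, v ∈ W) :
    ∑ v ∈ W, G.endCount e v = 2 := by
  obtain ⟨a, b, hab⟩ : ∃ a b, G.inc e = s(a, b) := by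
    induction hi : G.inc e with
    | h a b => exact ⟨a, b, rfl⟩
  simp only [G.endCount_eq hab, Finset.sum_add_distrib, Finset.sum_ite_eq']
  rw [hab] at h
  simp [h a (by simp), h b (by simp)]

lemma Graph.deg_coe (S : Finset α) (v : V) :
    G.deg (S : Set α) v = ∑ e ∈ S, G.endCount e v := by
  classical
  unfold Graph.deg Graph.endCount
  rw [Finset.sum_add_distrib, ← Finset.card_filter, ← Finset.card_filter]
  rw [← Set.ncard_coe_finset, ← Set.ncard_coe_finset]
  simp

lemma Graph.even_deg_symmDiff {A B : Set α} (hA : A.Finite) (hB : B.Finite) {v : V}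
    (h : Even (G.deg A v) ↔ Even (G.deg B v)) : Even (G.deg (A ∆ B) v) := by
  classical
  lift A to Finset α using hA
  lift B to Finset α using hB
  rw [← Finset.coe_symmDiff, G.deg_coe]
  rw [G.deg_coe, G.deg_coe] at h
  rw [symmDiff_def, Finset.sup_eq_union, Finset.sum_union disjoint_sdiff_sdiff]
  rw [← Finset.sum_inter_add_sum_sdiff A B, ← Finset.sum_inter_add_sum_sdiff B A,
    Finset.inter_comm B A] at h
  simp only [Nat.even_add] at h ⊢
  tauto

lemma Graph.EvenSet.symmDiff {A B : Set α} (hA : G.EvenSet A) (hB : G.EvenSet B) :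
    G.EvenSet (A ∆ B) := by
  refine ⟨fun x hx ↦ ?_, hA.2.1.symmDiff hB.2.1, fun v ↦ ?_⟩
  · rcases hx with hx | hx
    exacts [hA.1 hx.1, hB.1 hx.1]
  · exact G.even_deg_symmDiff hA.2.1 hB.2.1 (by simp [hA.2.2 v, hB.2.2 v])

lemma Graph.deg_eq_zero {S : Set α} {v : V} (h : v ∉ G.vertsOf S) : G.deg S v = 0 := by
  have h' : ∀ e ∈ S, v ∉ G.inc e := fun e he hv ↦ h ⟨e, he, hv⟩
  have h1 : {e ∈ S | v ∈ G.inc e} = ∅ := by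
    ext e; simpa using h' e
  have h2 : {e ∈ S | G.inc e = Sym2.diag v} = ∅ := by
    ext e
    simp only [mem_ofPred_eq, mem_empty_iff_false, iff_false, not_and]
    intro he hd
    exact h' e he (by rw [hd]; simp [Sym2.diag])
  simp [Graph.deg, h1, h2]

lemma Graph.IsCycle.evenSet {C : Set α} (h : G.IsCycle C) : G.EvenSet C := by
  refine ⟨h.1, h.2.1, fun v ↦ ?_⟩
  by_cases hv : v ∈ G.vertsOf C
  · rw [h.2.2.2.1 v hv]; exact even_two
  · rw [G.deg_eq_zero hv]; exact Even.zero

lemma Graph.vertsOf_finite {Z : Set α} (hZ : Z.Finite) : (G.vertsOf Z).Finite := by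
  classical
  have : G.vertsOf Z = ⋃ e ∈ Z, {v | v ∈ G.inc e} := by
    ext v; simp [Graph.vertsOf]
  rw [this]
  refine hZ.biUnion fun e _ ↦ ?_
  refine (G.inc e).toFinset.finite_toSet.subset fun v hv ↦ ?_
  simpa using hv

lemma Graph.vertsOf_mono {S T : Set α} (h : S ⊆ T) : G.vertsOf S ⊆ G.vertsOf T :=
  fun _ ⟨e, he, hv⟩ ↦ ⟨e, h he, hv⟩

/-- Handshake lemma. -/
lemma Graph.sum_deg {S : Finset α} {W : Finset V} (h : G.vertsOf (S : Set α) ⊆ W) :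
    ∑ v ∈ W, G.deg (S : Set α) v = 2 * S.card := by
  simp only [G.deg_coe]
  rw [Finset.sum_comm, Finset.sum_congr rfl
    (fun e he ↦ G.sum_endCount (W := W) (fun v hv ↦ h ⟨e, he, hv⟩))]
  simp [mul_comm]

/-- A minimal nonempty even set spans a connected subgraph: the edges at one of its components
form an even set. -/
lemma Graph.connectedOn_of_minimal {Z : Set α}
    (hZ : Minimal (fun Z ↦ G.EvenSet Z ∧ Z.Nonempty) Z) : G.ConnectedOn Z := by
  intro u hu v hv
  set Y : Set α := {e ∈ Z | ∃ w ∈ G.inc e, Relation.ReflTransGen (G.AdjOn Z) u w} with hY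
  -- an edge of `Z` with one end reachable from `u` has both ends reachable
  have hboth : ∀ e ∈ Y, ∀ x ∈ G.inc e, Relation.ReflTransGen (G.AdjOn Z) u x := by
    rintro e ⟨heZ, w, hw, hr⟩ x hx
    by_cases hxw : w = x
    · rwa [← hxw]
    · exact hr.tail ⟨e, heZ, (Sym2.mem_and_mem_iff hxw).1 ⟨hw, hx⟩⟩
  have hYZ : Y ⊆ Z := fun e he ↦ he.1
  have hYe : G.EvenSet Y := by
    refine ⟨hYZ.trans hZ.prop.1.1, hZ.prop.1.2.1.subset hYZ, fun x ↦ ?_⟩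
    by_cases hx : Relation.ReflTransGen (G.AdjOn Z) u x
    · have : G.deg Y x = G.deg Z x := by
        unfold Graph.deg
        congr 2
        · ext e
          simp only [hY, mem_ofPred_eq]
          exact ⟨fun h ↦ ⟨h.1.1, h.2⟩, fun h ↦ ⟨⟨h.1, x, h.2, hx⟩, h.2⟩⟩
        · ext e
          simp only [hY, mem_ofPred_eq]
          exact ⟨fun h ↦ ⟨h.1.1, h.2⟩,
            fun h ↦ ⟨⟨h.1, x, by rw [h.2]; simp [Sym2.diag], hx⟩, h.2⟩⟩
      rw [this]; exact hZ.prop.1.2.2 x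
    · rw [G.deg_eq_zero]
      · exact Even.zero
      · rintro ⟨e, he, hxe⟩
        exact hx (hboth e he x hxe)
  have hYn : Y.Nonempty := by
    obtain ⟨e, he, hue⟩ := hu
    exact ⟨e, he, u, hue, .refl⟩
  obtain ⟨e, he, hve⟩ := hv
  exact hboth e (hZ.le_of_le ⟨hYe, hYn⟩ hYZ he) v hve

/-- A minimal nonempty even set has at most as many edges as vertices: sending a set of edges
avoiding a fixed edge `e₀` to the set of its odd-degree vertices other than a fixed `v₀` is
injective by minimality. -/
lemma Graph.card_le_of_minimal {Z : Finset α} {W : Finset V}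
    (hZ : Minimal (fun Z ↦ G.EvenSet Z ∧ Z.Nonempty) (Z : Set α))
    (hW : G.vertsOf (Z : Set α) = W) : Z.card ≤ W.card := by
  classical
  obtain ⟨e₀, he₀⟩ := hZ.prop.2
  obtain ⟨v₀, hv₀⟩ : ∃ v₀, v₀ ∈ G.inc e₀ := by
    induction G.inc e₀ with
    | h a b => exact ⟨a, by simp⟩
  have hv₀W : v₀ ∈ W := by
    have : v₀ ∈ G.vertsOf (Z : Set α) := ⟨e₀, he₀, hv₀⟩
    rwa [hW] at this
  have he₀' : e₀ ∈ Z := he₀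
  let f : Finset α → Finset V := fun S ↦ (W.erase v₀).filter (fun v ↦ ¬ Even (G.deg (S : Set α) v))
  have key : (Z.erase e₀).powerset.card ≤ (W.erase v₀).powerset.card := by
    refine Finset.card_le_card_of_injOn f ?_ ?_
    · intro S _
      simp only [Finset.coe_powerset, mem_preimage, mem_powerset_iff, f]
      exact_mod_cast Finset.filter_subset _ _
    · intro S hS T hT hST
      have hS' : S ⊆ Z.erase e₀ := Finset.mem_powerset.1 hS
      have hT' : T ⊆ Z.erase e₀ := Finset.mem_powerset.1 hT
      have hsub : S ∆ T ⊆ Z.erase e₀ := by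
        intro x hx
        rcases Finset.mem_symmDiff.1 hx with hx | hx
        exacts [hS' hx.1, hT' hx.1]
      have hsubZ : ((S ∆ T : Finset α) : Set α) ⊆ Z := by
        exact_mod_cast hsub.trans (Finset.erase_subset _ _)
      have hne : ∀ v, v ≠ v₀ → Even (G.deg ((S ∆ T : Finset α) : Set α) v) := by
        intro v hv
        by_cases hvW : v ∈ W
        · rw [Finset.coe_symmDiff]
          refine G.even_deg_symmDiff S.finite_toSet T.finite_toSet ?_
          have := congrArg (v ∈ ·) hST
          simp only [f, Finset.mem_filter, Finset.mem_erase, hvW, eq_iff_iff] at this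
          tauto
        · rw [G.deg_eq_zero]
          · exact Even.zero
          · intro hvS
            have := G.vertsOf_mono hsubZ hvS
            rw [hW] at this
            exact hvW this
      -- the remaining vertex `v₀` is even by the handshake lemma
      have hall : ∀ v, Even (G.deg ((S ∆ T : Finset α) : Set α) v) := by
        intro v
        by_cases hv : v = v₀
        · subst hv
          have hs := G.sum_deg (S := S ∆ T) (W := W) (by rw [← hW]; exact G.vertsOf_mono hsubZ)
          rw [← Finset.add_sum_erase _ _ hv₀W] at hs
          have h1 : Even (∑ x ∈ W.erase v, G.deg ((S ∆ T : Finset α) : Set α) x) :=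
            Finset.even_sum _ fun x hx ↦ hne x (Finset.ne_of_mem_erase hx)
          have h2 : Even (2 * (S ∆ T).card) := even_two_mul _
          rw [← hs] at h2
          exact (Nat.even_add.1 h2).2 h1
        · exact hne v hv
      by_contra hne'
      have hnon : (S ∆ T).Nonempty := by
        rw [Finset.nonempty_iff_ne_empty]
        intro h
        exact hne' (symmDiff_eq_bot.1 (by simpa using h))
      have := hZ.le_of_le (y := ((S ∆ T : Finset α) : Set α))
        ⟨⟨hsubZ.trans hZ.prop.1.1, Finset.finite_toSet _, hall⟩, by exact_mod_cast hnon⟩ hsubZ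
      have h3 := hsub (show e₀ ∈ S ∆ T by exact_mod_cast this he₀)
      simp at h3
  rw [Finset.card_powerset, Finset.card_powerset] at key
  have h4 := (Nat.pow_le_pow_iff_right (by norm_num : 1 < 2)).1 key
  rw [Finset.card_erase_of_mem he₀', Finset.card_erase_of_mem hv₀W] at h4
  have := Finset.card_pos.2 ⟨e₀, he₀'⟩
  have := Finset.card_pos.2 ⟨v₀, hv₀W⟩
  omega

/-- The minimal nonempty even sets are cycles. All degrees are at least two and, as there are at
most as many edges as vertices, the handshake lemma forces all of them to equal two. -/
lemma Graph.isCycle_of_minimal {Z : Set α}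
    (hZ : Minimal (fun Z ↦ G.EvenSet Z ∧ Z.Nonempty) Z) : G.IsCycle Z := by
  classical
  refine ⟨hZ.prop.1.1, hZ.prop.1.2.1, hZ.prop.2, ?_, G.connectedOn_of_minimal hZ⟩
  have hfin := hZ.prop.1.2.1
  have hWf := G.vertsOf_finite hfin
  lift Z to Finset α using hfin
  obtain ⟨W, hW⟩ := hWf.exists_finset_coe
  have hcard := G.card_le_of_minimal hZ hW.symm
  have hsum := G.sum_deg (S := Z) (W := W) hW.symm.subset
  have hge : ∀ v ∈ W, 2 ≤ G.deg (Z : Set α) v := by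
    intro v hv
    have hv' : v ∈ G.vertsOf (Z : Set α) := by rw [← hW]; exact hv
    obtain ⟨e, he, hve⟩ := hv'
    have hpos : 0 < G.deg (Z : Set α) v := by
      rw [G.deg_coe]
      refine Finset.sum_pos' (fun _ _ ↦ Nat.zero_le _) ⟨e, he, ?_⟩
      simp [Graph.endCount, hve]
    obtain ⟨k, hk⟩ := hZ.prop.1.2.2 v
    omega
  have hle : ∑ v ∈ W, G.deg (Z : Set α) v ≤ ∑ v ∈ W, 2 := by
    rw [hsum]; simp; omega
  intro v hv
  have hvW : v ∈ W := by rw [← hW] at hv; exact hv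
  exact ((Finset.sum_eq_sum_iff_of_le hge).1
    (le_antisymm (Finset.sum_le_sum hge) hle) v hvW).symm

lemma Graph.evenSet_singleton_iff {e : α} (he : e ∈ G.E) :
    G.EvenSet {e} ↔ (G.inc e).IsDiag := by
  classical
  obtain ⟨a, b, hab⟩ : ∃ a b, G.inc e = s(a, b) := by
    induction hi : G.inc e with
    | h a b => exact ⟨a, b, rfl⟩
  have hdeg : ∀ v, G.deg {e} v = (if v = a then 1 else 0) + (if v = b then 1 else 0) := by
    intro v
    have := G.deg_coe {e} v
    rw [Finset.coe_singleton, Finset.sum_singleton] at this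
    rw [this, G.endCount_eq hab]
  rw [hab, Sym2.mk_isDiag_iff]
  constructor
  · rintro ⟨-, -, h⟩
    by_contra hne
    have := h a
    rw [hdeg] at this
    simp [hne] at this
  · rintro rfl
    refine ⟨by simpa using he, finite_singleton e, fun v ↦ ?_⟩
    rw [hdeg]
    exact ⟨_, rfl⟩

lemma Graph.evenSet_pair {e f : α} (he : e ∈ G.E) (hf : f ∈ G.E) (hef : f ≠ e)
    (h : G.inc f = G.inc e) : G.EvenSet {e, f} := by
  classical
  refine ⟨by rintro x (rfl | rfl) <;> assumption, (finite_singleton f).insert e, fun v ↦ ?_⟩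
  have := G.deg_coe {e, f} v
  rw [Finset.coe_pair, Finset.sum_pair hef.symm] at this
  rw [this]
  exact ⟨G.endCount e v, by simp [Graph.endCount, h]⟩

end EvenSets

/-! ### Families closed under symmetric difference -/

section Families

open scoped symmDiff

variable {α : Type u}

/-- A family of finite sets closed under symmetric difference: when nonempty, a vector space
over the two-element field. -/
structure IsSpace (P : Set α → Prop) : Prop where
  finite : ∀ {A}, P A → A.Finite
  symmDiff : ∀ {A B}, P A → P B → P (A ∆ B)

/-- The minimal nonempty members of a family. For the even sets of a graph these are the
cycles. -/
def MinMem (P : Set α → Prop) (C : Set α) : Prop := Minimal (fun Z ↦ P Z ∧ Z.Nonempty) C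

/-- The minimal nonempty members of `P` are pairwise disjoint. For the even sets of a graph this
says that the graph has no theta subgraph. -/
def IsCactus (P : Set α → Prop) : Prop :=
  ∀ A B, MinMem P A → MinMem P B → (A ∩ B).Nonempty → A = B

/-- `M` is the binary matroid with cycle space `P`: a set is independent when it contains no
nonempty member of `P`. -/
structure IsBinaryOf (P : Set α → Prop) (M : Matroid α) : Prop where
  sub : ∀ {Z}, P Z → Z ⊆ M.E
  indep_iff : ∀ I, M.Indep I ↔ I ⊆ M.E ∧ ∀ Z, P Z → Z ⊆ I → Z = ∅

/-- `M` is the lift matroid of `P`: a set is independent when it contains at most one nonempty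
member of `P`. -/
structure IsLiftOf (P : Set α → Prop) (M : Matroid α) : Prop where
  sub : ∀ {Z}, P Z → Z ⊆ M.E
  indep_iff : ∀ I, M.Indep I ↔ I ⊆ M.E ∧ ∀ Y Z, P Y → P Z → Y.Nonempty → Z.Nonempty →
    Y ⊆ I → Z ⊆ I → Y = Z

variable {P Q : Set α → Prop} {M : Matroid α}

lemma IsSpace.sdiff (hP : IsSpace P) {A B : Set α} (hA : P A) (hB : P B) (h : B ⊆ A) :
    P (A \ B) := by
  have := hP.symmDiff hA hB
  rwa [symmDiff_def, sdiff_eq_empty.2 h, ← bot_eq_empty, sup_bot_eq] at this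

lemma MinMem.eq_of_subset {A Z : Set α} (hA : MinMem P A) (hZ : P Z) (hn : Z.Nonempty)
    (h : Z ⊆ A) : Z = A :=
  h.antisymm (hA.le_of_le ⟨hZ, hn⟩ h)

/-- Every element of a member of `P` lies in a minimal one inside it, as a member splits off any
smaller member it contains. -/
lemma IsSpace.exists_minMem (hP : IsSpace P) {Z : Set α} {x : α} (hZ : P Z) (hx : x ∈ Z) :
    ∃ C, MinMem P C ∧ x ∈ C ∧ C ⊆ Z := by
  induction hn : Z.ncard using Nat.strong_induction_on generalizing Z with
  | _ n ih =>
    subst hn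
    by_cases hmin : MinMem P Z
    · exact ⟨Z, hmin, hx, subset_rfl⟩
    obtain ⟨Y, hYZ, hY, hYn⟩ : ∃ Y, Y ⊂ Z ∧ P Y ∧ Y.Nonempty := by
      by_contra! hcon
      refine hmin ⟨⟨hZ, x, hx⟩, fun Y hY hYZ ↦ ?_⟩
      by_contra hne
      have := hcon Y ⟨hYZ, hne⟩ hY.1
      exact hY.2.ne_empty this
    by_cases hxY : x ∈ Y
    · obtain ⟨C, hC, hxC, hCY⟩ := ih _ (ncard_lt_ncard hYZ (hP.finite hZ)) hY hxY rfl
      exact ⟨C, hC, hxC, hCY.trans hYZ.subset⟩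
    · have hlt : Z \ Y ⊂ Z := by
        refine ⟨sdiff_subset, fun h ↦ ?_⟩
        obtain ⟨y, hy⟩ := hYn
        exact (h (hYZ.subset hy)).2 hy
      obtain ⟨C, hC, hxC, hCY⟩ := ih _ (ncard_lt_ncard hlt (hP.finite hZ))
        (hP.sdiff hZ hY hYZ.subset) ⟨hx, hxY⟩ rfl
      exact ⟨C, hC, hxC, hCY.trans sdiff_subset⟩

/-- If two minimal members of `P` meet, then two of them, `A` and `B`, can be chosen so that
`A ∪ B` contains no nonempty members except `A`, `B` and their symmetric difference (in a graph,
`A ∪ B` is a theta subgraph). -/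
lemma IsSpace.exists_theta (hP : IsSpace P) (h : ¬ IsCactus P) :
    ∃ A B, P A ∧ P B ∧ (A \ B).Nonempty ∧ (B \ A).Nonempty ∧ (A ∩ B).Nonempty ∧
      ∀ Z, P Z → Z.Nonempty → Z ⊆ A ∪ B → Z = A ∨ Z = B ∨ Z = A ∆ B := by
  classical
  have hex : ∃ n, ∃ A B, MinMem P A ∧ MinMem P B ∧ (A ∩ B).Nonempty ∧ A ≠ B ∧
      (A ∪ B).ncard = n := by
    unfold IsCactus at h
    push Not at h
    obtain ⟨A, B, hA, hB, hAB, hne⟩ := h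
    exact ⟨_, A, B, hA, hB, hAB, hne, rfl⟩
  obtain ⟨A, B, hA, hB, hAB, hne, hn⟩ := Nat.find_spec hex
  have hmin : ∀ A' B', MinMem P A' → MinMem P B' → (A' ∩ B').Nonempty → A' ≠ B' →
      A' ∪ B' ⊆ A ∪ B → A' ∪ B' = A ∪ B := by
    intro A' B' hA' hB' hAB' hne' hs
    refine eq_of_subset_of_ncard_le hs ?_ ((hP.finite hA.prop.1).union (hP.finite hB.prop.1))
    rw [hn]
    exact Nat.find_min' hex ⟨A', B', hA', hB', hAB', hne', rfl⟩
  have hAB' : (A \ B).Nonempty := by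
    rw [sdiff_nonempty]
    exact fun hs ↦ hne (hB.eq_of_subset hA.prop.1 hA.prop.2 hs)
  have hBA' : (B \ A).Nonempty := by
    rw [sdiff_nonempty]
    exact fun hs ↦ hne (hA.eq_of_subset hB.prop.1 hB.prop.2 hs).symm
  -- every minimal member inside `A ∪ B` other than `A` and `B` is the symmetric difference
  have hcyc : ∀ D, MinMem P D → D ⊆ A ∪ B → D ≠ A → D ≠ B → D = A ∆ B := by
    intro D hD hs hDA hDB
    have hDmA : (D ∩ A).Nonempty := by
      by_contra hcon
      refine hDB (hB.eq_of_subset hD.prop.1 hD.prop.2 fun x hx ↦ ?_)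
      exact (hs hx).resolve_left fun hxA ↦ hcon ⟨x, hx, hxA⟩
    have hDmB : (D ∩ B).Nonempty := by
      by_contra hcon
      refine hDA (hA.eq_of_subset hD.prop.1 hD.prop.2 fun x hx ↦ ?_)
      exact (hs hx).resolve_right fun hxB ↦ hcon ⟨x, hx, hxB⟩
    have h1 := hmin D A hD hA hDmA hDA (union_subset hs subset_union_left)
    have h2 := hmin D B hD hB hDmB hDB (union_subset hs subset_union_right)
    have hBD : B \ A ⊆ D := fun x hx ↦
      (show x ∈ D ∪ A from h1 ▸ Or.inr hx.1).resolve_right hx.2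
    have hAD : A \ B ⊆ D := fun x hx ↦
      (show x ∈ D ∪ B from h2 ▸ Or.inl hx.1).resolve_right hx.2
    have hPd : P (D ∆ (A ∆ B)) := hP.symmDiff hD.prop.1 (hP.symmDiff hA.prop.1 hB.prop.1)
    have hsub : D ∆ (A ∆ B) ⊆ A ∩ B := by
      intro x hx
      have h3 := @hs x
      have h4 := @hBD x
      have h5 := @hAD x
      simp only [mem_symmDiff, mem_union, mem_sdiff, mem_inter_iff] at hx h3 h4 h5 ⊢
      grind
    by_contra hcon
    have hnon : (D ∆ (A ∆ B)).Nonempty := by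
      rw [nonempty_iff_ne_empty]
      exact fun h ↦ hcon (symmDiff_eq_bot.1 h)
    have heq := hA.eq_of_subset hPd hnon (hsub.trans inter_subset_left)
    obtain ⟨x, hx⟩ := hAB'
    exact hx.2 (hsub (heq.symm.subset hx.1)).2
  refine ⟨A, B, hA.prop.1, hB.prop.1, hAB', hBA', hAB, ?_⟩
  intro Z hZ hZn hZs
  -- a minimal member inside `Z`; what is left of `Z` must be empty
  obtain ⟨x, hx⟩ := hZn
  obtain ⟨C, hC, hxC, hCZ⟩ := hP.exists_minMem hZ hx
  have hC3 : C = A ∨ C = B ∨ C = A ∆ B := by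
    have := hcyc C hC (hCZ.trans hZs)
    grind
  suffices Z = C by rwa [this]
  by_contra hZC
  obtain ⟨y, hy⟩ : (Z \ C).Nonempty := by
    rw [sdiff_nonempty]
    exact fun hs ↦ hZC (hs.antisymm hCZ)
  obtain ⟨C', hC', hyC', hCZ'⟩ := hP.exists_minMem (hP.sdiff hZ hC.prop.1 hCZ) hy
  have hC3' : C' = A ∨ C' = B ∨ C' = A ∆ B := by
    have := hcyc C' hC' ((hCZ'.trans sdiff_subset).trans hZs)
    grind
  have hdisj : ∀ z, z ∈ C → z ∈ C' → False := fun z hz hz' ↦ (hCZ' hz').2 hz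
  obtain ⟨a, ha⟩ := hAB'
  obtain ⟨b, hb⟩ := hBA'
  obtain ⟨c, hc⟩ := hAB
  have h1 := hdisj a
  have h2 := hdisj b
  have h3 := hdisj c
  rcases hC3 with h | h | h <;> rcases hC3' with h' | h' | h' <;>
    (rw [h, h'] at h1 h2 h3; simp only [mem_symmDiff, mem_sdiff, mem_inter_iff] at ha hb hc h1 h2 h3
     grind)

/-- If the lift matroid of `P` is binary and has corank at least two, then the minimal members of
`P` are pairwise disjoint. Otherwise let `T` be a theta and `D` a member outside `T` adding as
little as possible to it; the restriction to `T ∪ D` has corank two and four circuits, namely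
`T` and one avoiding each of the three paths of `T`, whereas a binary matroid of corank two has
at most three. -/
theorem IsLiftOf.isCactus (hP : IsSpace P) (hM : IsLiftOf P M) (hQ : IsSpace Q)
    (hMQ : IsBinaryOf Q M) (hco : ∀ x, ¬ M.Indep (M.E \ {x})) : IsCactus P := by
  classical
  by_contra hcac
  obtain ⟨A, B, hA, hB, ⟨a, haA, haB⟩, ⟨b, hbB, hbA⟩, ⟨c, hcA, hcB⟩, hT⟩ := hP.exists_theta hcac
  -- a nonempty member inside the theta misses at most one of the three paths
  have hT2 : ∀ Z, P Z → Z.Nonempty → Z ⊆ A ∪ B →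
      (a ∈ Z ∧ b ∈ Z) ∨ (a ∈ Z ∧ c ∈ Z) ∨ (b ∈ Z ∧ c ∈ Z) := by
    intro Z hZ hZn hZs
    rcases hT Z hZ hZn hZs with h | h | h <;> rw [h] <;> (try simp only [mem_symmDiff]) <;> grind
  have huniq : ∀ x ∈ A ∪ B, ∀ Y Z, P Y → P Z → Y.Nonempty → Z.Nonempty →
      Y ⊆ A ∪ B → Z ⊆ A ∪ B → x ∉ Y → x ∉ Z → Y = Z := by
    intro x hx Y Z hY hZ hYn hZn hYs hZs hxY hxZ
    rcases hT Y hY hYn hYs with h | h | h <;> rcases hT Z hZ hZn hZs with h' | h' | h' <;>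
      (rw [h] at hxY ⊢; rw [h'] at hxZ ⊢) <;>
      (try simp only [mem_symmDiff, mem_union] at hx hxY hxZ) <;> grind
  have hAB := hP.symmDiff hA hB
  have hABE : A ∪ B ⊆ M.E := union_subset (hM.sub hA) (hM.sub hB)
  have hexD : ∃ n, ∃ D, P D ∧ ¬ D ⊆ A ∪ B ∧ (D \ (A ∪ B)).ncard = n := by
    by_contra! hcon
    have hall : ∀ Z, P Z → Z ⊆ A ∪ B := by
      intro Z hZ
      by_contra hs
      exact hcon _ Z hZ hs rfl
    refine hco a ((hM.indep_iff _).2 ⟨sdiff_subset, fun Y Z hY hZ hYn hZn hYs hZs ↦ ?_⟩)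
    exact huniq a (Or.inl haA) Y Z hY hZ hYn hZn (hall Y hY) (hall Z hZ)
      (fun h ↦ (hYs h).2 rfl) (fun h ↦ (hZs h).2 rfl)
  obtain ⟨D, hD, hDs, hDn⟩ := Nat.find_spec hexD
  obtain ⟨d, hdD, hdT⟩ := not_subset.1 hDs
  -- the members inside `A ∪ B ∪ D` but not inside `A ∪ B` agree with `D` outside `A ∪ B`
  have hout : ∀ Z, P Z → Z ⊆ A ∪ B ∪ D → ¬ Z ⊆ A ∪ B → Z \ (A ∪ B) = D \ (A ∪ B) := by
    intro Z hZ hZs hZn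
    refine eq_of_subset_of_ncard_le ?_ ?_ ((hP.finite hD).sdiff)
    · intro x hx
      exact ⟨(hZs hx.1).resolve_left hx.2, hx.2⟩
    · rw [hDn]
      exact Nat.find_min' hexD ⟨Z, hZ, hZn, rfl⟩
  have hYE : A ∪ B ∪ D ⊆ M.E := union_subset hABE (hM.sub hD)
  -- proper subsets of the theta are independent in `M`
  have hTmin : ∀ K, Q K → K.Nonempty → K ⊆ A ∪ B → K = A ∪ B := by
    intro K hK hKn hKs
    refine hKs.antisymm ?_
    by_contra hcon
    obtain ⟨x, hxT, hxK⟩ := not_subset.1 hcon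
    have hind : M.Indep K := by
      refine (hM.indep_iff _).2 ⟨hKs.trans hABE, fun Y Z hY hZ hYn hZn hYs hZs ↦ ?_⟩
      exact huniq x hxT Y Z hY hZ hYn hZn (hYs.trans hKs) (hZs.trans hKs)
        (fun h ↦ hxK (hYs h)) (fun h ↦ hxK (hZs h))
    exact hKn.ne_empty (((hMQ.indep_iff _).1 hind).2 K hK subset_rfl)
  -- a member of `Q` avoiding a given element `x` of the theta and containing `D` outside the theta
  have hK : ∀ x, x ∉ A ∨ x ∉ B ∨ x ∉ A ∆ B → x ∈ A ∪ B →
      ∃ K, Q K ∧ K ⊆ A ∪ B ∪ D ∧ x ∉ K ∧ D \ (A ∪ B) ⊆ K := by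
    intro x hx hxT
    obtain ⟨Z₁, hZ₁, hZ₁n, hZ₁s, hxZ₁⟩ :
        ∃ Z, P Z ∧ Z.Nonempty ∧ Z ⊆ A ∪ B ∧ x ∉ Z := by
      rcases hx with hx | hx | hx
      · exact ⟨A, hA, ⟨a, haA⟩, subset_union_left, hx⟩
      · exact ⟨B, hB, ⟨b, hbB⟩, subset_union_right, hx⟩
      · exact ⟨A ∆ B, hAB, ⟨a, Or.inl ⟨haA, haB⟩⟩, symmDiff_subset_union, hx⟩
    obtain ⟨Z₂, hZ₂, hZ₂s, hxZ₂, hdZ₂⟩ :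
        ∃ Z, P Z ∧ Z ⊆ A ∪ B ∪ D ∧ x ∉ Z ∧ d ∈ Z := by
      by_cases hxD : x ∈ D
      · rcases hxT with hxA | hxB
        · refine ⟨D ∆ A, hP.symmDiff hD hA, ?_, ?_, Or.inl ⟨hdD, fun h ↦ hdT (Or.inl h)⟩⟩
          · intro y; simp only [mem_symmDiff, mem_union]; grind
          · simp only [mem_symmDiff]; grind
        · refine ⟨D ∆ B, hP.symmDiff hD hB, ?_, ?_, Or.inl ⟨hdD, fun h ↦ hdT (Or.inr h)⟩⟩
          · intro y; simp only [mem_symmDiff, mem_union]; grind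
          · simp only [mem_symmDiff]; grind
      · exact ⟨D, hD, subset_union_right, hxD, hdD⟩
    have hdep : ¬ M.Indep ((A ∪ B ∪ D) \ {x}) := by
      intro hind
      have := ((hM.indep_iff _).1 hind).2 Z₁ Z₂ hZ₁ hZ₂ hZ₁n ⟨d, hdZ₂⟩
        (fun y hy ↦ ⟨Or.inl (hZ₁s hy), fun h ↦ hxZ₁ (h ▸ hy)⟩)
        (fun y hy ↦ ⟨hZ₂s hy, fun h ↦ hxZ₂ (h ▸ hy)⟩)
      exact hdT (hZ₁s (this ▸ hdZ₂))
    rw [hMQ.indep_iff] at hdep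
    push Not at hdep
    obtain ⟨K, hKQ, hKs, hKn⟩ := hdep (sdiff_subset.trans hYE)
    have hxK : x ∉ K := fun h ↦ (hKs h).2 rfl
    refine ⟨K, hKQ, hKs.trans sdiff_subset, hxK, ?_⟩
    intro y hyD
    by_contra hyK
    -- otherwise `K` is independent: missing `y`, it has all its members of `P` inside the theta,
    -- and missing `x`, at most one of these
    have hKT' : ∀ Z, P Z → Z ⊆ K → Z ⊆ A ∪ B := by
      intro Z hZ hZK
      by_contra hcon
      have h1 := hout Z hZ (hZK.trans (hKs.trans sdiff_subset)) hcon
      exact hyK (hZK (h1.symm.subset hyD).1)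
    have hind : M.Indep K := by
      refine (hM.indep_iff _).2 ⟨hKs.trans (sdiff_subset.trans hYE),
        fun Y Z hY hZ hYn hZn hYs hZs ↦ ?_⟩
      exact huniq x hxT Y Z hY hZ hYn hZn (hKT' Y hY hYs) (hKT' Z hZ hZs)
        (fun h ↦ hxK (hYs h)) (fun h ↦ hxK (hZs h))
    exact hKn.ne_empty (((hMQ.indep_iff _).1 hind).2 K hKQ subset_rfl)
  -- no member of `Q` containing `d` avoids two of the three paths: it would be independent in `M`,
  -- as two members of `P` inside it would differ by a member inside the theta
  have hpair : ∀ K, Q K → K ⊆ A ∪ B ∪ D → d ∈ K →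
      (a ∉ K ∧ b ∉ K) ∨ (a ∉ K ∧ c ∉ K) ∨ (b ∉ K ∧ c ∉ K) → False := by
    intro K hKQ hKs hdK hK2
    have hind : M.Indep K := by
      refine (hM.indep_iff _).2 ⟨hKs.trans hYE, fun Y Z hY hZ hYn hZn hYs hZs ↦ ?_⟩
      have hnT : ∀ Z, P Z → Z.Nonempty → Z ⊆ K → ¬ Z ⊆ A ∪ B := by
        intro Z hZ hZn hZK hcon
        have := hT2 Z hZ hZn hcon
        have := @hZK a
        have := @hZK b
        have := @hZK c
        grind
      have h1 := hout Y hY (hYs.trans hKs) (hnT Y hY hYn hYs)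
      have h2 := hout Z hZ (hZs.trans hKs) (hnT Z hZ hZn hZs)
      by_contra hne
      have hnon : (Y ∆ Z).Nonempty := by
        rw [nonempty_iff_ne_empty]
        exact fun h ↦ hne (symmDiff_eq_bot.1 h)
      refine hnT _ (hP.symmDiff hY hZ) hnon
        (symmDiff_subset_union.trans (union_subset hYs hZs)) ?_
      intro y hy
      by_contra hyT
      have h3 : y ∈ Y \ (A ∪ B) ↔ y ∈ Z \ (A ∪ B) := by rw [h1, h2]
      simp only [mem_sdiff, mem_symmDiff] at h3 hy
      grind
    exact (nonempty_of_mem hdK).ne_empty (((hMQ.indep_iff _).1 hind).2 K hKQ subset_rfl)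
  -- two of the members found in `hK` differ exactly in the theta, which is impossible for three
  -- distinct ones as they cannot pairwise disagree at `a`
  have hdiff : ∀ K L, Q K → Q L → K ⊆ A ∪ B ∪ D → L ⊆ A ∪ B ∪ D → D \ (A ∪ B) ⊆ K →
      D \ (A ∪ B) ⊆ L → K ≠ L → K ∆ L = A ∪ B := by
    intro K L hK hL hKs hLs hDK hDL hne
    have hnon : (K ∆ L).Nonempty := by
      rw [nonempty_iff_ne_empty]
      exact fun h ↦ hne (symmDiff_eq_bot.1 h)
    refine hTmin _ (hQ.symmDiff hK hL) hnon fun y hy ↦ ?_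
    have h1 := @hKs y
    have h2 := @hLs y
    have h3 := @hDK y
    have h4 := @hDL y
    simp only [mem_symmDiff, mem_union, mem_sdiff] at hy h1 h2 h3 h4 ⊢
    grind
  obtain ⟨Ka, hKa, hKas, haK, hDa⟩ := hK a (Or.inr (Or.inl haB)) (Or.inl haA)
  obtain ⟨Kb, hKb, hKbs, hbK, hDb⟩ := hK b (Or.inl hbA) (Or.inr hbB)
  obtain ⟨Kc, hKc, hKcs, hcK, hDc⟩ :=
    hK c (Or.inr (Or.inr (by simp only [mem_symmDiff]; grind))) (Or.inl hcA)
  have hne₁ : Ka ≠ Kb := fun h ↦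
    hpair Ka hKa hKas (hDa ⟨hdD, hdT⟩) (Or.inl ⟨haK, h ▸ hbK⟩)
  have hne₂ : Ka ≠ Kc := fun h ↦
    hpair Ka hKa hKas (hDa ⟨hdD, hdT⟩) (Or.inr (Or.inl ⟨haK, h ▸ hcK⟩))
  have hne₃ : Kb ≠ Kc := fun h ↦
    hpair Kb hKb hKbs (hDb ⟨hdD, hdT⟩) (Or.inr (Or.inr ⟨hbK, h ▸ hcK⟩))
  have e₁ : a ∈ Ka ∆ Kb := (hdiff Ka Kb hKa hKb hKas hKbs hDa hDb hne₁).symm.subset (Or.inl haA)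
  have e₂ : a ∈ Ka ∆ Kc := (hdiff Ka Kc hKa hKc hKas hKcs hDa hDc hne₂).symm.subset (Or.inl haA)
  have e₃ : a ∈ Kb ∆ Kc := (hdiff Kb Kc hKb hKc hKbs hKcs hDb hDc hne₃).symm.subset (Or.inl haA)
  simp only [mem_symmDiff] at e₁ e₂ e₃
  grind

end Families

/-! ### Circuits and even sets -/

section Matroids

open scoped symmDiff

variable {V α : Type u} {P : Set α → Prop} {M N : Matroid α} {e f x y : α}

lemma Graph.isSpace_evenSet (G : Graph V α) : IsSpace G.EvenSet where
  finite h := h.2.1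
  symmDiff hA hB := hA.symmDiff G hB

lemma IsGraphicRep.isBinaryOf {H : Graph V α} (h : IsGraphicRep H M) :
    IsBinaryOf H.EvenSet M where
  sub hZ := h.1 ▸ hZ.1
  indep_iff I := by
    constructor
    · refine fun hI ↦ ⟨hI.subset_ground, fun Z hZ hZI ↦ ?_⟩
      by_contra hne
      obtain ⟨x, hx⟩ := nonempty_iff_ne_empty.2 hne
      obtain ⟨C, hC, -, hCZ⟩ := H.isSpace_evenSet.exists_minMem hZ hx
      have hcirc : M.IsCircuit C := (h.2 C).2 (H.isCycle_of_minimal hC)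
      exact hcirc.not_indep (hI.subset (hCZ.trans hZI))
    · rintro ⟨hIE, hI⟩
      rw [Matroid.indep_iff_forall_subset_not_isCircuit hIE]
      intro C hCI hC
      have hcyc : H.IsCycle C := (h.2 C).1 hC
      exact hcyc.2.2.1.ne_empty (hI C (hcyc.evenSet H) hCI)

/-- A set of edges contains two cycles as soon as it contains two nonempty even sets. -/
lemma Graph.hasTwoCycles_of_evenSet {G : Graph V α} {X Y Z : Set α} (hY : G.EvenSet Y)
    (hZ : G.EvenSet Z) (hYn : Y.Nonempty) (hZn : Z.Nonempty) (hne : Y ≠ Z) (hYX : Y ⊆ X)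
    (hZX : Z ⊆ X) : G.HasTwoCycles X := by
  -- it suffices to find two minimal even sets, the second through a point outside the first
  have key : ∀ A B, G.EvenSet A → G.EvenSet B → A.Nonempty → A ⊆ X → B ⊆ X → ¬ B ⊆ A →
      G.HasTwoCycles X := by
    intro A B hA hB hAn hAX hBX hs
    obtain ⟨b, hb, hbA⟩ := not_subset.1 hs
    obtain ⟨a, ha⟩ := hAn
    obtain ⟨C, hC, -, hCA⟩ := G.isSpace_evenSet.exists_minMem hA ha
    obtain ⟨D, hD, hbD, hDB⟩ := G.isSpace_evenSet.exists_minMem hB hb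
    exact ⟨C, D, G.isCycle_of_minimal hC, G.isCycle_of_minimal hD,
      fun h ↦ hbA (hCA (h ▸ hbD)), hCA.trans hAX, hDB.trans hBX⟩
  by_cases hs : Z ⊆ Y
  · exact key Z Y hZ hY hZn hZX hYX fun h ↦ hne (h.antisymm hs)
  · exact key Y Z hY hZ hYn hYX hZX hs

lemma IsLiftRep.isLiftOf {G : Graph V α} (h : IsLiftRep G N) : IsLiftOf G.EvenSet N where
  sub hZ := h.1 ▸ hZ.1
  indep_iff I := by
    constructor
    · refine fun hI ↦ ⟨hI.subset_ground, fun Y Z hY hZ hYn hZn hYI hZI ↦ ?_⟩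
      by_contra hne
      have htwo : G.HasTwoCycles (Y ∪ Z) := Graph.hasTwoCycles_of_evenSet hY hZ hYn hZn hne
        subset_union_left subset_union_right
      have hE : Y ∪ Z ⊆ G.E := union_subset hY.1 hZ.1
      -- a finite set with two cycles contains a minimal one
      have hfin : {X | X ⊆ Y ∪ Z ∧ G.HasTwoCycles X}.Finite :=
        (hY.2.1.union hZ.2.1).finite_subsets.subset fun X hX ↦ hX.1
      obtain ⟨C, hCs, hC⟩ := hfin.exists_le_minimal (a := Y ∪ Z) ⟨subset_rfl, htwo⟩
      have hL : G.LiftCircuit C := ⟨⟨hC.prop.1.trans hE, hC.prop.2⟩,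
        fun X hX hXC ↦ hC.le_of_le ⟨hXC.trans hC.prop.1, hX.2⟩ hXC⟩
      have hcirc : N.IsCircuit C := (h.2 C).2 hL
      exact hcirc.not_indep (hI.subset (hC.prop.1.trans (union_subset hYI hZI)))
    · rintro ⟨hIE, hI⟩
      rw [Matroid.indep_iff_forall_subset_not_isCircuit hIE]
      intro C hCI hC
      have hL : G.LiftCircuit C := (h.2 C).1 hC
      obtain ⟨C₁, C₂, h₁, h₂, hne, hs₁, hs₂⟩ := hL.prop.2
      exact hne (hI C₁ C₂ (h₁.evenSet G) (h₂.evenSet G) h₁.2.2.1 h₂.2.2.1 (hs₁.trans hCI)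
        (hs₂.trans hCI))

/-! ### Deletion and contraction of an element -/

lemma IsSpace.del (hP : IsSpace P) (e : α) : IsSpace (fun Z ↦ e ∉ Z ∧ P Z) where
  finite h := hP.finite h.2
  symmDiff {A B} hA hB := ⟨by have := hA.1; have := hB.1; simp only [mem_symmDiff]; tauto,
    hP.symmDiff hA.2 hB.2⟩

lemma IsLiftOf.del (hM : IsLiftOf P M) (e : α) :
    IsLiftOf (fun Z ↦ e ∉ Z ∧ P Z) (del M {e}) where
  sub {Z} h := fun x hx ↦ ⟨hM.sub h.2 hx, fun hxe ↦ h.1 (hxe ▸ hx)⟩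
  indep_iff I := by
    change (M ＼ {e}).Indep I ↔ I ⊆ M.E \ {e} ∧ _
    rw [Matroid.deleteElem_indep_iff, hM.indep_iff, subset_sdiff, disjoint_singleton_right]
    constructor
    · rintro ⟨⟨hIE, hI⟩, heI⟩
      exact ⟨⟨hIE, heI⟩, fun Y Z hY hZ ↦ hI Y Z hY.2 hZ.2⟩
    · rintro ⟨⟨hIE, heI⟩, hI⟩
      exact ⟨⟨hIE, fun Y Z hY hZ hYn hZn hYI hZI ↦ hI Y Z ⟨fun h ↦ heI (hYI h), hY⟩
        ⟨fun h ↦ heI (hZI h), hZ⟩ hYn hZn hYI hZI⟩, heI⟩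

/-- The members of `P` after contraction of `e`: those sets avoiding `e` that belong to `P` with
or without `e` added. -/
def ConFam (P : Set α → Prop) (e : α) (Z : Set α) : Prop := e ∉ Z ∧ (P Z ∨ P (insert e Z))

lemma ConFam.of_mem {Z : Set α} (hZ : P Z) (e : α) : ConFam P e (Z \ {e}) := by
  refine ⟨fun h ↦ h.2 rfl, ?_⟩
  by_cases he : e ∈ Z
  · right; rwa [insert_sdiff_singleton, insert_eq_of_mem he]
  · left; rwa [sdiff_singleton_eq_self he]

lemma IsSpace.con (hP : IsSpace P) (e : α) : IsSpace (ConFam P e) where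
  finite h := h.2.elim (fun h ↦ hP.finite h) fun h ↦ (hP.finite h).subset (subset_insert _ _)
  symmDiff {A B} hA hB := by
    have heA := hA.1
    have heB := hB.1
    -- add `e` back where needed, take the symmetric difference, and remove `e` again
    have key : ∀ A' B', A' \ {e} = A → B' \ {e} = B → P A' → P B' → ConFam P e (A ∆ B) := by
      rintro A' B' rfl rfl hA' hB'
      have := ConFam.of_mem (hP.symmDiff hA' hB') e
      convert this using 1
      ext x
      simp only [mem_symmDiff, mem_sdiff, mem_singleton_iff]
      tauto
    have h1 : ∀ S : Set α, e ∉ S → S \ {e} = S := fun S hS ↦ sdiff_singleton_eq_self hS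
    have h2 : ∀ S : Set α, e ∉ S → insert e S \ {e} = S := fun S hS ↦
      insert_sdiff_self_of_notMem hS
    rcases hA.2 with hA' | hA' <;> rcases hB.2 with hB' | hB'
    · exact key A B (h1 A heA) (h1 B heB) hA' hB'
    · exact key A _ (h1 A heA) (h2 B heB) hA' hB'
    · exact key _ B (h2 A heA) (h1 B heB) hA' hB'
    · exact key _ _ (h2 A heA) (h2 B heB) hA' hB'

lemma IsLiftOf.indep_singleton (hM : IsLiftOf P M) (he : e ∈ M.E) : M.Indep {e} := by
  refine (hM.indep_iff _).2 ⟨by simpa using he, fun Y Z _ _ hYn hZn hYs hZs ↦ ?_⟩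
  rw [hYn.subset_singleton_iff.1 hYs, hZn.subset_singleton_iff.1 hZs]

lemma IsLiftOf.con_indep_iff (hM : IsLiftOf P M) (he : e ∈ M.E) (I : Set α) :
    (con M {e}).Indep I ↔ e ∉ I ∧ M.Indep (insert e I) := by
  change (M ／ {e}).Indep I ↔ _
  rw [(hM.indep_singleton he).contract_indep_iff, disjoint_singleton_right, union_singleton]

lemma IsLiftOf.con (hP : IsSpace P) (hM : IsLiftOf P M) (he : e ∈ M.E) (hePe : ¬ P {e}) :
    IsLiftOf (ConFam P e) (con M {e}) where
  sub {Z} h := by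
    change Z ⊆ M.E \ {e}
    refine fun x hx ↦ ⟨?_, fun hxe ↦ h.1 (hxe ▸ hx)⟩
    exact h.2.elim (fun h ↦ hM.sub h hx) fun h ↦ hM.sub h (Or.inr hx)
  indep_iff I := by
    rw [hM.con_indep_iff he, hM.indep_iff]
    change _ ↔ I ⊆ M.E \ {e} ∧ _
    rw [subset_sdiff, disjoint_singleton_right]
    constructor
    · rintro ⟨heI, hIE, hI⟩
      refine ⟨⟨(subset_insert _ _).trans hIE, heI⟩, fun Y Z hY hZ hYn hZn hYI hZI ↦ ?_⟩
      have lift : ∀ Z, ConFam P e Z → Z ⊆ I →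
          ∃ Z', P Z' ∧ Z ⊆ Z' ∧ Z' \ {e} = Z ∧ Z' ⊆ insert e I := by
        rintro Z ⟨heZ, hZ | hZ⟩ hZI
        · exact ⟨Z, hZ, subset_rfl, sdiff_singleton_eq_self heZ, hZI.trans (subset_insert _ _)⟩
        · exact ⟨_, hZ, subset_insert _ _, insert_sdiff_self_of_notMem heZ,
            insert_subset_insert hZI⟩
      obtain ⟨Y', hY', hYY', hYe, hYI'⟩ := lift Y hY hYI
      obtain ⟨Z', hZ', hZZ', hZe, hZI'⟩ := lift Z hZ hZI
      rw [← hYe, ← hZe, hI Y' Z' hY' hZ' (hYn.mono hYY') (hZn.mono hZZ') hYI' hZI']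
    · rintro ⟨⟨hIE, heI⟩, hI⟩
      refine ⟨heI, insert_subset he hIE, fun Y Z hY hZ hYn hZn hYI hZI ↦ ?_⟩
      have hnon : ∀ Z, P Z → Z.Nonempty → (Z \ {e}).Nonempty := by
        intro Z hZ hZn
        rw [sdiff_nonempty]
        exact fun hs ↦ hePe (hZn.subset_singleton_iff.1 hs ▸ hZ)
      have heq := hI _ _ (ConFam.of_mem hY e) (ConFam.of_mem hZ e) (hnon Y hY hYn) (hnon Z hZ hZn)
        (by simpa using hYI) (by simpa using hZI)
      by_contra hne
      have hsub : Y ∆ Z ⊆ {e} := by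
        intro x hx
        by_contra hxe
        have : x ∈ Y \ {e} ↔ x ∈ Z \ {e} := by rw [heq]
        simp only [mem_sdiff, mem_symmDiff] at this hx
        tauto
      have hn : (Y ∆ Z).Nonempty := by
        rw [nonempty_iff_ne_empty]
        exact fun h ↦ hne (symmDiff_eq_bot.1 h)
      exact hePe (hn.subset_singleton_iff.1 hsub ▸ hP.symmDiff hY hZ)

/-! ### Corank and cosimplification -/

lemma encard_ge_of_indep_sdiff {F : Set α} {k : ℕ∞} (hk : k ≤ eRank N✶)
    (hF : N.Indep (N.E \ F)) : k ≤ F.encard := by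
  refine hk.trans (iSup_le fun ⟨J, hJ, _⟩ ↦ ?_)
  obtain ⟨B, hB, hFB⟩ := hF.exists_isBase_superset
  obtain ⟨B', hB', hJB'⟩ := hJ.exists_isBase_superset
  calc J.encard ≤ B'.encard := encard_le_encard hJB'
    _ = (N.E \ B).encard := hB'.encard_eq_encard_of_isBase hB.compl_isBase_dual
    _ ≤ F.encard := by
      refine encard_le_encard fun x hx ↦ ?_
      by_contra hxF
      exact hx.2 (hFB ⟨hx.1, hxF⟩)

lemma SeriesPair.symm (h : SeriesPair N x y) : SeriesPair N y x :=
  ⟨fun C hC ↦ (h.1 C hC).symm, let ⟨C, hC, hx, hy⟩ := h.2; ⟨C, hC, hy, hx⟩⟩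

lemma SeriesPair.trans {z : α} (h : SeriesPair N x y) (h' : SeriesPair N y z) :
    SeriesPair N x z :=
  ⟨fun C hC ↦ (h.1 C hC).trans (h'.1 C hC),
    let ⟨C, hC, hx, hy⟩ := h.2; ⟨C, hC, hx, (h'.1 C hC).1 hy⟩⟩

/-- If every cosimplification of `N` has rank at least four, there is an independent set `I` with
a subset `J` of size at least four that consists of elements of distinct series classes, each of
these classes being contained in `I`. -/
lemma exists_indep_of_cosimplification [Nonempty α]
    (h : ∀ N', IsCosimplification N N' → 4 ≤ eRank N') :
    ∃ I J : Set α, N.Indep I ∧ J ⊆ I ∧ 4 ≤ J.encard ∧ (∀ x ∈ J, ∃ C, Circuit N C ∧ x ∈ C) ∧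
      ∀ x ∈ J, ∀ y, SeriesPair N x y → y ∈ I ∧ (y ∈ J → y = x) := by
  classical
  -- a representative of the series class of each element that lies in a circuit
  let r : Set α → α := fun S ↦ Classical.epsilon (· ∈ S)
  have hr : ∀ S : Set α, S.Nonempty → r S ∈ S := fun S hS ↦ Classical.epsilon_spec hS
  let cl : α → Set α := fun x ↦ {y | SeriesPair N x y}
  have hself : ∀ {x C}, Circuit N C → x ∈ C → SeriesPair N x x := fun hC hx ↦
    ⟨fun _ _ ↦ Iff.rfl, _, hC, hx, hx⟩
  have hcl : ∀ {x y}, SeriesPair N x y → cl x = cl y := by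
    intro x y hxy
    ext z
    exact ⟨fun hz ↦ hxy.symm.trans hz, fun hz ↦ hxy.trans hz⟩
  let R : Set α := {x | SeriesPair N x x ∧ r (cl x) = x}
  have hRE : R ⊆ N.E := by
    rintro x ⟨⟨-, C, hC, hx, -⟩, -⟩
    exact hC.prop.subset_ground hx
  have hRuniq : ∀ x ∈ R, ∀ y ∈ R, SeriesPair N x y → y = x := by
    rintro x ⟨-, hx⟩ y ⟨-, hy⟩ hxy
    rw [← hx, ← hy, hcl hxy]
  have hRmem : ∀ x, SeriesPair N x x → r (cl x) ∈ R ∧ SeriesPair N x (r (cl x)) := by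
    intro x hx
    have h1 : SeriesPair N x (r (cl x)) := hr (cl x) ⟨x, hx⟩
    exact ⟨⟨h1.symm.trans h1, by rw [← hcl h1]⟩, h1⟩
  have hDind : N.Indep (N.E \ R) := by
    rw [Matroid.indep_iff_forall_subset_not_isCircuit sdiff_subset]
    intro C hCs hC
    obtain ⟨x, hx⟩ := hC.nonempty
    have h1 := hRmem x (hself hC hx)
    exact (hCs ((h1.2.1 C hC).1 hx)).2 h1.1
  have hcos : IsCosimplification N (con N (N.E \ R)) := by
    refine ⟨_, sdiff_subset, rfl, fun e he ↦ ?_, fun S hS ↦ ?_⟩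
    · have he' : N.IsColoop e := by
        rw [← Matroid.dual_isLoop_iff_isColoop, ← Matroid.singleton_dep]
        exact he
      refine ⟨he'.mem_ground, fun heR ↦ ?_⟩
      obtain ⟨⟨-, C, hC, heC, -⟩, -⟩ := heR
      exact Matroid.IsCircuit.not_isColoop_of_mem hC heC he'
    · obtain ⟨x, hx⟩ := hS.prop.1
      have hxx := hS.prop.2 x hx x hx
      have hSx : S ⊆ cl x := fun y hy ↦ hS.prop.2 x hx y hy
      have hSeq : S = cl x := hSx.antisymm <| hS.le_of_ge
        ⟨⟨x, hxx⟩, fun y (hy : SeriesPair N x y) z (hz : SeriesPair N x z) ↦ hy.symm.trans hz⟩ hSx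
      have hm := hRmem x hxx
      refine ⟨r (cl x), hSeq.symm.subset hm.2, ?_⟩
      ext y
      rw [mem_singleton_iff]
      constructor
      · rintro ⟨hyS, hyD⟩
        have hyx := hS.prop.2 x hx y hyS
        have hyE : y ∈ N.E := by
          obtain ⟨-, C, hC, -, hy⟩ := hyx
          exact hC.prop.subset_ground hy
        have hyR : y ∈ R := by
          by_contra hcon
          exact hyD ⟨hyE, hcon⟩
        exact hRuniq _ hm.1 y hyR (hm.2.symm.trans hyx)
      · rintro rfl
        exact ⟨hSeq.symm.subset hm.2, fun h ↦ h.2 hm.1⟩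
  obtain ⟨J, hJ, hJ4⟩ : ∃ J, (con N (N.E \ R)).Indep J ∧ 4 ≤ J.encard := by
    by_contra! hcon
    have h3 : eRank (con N (N.E \ R)) ≤ 3 := by
      refine iSup_le fun ⟨J, hJ, _⟩ ↦ ?_
      exact Order.le_of_lt_add_one (hcon J hJ)
    have := (h _ hcos).trans h3
    exact absurd this (by decide)
  have hJ' : Disjoint J (N.E \ R) ∧ N.Indep (J ∪ (N.E \ R)) :=
    hDind.contract_indep_iff.1 hJ
  have hJR : J ⊆ R := by
    intro x hx
    by_contra hxR
    exact hJ'.1.le_bot ⟨hx, hJ'.2.subset_ground (Or.inl hx), hxR⟩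
  refine ⟨_, J, hJ'.2, subset_union_left, hJ4, fun x hx ↦ ?_, fun x hx y hxy ↦ ?_⟩
  · obtain ⟨⟨-, C, hC, hxC, -⟩, -⟩ := hJR hx
    exact ⟨C, hC, hxC⟩
  · refine ⟨?_, fun hy ↦ hRuniq x (hJR hx) y (hJR hy) hxy⟩
    by_cases hyR : y ∈ R
    · rw [hRuniq x (hJR hx) y hyR hxy]; exact Or.inl hx
    · obtain ⟨-, C, hC, -, hy⟩ := hxy
      exact Or.inr ⟨hC.prop.subset_ground hy, hyR⟩


/-! ### Cosimplifications of rank at least four -/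

lemma IsLiftOf.exists_mem_of_circuit (hM : IsLiftOf P M) {C : Set α} (hC : Circuit M C)
    (hx : x ∈ C) : ∃ Z, P Z ∧ x ∈ Z ∧ Z ⊆ C := by
  by_contra! hcon
  have hC' : M.IsCircuit C := hC
  have hind := ((hM.indep_iff _).1 (hC'.sdiff_singleton_indep hx)).2
  have hnot : ∀ Z, P Z → Z ⊆ C → Z ⊆ C \ {x} := fun Z hZ hs y hy ↦
    ⟨hs hy, fun hyx ↦ hcon Z hZ (hyx ▸ hy) hs⟩
  exact hC'.not_indep ((hM.indep_iff _).2 ⟨hC'.subset_ground, fun Y Z hY hZ hYn hZn hYs hZs ↦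
    hind Y Z hY hZ hYn hZn (hnot Y hY hYs) (hnot Z hZ hZs)⟩)

/-- Elements lying in the same members of `P` are in series in the lift matroid. -/
lemma IsLiftOf.seriesPair (hM : IsLiftOf P M) {C : Set α} (hC : Circuit M C) (hx : x ∈ C)
    (hxy : ∀ Z, P Z → (x ∈ Z ↔ y ∈ Z)) : SeriesPair M x y := by
  have key : ∀ C, Circuit M C → (x ∈ C ↔ y ∈ C) := by
    intro C hC
    constructor
    · intro h
      obtain ⟨Z, hZ, hxZ, hZC⟩ := hM.exists_mem_of_circuit hC h
      exact hZC ((hxy Z hZ).1 hxZ)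
    · intro h
      obtain ⟨Z, hZ, hyZ, hZC⟩ := hM.exists_mem_of_circuit hC h
      exact hZC ((hxy Z hZ).2 hyZ)
  exact ⟨key, C, hC, hx, (key C hC).1 hx⟩

lemma IsCactus.mem_iff (hP : IsSpace P) (hc : IsCactus P) {K Z : Set α} (hK : MinMem P K)
    (hZ : P Z) (hx : x ∈ K) (hy : y ∈ K) : x ∈ Z ↔ y ∈ Z := by
  have key : ∀ x y, x ∈ K → y ∈ K → x ∈ Z → y ∈ Z := by
    intro x y hx hy hxZ
    obtain ⟨C, hC, hxC, hCZ⟩ := hP.exists_minMem hZ hxZ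
    exact hCZ (hc K C hK hC ⟨x, hx, hxC⟩ ▸ hy)
  exact ⟨key x y hx hy, key y x hy hx⟩

lemma exists_three {J : Set α} (hJ : 4 ≤ J.encard) (e : α) :
    ∃ x y z, x ∈ J ∧ y ∈ J ∧ z ∈ J ∧ x ≠ e ∧ y ≠ e ∧ z ≠ e ∧ x ≠ y ∧ x ≠ z ∧ y ≠ z := by
  have h : 3 ≤ (J \ {e}).encard := by
    have h1 := encard_le_encard_sdiff_add_encard J {e}
    rw [encard_singleton] at h1
    have h2 : (3 : ℕ∞) + 1 ≤ (J \ {e}).encard + 1 := le_trans (by norm_num; exact hJ) h1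
    exact (ENat.add_le_add_iff_right ENat.one_ne_top).1 h2
  obtain ⟨T, hT, hT3⟩ := exists_subset_encard_eq h
  obtain ⟨x, y, z, hxy, hxz, hyz, rfl⟩ := encard_eq_three.1 hT3
  have hx := @hT x (by simp)
  have hy := @hT y (by simp)
  have hz := @hT z (by simp)
  exact ⟨x, y, z, hx.1, hy.1, hz.1, hx.2, hy.2, hz.2, hxy, hxz, hyz⟩

/-- An independent set of the lift matroid of `P` cannot contain three disjoint nonempty members
of the contracted family. Those that lie in `P`, and the unions of two of those that do not, are
members of `P`, and among three sets this produces two distinct members. -/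
lemma IsLiftOf.not_three (hP : IsSpace P) (hM : IsLiftOf P M) {I : Set α} (hI : M.Indep I)
    {K₁ K₂ K₃ : Set α} (h₁ : ConFam P e K₁) (h₂ : ConFam P e K₂) (h₃ : ConFam P e K₃)
    (hs₁ : K₁ ⊆ I) (hs₂ : K₂ ⊆ I) (hs₃ : K₃ ⊆ I) (hn₁ : K₁.Nonempty) (hn₂ : K₂.Nonempty)
    (hn₃ : K₃.Nonempty) (h₁₂ : Disjoint K₁ K₂) (h₁₃ : Disjoint K₁ K₃) (h₂₃ : Disjoint K₂ K₃) :
    False := by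
  have hind := ((hM.indep_iff _).1 hI).2
  have hpp : ∀ K L, K ⊆ I → L ⊆ I → K.Nonempty → L.Nonempty → Disjoint K L → P K → P L →
      False := by
    intro K L hK hL hKn hLn hd hPK hPL
    have := hind K L hPK hPL hKn hLn hK hL
    subst this
    exact hKn.ne_empty (disjoint_self.1 hd)
  have hun : ∀ K L, e ∉ K → e ∉ L → Disjoint K L → P (insert e K) → P (insert e L) →
      P (K ∪ L) := by
    intro K L heK heL hd hK hL
    have := hP.symmDiff hK hL
    convert this using 1
    ext w
    have hdw : w ∈ K → w ∉ L := fun h h' ↦ disjoint_left.1 hd h h'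
    have hwe : w = e → w ∉ K ∧ w ∉ L := by rintro rfl; exact ⟨heK, heL⟩
    simp only [mem_union, mem_symmDiff, mem_insert_iff]
    tauto
  have hii : ∀ K L T, e ∉ K → e ∉ L → e ∉ T → K ⊆ I → L ⊆ I → T ⊆ I → K.Nonempty → L.Nonempty →
      T.Nonempty → Disjoint K L → Disjoint K T → Disjoint L T → P (insert e K) →
      P (insert e L) → P T ∨ P (insert e T) → False := by
    intro K L T heK heL heT hK hL hT hKn hLn hTn hKL hKT hLT hPK hPL hPT
    have hu := hun K L heK heL hKL hPK hPL
    rcases hPT with hPT | hPT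
    · exact hpp (K ∪ L) T (union_subset hK hL) hT hKn.inl hTn (hKT.union_left hLT) hu hPT
    · have := hind _ _ hu (hun K T heK heT hKT hPK hPT) hKn.inl hKn.inl (union_subset hK hL)
        (union_subset hK hT)
      obtain ⟨w, hw⟩ := hLn
      have hw' : w ∈ K ∪ T := this ▸ Or.inr hw
      rcases hw' with h | h
      · exact disjoint_left.1 hKL h hw
      · exact disjoint_left.1 hLT hw h
  obtain ⟨he₁, ht₁⟩ := h₁
  obtain ⟨he₂, ht₂⟩ := h₂
  obtain ⟨he₃, ht₃⟩ := h₃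
  rcases ht₁ with p₁ | p₁
  · rcases ht₂ with p₂ | p₂
    · exact hpp K₁ K₂ hs₁ hs₂ hn₁ hn₂ h₁₂ p₁ p₂
    · rcases ht₃ with p₃ | p₃
      · exact hpp K₁ K₃ hs₁ hs₃ hn₁ hn₃ h₁₃ p₁ p₃
      · exact hii K₂ K₃ K₁ he₂ he₃ he₁ hs₂ hs₃ hs₁ hn₂ hn₃ hn₁ h₂₃ h₁₂.symm h₁₃.symm p₂ p₃
          (Or.inl p₁)
  · rcases ht₂ with p₂ | p₂
    · rcases ht₃ with p₃ | p₃
      · exact hpp K₂ K₃ hs₂ hs₃ hn₂ hn₃ h₂₃ p₂ p₃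
      · exact hii K₁ K₃ K₂ he₁ he₃ he₂ hs₁ hs₃ hs₂ hn₁ hn₃ hn₂ h₁₃ h₁₂ h₂₃.symm p₁ p₃
          (Or.inl p₂)
    · exact hii K₁ K₂ K₃ he₁ he₂ he₃ hs₁ hs₂ hs₃ hn₁ hn₂ hn₃ h₁₂ h₁₃ h₂₃ p₁ p₂ ht₃

/-- If the contracted family has disjoint minimal members, each of them that meets a
circuit lies in a series class of the lift matroid. A base of a cosimplification of rank at least
four together with the contracted elements would then contain three of them. -/
lemma IsLiftOf.not_isCactus_con (hP : IsSpace P) (hM : IsLiftOf P N)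
    (hrco : ∀ N', IsCosimplification N N' → 4 ≤ eRank N') (e : α) :
    ¬ IsCactus (ConFam P e) := by
  intro hc
  have : Nonempty α := ⟨e⟩
  obtain ⟨I, J, hI, hJI, hJ4, hJC, hJS⟩ := exists_indep_of_cosimplification hrco
  have hK : ∀ x ∈ J, x ≠ e → ∃ K, MinMem (ConFam P e) K ∧ x ∈ K ∧ K ⊆ I ∧
      ∀ y ∈ J, y ∈ K → y = x := by
    intro x hx hxe
    obtain ⟨C, hC, hxC⟩ := hJC x hx
    obtain ⟨Z, hZ, hxZ, -⟩ := hM.exists_mem_of_circuit hC hxC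
    obtain ⟨K, hK, hxK, -⟩ := (hP.con e).exists_minMem (ConFam.of_mem hZ e) ⟨hxZ, hxe⟩
    have hser : ∀ y ∈ K, SeriesPair N x y := by
      intro y hy
      refine hM.seriesPair hC hxC fun W hW ↦ ?_
      have := hc.mem_iff (hP.con e) hK (ConFam.of_mem hW e) hxK hy
      have hye : y ≠ e := fun h ↦ hK.prop.1.1 (h ▸ hy)
      simpa [hxe, hye] using this
    exact ⟨K, hK, hxK, fun y hy ↦ (hJS x hx y (hser y hy)).1,
      fun y hyJ hyK ↦ (hJS x hx y (hser y hyK)).2 hyJ⟩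
  obtain ⟨x, y, z, hx, hy, hz, hxe, hye, hze, hxy, hxz, hyz⟩ := exists_three hJ4 e
  obtain ⟨K₁, hK₁, hxK, hs₁, hu₁⟩ := hK x hx hxe
  obtain ⟨K₂, hK₂, hyK, hs₂, hu₂⟩ := hK y hy hye
  obtain ⟨K₃, hK₃, hzK, hs₃, hu₃⟩ := hK z hz hze
  have hdisj : ∀ K L, MinMem (ConFam P e) K → MinMem (ConFam P e) L → K ≠ L → Disjoint K L := by
    intro K L hK hL hne
    rw [disjoint_iff_inter_eq_empty, ← not_nonempty_iff_eq_empty]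
    exact fun h ↦ hne (hc K L hK hL h)
  exact hM.not_three hP hI hK₁.prop.1 hK₂.prop.1 hK₃.prop.1 hs₁ hs₂ hs₃ hK₁.prop.2 hK₂.prop.2
    hK₃.prop.2 (hdisj _ _ hK₁ hK₂ fun h ↦ hxy (hu₁ y hy (h ▸ hyK)).symm)
    (hdisj _ _ hK₁ hK₃ fun h ↦ hxz (hu₁ z hz (h ▸ hzK)).symm)
    (hdisj _ _ hK₂ hK₃ fun h ↦ hyz (hu₂ z hz (h ▸ hzK)).symm)

/-- The analogue for deletion of an element `e` that is a loop (`f = e`) or parallel to `f`: the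
symmetric difference with `{e, f}` turns a member of `P` through `e` into one avoiding `e`. -/
lemma IsLiftOf.not_isCactus_del (hP : IsSpace P) (hM : IsLiftOf P N)
    (hrco : ∀ N', IsCosimplification N N' → 4 ≤ eRank N') (hef : P {e, f}) :
    ¬ IsCactus (fun Z ↦ e ∉ Z ∧ P Z) := by
  intro hc
  have : Nonempty α := ⟨e⟩
  obtain ⟨I, J, hI, hJI, hJ4, hJC, hJS⟩ := exists_indep_of_cosimplification hrco
  have hmove : ∀ Z, P Z → ∃ Z', (e ∉ Z' ∧ P Z') ∧ ∀ w, w ≠ e → w ≠ f → (w ∈ Z' ↔ w ∈ Z) := by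
    intro Z hZ
    by_cases heZ : e ∈ Z
    · refine ⟨Z ∆ {e, f}, ⟨?_, hP.symmDiff hZ hef⟩, fun w hwe hwf ↦ ?_⟩
      · simp [mem_symmDiff, heZ]
      · simp [mem_symmDiff, hwe, hwf]
    · exact ⟨Z, ⟨heZ, hZ⟩, fun _ _ _ ↦ Iff.rfl⟩
  have hK : ∀ x ∈ J, x ≠ e → x ≠ f → ∃ K, MinMem (fun Z ↦ e ∉ Z ∧ P Z) K ∧ x ∈ K ∧
      (∀ y ∈ K, y ≠ f → y ∈ I) ∧ ∀ y ∈ J, y ≠ f → y ∈ K → y = x := by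
    intro x hx hxe hxf
    obtain ⟨C, hC, hxC⟩ := hJC x hx
    obtain ⟨Z, hZ, hxZ, -⟩ := hM.exists_mem_of_circuit hC hxC
    obtain ⟨Z', hZ', hZZ'⟩ := hmove Z hZ
    obtain ⟨K, hK, hxK, -⟩ := (hP.del e).exists_minMem hZ' ((hZZ' x hxe hxf).2 hxZ)
    have hser : ∀ y ∈ K, y ≠ f → SeriesPair N x y := by
      intro y hy hyf
      refine hM.seriesPair hC hxC fun W hW ↦ ?_
      obtain ⟨W', hW', hWW'⟩ := hmove W hW
      have hye : y ≠ e := fun h ↦ hK.prop.1.1 (h ▸ hy)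
      rw [← hWW' x hxe hxf, ← hWW' y hye hyf]
      exact hc.mem_iff (hP.del e) hK hW' hxK hy
    exact ⟨K, hK, hxK, fun y hy hyf ↦ (hJS x hx y (hser y hy hyf)).1,
      fun y hyJ hyf hyK ↦ (hJS x hx y (hser y hyK hyf)).2 hyJ⟩
  have hind := ((hM.indep_iff _).1 hI).2
  -- two minimal members inside `I` coincide
  have htwo : ∀ K L : Set α, MinMem (fun Z ↦ e ∉ Z ∧ P Z) K → MinMem (fun Z ↦ e ∉ Z ∧ P Z) L →
      (∀ y ∈ K, y ≠ f → y ∈ I) → (∀ y ∈ L, y ≠ f → y ∈ I) → (f ∈ I ∨ f ∉ K ∧ f ∉ L) →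
      K = L := by
    intro K L hK hL hKI hLI hf
    refine hind K L hK.prop.1.2 hL.prop.1.2 hK.prop.2 hL.prop.2 (fun y hy ↦ ?_) (fun y hy ↦ ?_)
    · by_cases hyf : y = f
      · exact hf.elim (fun h ↦ hyf ▸ h) fun h ↦ (h.1 (hyf ▸ hy)).elim
      · exact hKI y hy hyf
    · by_cases hyf : y = f
      · exact hf.elim (fun h ↦ hyf ▸ h) fun h ↦ (h.2 (hyf ▸ hy)).elim
      · exact hLI y hy hyf
  obtain ⟨x, y, z, hx, hy, hz, hxe, hye, hze, hxy, hxz, hyz⟩ := exists_three hJ4 e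
  have hpair : f ∈ I → ∀ x y, x ∈ J → y ∈ J → x ≠ e → y ≠ e → x ≠ f → y ≠ f → x = y := by
    intro hf x y hx hy hxe hye hxf hyf
    obtain ⟨K₁, hK₁, hxK, hs₁, hu₁⟩ := hK x hx hxe hxf
    obtain ⟨K₂, hK₂, hyK, hs₂, hu₂⟩ := hK y hy hye hyf
    have := htwo K₁ K₂ hK₁ hK₂ hs₁ hs₂ (Or.inl hf)
    exact (hu₁ y hy hyf (this ▸ hyK)).symm
  by_cases hf : f ∈ I
  · by_cases hxf : x = f
    · exact hyz (hpair hf y z hy hz hye hze (fun h ↦ hxy (hxf.trans h.symm))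
        (fun h ↦ hxz (hxf.trans h.symm)))
    · by_cases hyf : y = f
      · exact hxz (hpair hf x z hx hz hxe hze hxf fun h ↦ hyz (hyf.trans h.symm))
      · exact hxy (hpair hf x y hx hy hxe hye hxf hyf)
  · have hJf : ∀ w ∈ J, w ≠ f := fun w hw h ↦ hf (h ▸ hJI hw)
    obtain ⟨K₁, hK₁, hxK, hs₁, hu₁⟩ := hK x hx hxe (hJf x hx)
    obtain ⟨K₂, hK₂, hyK, hs₂, hu₂⟩ := hK y hy hye (hJf y hy)
    obtain ⟨K₃, hK₃, hzK, hs₃, hu₃⟩ := hK z hz hze (hJf z hz)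
    have n₁₂ : K₁ ≠ K₂ := fun h ↦ hxy (hu₁ y hy (hJf y hy) (h ▸ hyK)).symm
    have n₁₃ : K₁ ≠ K₃ := fun h ↦ hxz (hu₁ z hz (hJf z hz) (h ▸ hzK)).symm
    have n₂₃ : K₂ ≠ K₃ := fun h ↦ hyz (hu₂ z hz (hJf z hz) (h ▸ hzK)).symm
    -- at most one of the three disjoint members contains `f`
    have d₁₂ : f ∈ K₁ → f ∉ K₂ := fun h h' ↦ n₁₂ (hc _ _ hK₁ hK₂ ⟨f, h, h'⟩)
    have d₁₃ : f ∈ K₁ → f ∉ K₃ := fun h h' ↦ n₁₃ (hc _ _ hK₁ hK₃ ⟨f, h, h'⟩)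
    by_cases hf₁ : f ∈ K₁
    · exact n₂₃ (htwo _ _ hK₂ hK₃ hs₂ hs₃ (Or.inr ⟨d₁₂ hf₁, d₁₃ hf₁⟩))
    · by_cases hf₂ : f ∈ K₂
      · exact n₁₃ (htwo _ _ hK₁ hK₃ hs₁ hs₃
          (Or.inr ⟨hf₁, fun h ↦ n₂₃ (hc _ _ hK₂ hK₃ ⟨f, hf₂, h⟩)⟩))
      · exact n₁₂ (htwo _ _ hK₁ hK₂ hs₁ hs₂ (Or.inr ⟨hf₁, hf₂⟩))

end Matroids

theorem statement_15 {V α : Type u} (N : Matroid α) (G : Graph V α)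
    (hrep : IsLiftRep G N) (hng : ¬ IsGraphic N)
    (hrco : ∀ N', IsCosimplification N N' → 4 ≤ eRank N')
    (hcr : 4 ≤ eRank N✶) (e : α) (he : e ∈ G.E) :
    (¬ (G.inc e).IsDiag → ¬ IsGraphic (con N {e})) ∧
    (((G.inc e).IsDiag ∨ ∃ f ∈ G.E, f ≠ e ∧ ¬ (G.inc e).IsDiag ∧ G.inc f = G.inc e) →
      ¬ IsGraphic (del N {e})) := by
  have hP := G.isSpace_evenSet
  have hL := hrep.isLiftOf
  have heE : e ∈ N.E := hrep.1 ▸ he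
  have hsmall : ∀ x, ¬ N.Indep (N.E \ {e, x}) := by
    intro x hx
    have h4 := encard_ge_of_indep_sdiff hcr hx
    have h2 : ({e, x} : Set α).encard ≤ 2 :=
      (encard_insert_le {x} e).trans (by rw [encard_singleton]; norm_num)
    exact absurd (h4.trans h2) (by decide)
  constructor
  · rintro hlink ⟨W, H, hH⟩
    have hnP : ¬ G.EvenSet {e} := fun h ↦ hlink ((G.evenSet_singleton_iff he).1 h)
    refine hL.not_isCactus_con hP hrco e
      ((hL.con hP heE hnP).isCactus (hP.con e) H.isSpace_evenSet hH.isBinaryOf fun x hx ↦ ?_)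
    have hx' := ((hL.con_indep_iff heE _).1 hx).2
    refine hsmall x (hx'.subset fun y hy ↦ Or.inr ⟨⟨hy.1, fun h ↦ hy.2 (Or.inl h)⟩,
      fun h ↦ hy.2 (Or.inr h)⟩)
  · rintro hpar ⟨W, H, hH⟩
    obtain ⟨f, hf⟩ : ∃ f, G.EvenSet {e, f} := by
      rcases hpar with hd | ⟨f, hf, hfe, -, hinc⟩
      · exact ⟨e, by simpa using (G.evenSet_singleton_iff he).2 hd⟩
      · exact ⟨f, G.evenSet_pair he hf hfe hinc⟩
    refine hL.not_isCactus_del hP hrco hf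
      ((hL.del e).isCactus (hP.del e) H.isSpace_evenSet hH.isBinaryOf fun x hx ↦ ?_)
    have hx' : N.Indep _ := Matroid.Indep.of_delete (D := {e}) hx
    refine hsmall x (hx'.subset fun y hy ↦ ⟨⟨hy.1, fun h ↦ hy.2 (Or.inl h)⟩,
      fun h ↦ hy.2 (Or.inr h)⟩)

end BLFormal
end
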